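/- The set of prime numbers contains arithmetic progressions of every finite length (Green–Tao theorem). -/

import Mathlib

/-!
The primes are not dense, but they form a dense subset of a pseudorandom set, and Szemerédi's theorem
transfers to such subsets. The argument has three independent parts.

**Szemerédi's theorem**, in the form `varnavides`: on `ZMod N` a function `0 ≤ f ≤ 1` of mean at least
`δ` has at least `c N ^ 2` weighted progressions of length `k + 1`. It follows from the density
Hales–Jewett theorem `DHJ_all` by mapping a combinatorial cube to `ZMod N` at random. Density
Hales–Jewett is proved by induction on the alphabet (`DHJ_step`). Let `c > 0` be the critical density
of line-free sets over `Option α`. A line-free set of density close to `c` has all its fibres over a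
fixed finite cube of density close to `c`, since no fibre can exceed `c` by much. By density
Hales–Jewett over `α` and the Hales–Jewett colouring theorem, there is a subspace `V` of that cube such
that for every `v` the fibres over all specialisations (`none` replaced by letters of `α`) of `V v`
have substantial intersection; the fibre over `V v` itself avoids that intersection. Exchanging the
order of averaging gives, for some point of the other factor, a fibre along `V` denser than `c` by a
fixed amount off an intersection of insensitive sets. The complement of such an intersection can almost
be partitioned into subspaces of large dimension (`ins_many`, `ins_compl`, by exhaustion using the
multidimensional theorem `mdhj` over `α`), so on one of them the density exceeds `c`, a contradiction.

**Relative Szemerédi** (`relative_szemeredi`), following Conlon, Fox and Zhao: if `0 ≤ f ≤ ν` on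
`ZMod N`, `f` has mean at least `δ` and the weights `ν (psi j x)`, with `psi j` the linear form
`∑ i, (i - j) x_i`, satisfy the linear forms condition `LF`, then `f` has many weighted progressions.
Repeated Cauchy–Schwarz (`Qf_step`, `Qf_small`) shows that `ν` may be replaced by `1` in averages
against products of functions each missing a coordinate (`replace_weight`). By separation of convex
sets and polynomial approximation there is a bounded function `g` indistinguishable from `f` by such
products (`dense_model`). The lemma `counting` shows, by induction on the number of unbounded factors,
that `f` and `g` have nearly the same count of progressions, and `varnavides` applies to `g`.

**The majorant.** Let `W` be the product of the primes up to `w`, and let `lam` be the truncated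
Ramanujan expansion of `φ(n) Λ(n) / n`, over denominators at most `R` composed of primes in `(w, R]`.
The majorant `gW` at `n` is the normalised square `|lam (W n + b)|² / Gs`. Expanding into characters,
its correlations along linear forms on a box are a main term, an error `∏ i, Vl (p i) ℓ - 1` from the
nontrivial relations among the frequencies, which is small for `w` large, and a negligible term from
incomplete exponential sums (`lam_avg`, `Vl_le`). Cutting `ZMod N` into boxes (`torus_to_box`) gives
the linear forms condition (`LF_lam`, `LF_exists`). At primes above `R` the majorant equals `Gs`, which
is at least `(φ(W) / W) log R` (`log_le_Gs`). With `N` of size `R ^ D`, Chebyshev's lower bound and the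
pigeonhole principle over residue classes modulo `W` therefore show that the primes, weighted by `Gs`,
have mean bounded below in terms of `D` only (`density_lower`). The resulting progression in `ZMod N`
lies in `[0, N / 2)`, hence comes from one in the integers (`lift_ap`).
-/

namespace GT
open Finset Combinatorics

/-! ### Density Hales–Jewett -/

open Classical in
/-- Real-valued indicator of a proposition. -/
noncomputable def ind (P : Prop) : ℝ := if P then 1 else 0

lemma ind_nonneg (P : Prop) : 0 ≤ ind P := by unfold ind; split_ifs <;> simp
lemma ind_le_one (P : Prop) : ind P ≤ 1 := by unfold ind; split_ifs <;> simp
lemma ind_true {P : Prop} (h : P) : ind P = 1 := by simp [ind, h]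
lemma ind_false {P : Prop} (h : ¬ P) : ind P = 0 := by simp [ind, h]
lemma ind_mono {P Q : Prop} (h : P → Q) : ind P ≤ ind Q := by
  unfold ind; split_ifs <;> simp_all
lemma ind_not (P : Prop) : ind (¬ P) = 1 - ind P := by unfold ind; split_ifs <;> simp_all
lemma ind_and (P Q : Prop) : ind (P ∧ Q) = ind P * ind Q := by
  unfold ind; split_ifs <;> simp_all
lemma ind_cases (P : Prop) : ind P = 0 ∨ ind P = 1 := by unfold ind; split_ifs <;> simp

/-- The expectation of `F` when the letters of a word `ι → β` are independent with law `p`. -/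
noncomputable def Ew {ι β : Type*} [Fintype ι] [Fintype β] (p : β → ℝ) (F : (ι → β) → ℝ) : ℝ :=
  letI := Classical.decEq ι
  ∑ x : ι → β, (∏ i, p (x i)) * F x

section Ew
variable {ι κ β γ : Type*} [Fintype ι] [Fintype κ] [Fintype β] [Fintype γ] {p : β → ℝ}

lemma Ew_eq [DecidableEq ι] (p : β → ℝ) (F : (ι → β) → ℝ) :
    Ew p F = ∑ x : ι → β, (∏ i, p (x i)) * F x := by
  unfold Ew; congr!

lemma Ew_mono (hp : ∀ b, 0 ≤ p b) {F F' : (ι → β) → ℝ} (h : ∀ x, F x ≤ F' x) :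
    Ew p F ≤ Ew p F' := by
  classical
  simp only [Ew_eq]
  exact sum_le_sum fun x _ => mul_le_mul_of_nonneg_left (h x) (prod_nonneg fun i _ => hp _)

lemma Ew_add (F F' : (ι → β) → ℝ) : Ew p (fun x => F x + F' x) = Ew p F + Ew p F' := by
  classical
  simp only [Ew_eq, mul_add, sum_add_distrib]

lemma Ew_sub (F F' : (ι → β) → ℝ) : Ew p (fun x => F x - F' x) = Ew p F - Ew p F' := by
  classical
  simp only [Ew_eq, mul_sub, sum_sub_distrib]

lemma Ew_mul_left (c : ℝ) (F : (ι → β) → ℝ) : Ew p (fun x => c * F x) = c * Ew p F := by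
  classical
  simp only [Ew_eq, mul_sum]
  exact sum_congr rfl fun x _ => by ring

lemma Ew_sum {σ : Type*} (s : Finset σ) (F : σ → (ι → β) → ℝ) :
    Ew p (fun x => ∑ j ∈ s, F j x) = ∑ j ∈ s, Ew p (F j) := by
  classical
  simp only [Ew_eq, mul_sum]
  exact sum_comm

lemma Ew_one (h1 : ∑ b, p b = 1) : Ew p (fun _ : ι → β => (1 : ℝ)) = 1 := by
  classical
  simp only [Ew_eq, mul_one]
  have := Finset.prod_univ_sum (fun _ : ι => (univ : Finset β)) (fun _ b => p b)
  simp only [h1, prod_const_one, Fintype.piFinset_univ] at this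
  exact this.symm

lemma Ew_const (h1 : ∑ b, p b = 1) (c : ℝ) : Ew p (fun _ : ι → β => c) = c := by
  have := Ew_mul_left (ι := ι) (p := p) c (fun _ => 1)
  simpa [Ew_one h1] using this

lemma Ew_nonneg (hp : ∀ b, 0 ≤ p b) {F : (ι → β) → ℝ} (h : ∀ x, 0 ≤ F x) : 0 ≤ Ew p F := by
  classical
  simp only [Ew_eq]
  exact sum_nonneg fun x _ => mul_nonneg (prod_nonneg fun i _ => hp _) (h x)

lemma Ew_sumType (F : (ι ⊕ κ → β) → ℝ) :
    Ew p F = Ew p (fun x : ι → β => Ew p (fun y : κ → β => F (Sum.elim x y))) := by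
  classical
  simp only [Ew_eq, mul_sum]
  rw [← (Equiv.sumArrowEquivProdArrow ι κ β).symm.sum_comp, Fintype.sum_prod_type]
  refine sum_congr rfl fun x _ => sum_congr rfl fun y _ => ?_
  simp [Equiv.sumArrowEquivProdArrow, mul_assoc]

lemma Ew_comm (F : (ι → β) → (κ → γ) → ℝ) (q : γ → ℝ) :
    Ew p (fun x => Ew q (fun y => F x y)) = Ew q (fun y => Ew p (fun x => F x y)) := by
  classical
  simp only [Ew_eq, mul_sum]
  rw [sum_comm]
  exact sum_congr rfl fun x _ => sum_congr rfl fun y _ => by ring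

lemma Ew_reindex (e : ι ≃ κ) (F : (κ → β) → ℝ) :
    Ew p F = Ew p (fun x : ι → β => F (x ∘ e.symm)) := by
  classical
  simp only [Ew_eq]
  rw [← (Equiv.arrowCongr e (Equiv.refl β)).sum_comp]
  refine sum_congr rfl fun x _ => ?_
  congr 1
  rw [← e.prod_comp]
  simp [Equiv.arrowCongr]

/-- Expectations under the image of the law `p` by a map `π` of alphabets. -/
lemma Ew_push [DecidableEq γ] (π : β → γ) (F : (ι → γ) → ℝ) :
    Ew p (fun x => F (π ∘ x)) = Ew (fun c => ∑ b with π b = c, p b) F := by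
  classical
  simp only [Ew_eq]
  rw [← Finset.sum_fiberwise (s := univ) (g := fun x : ι → β => π ∘ x)]
  refine sum_congr rfl fun y _ => ?_
  have := Finset.prod_univ_sum (fun i : ι => univ.filter fun b => π b = y i) (fun _ b => p b)
  rw [this, sum_mul]
  refine sum_congr ?_ ?_
  · ext x
    simp [Fintype.mem_piFinset, funext_iff]
  · intro x hx
    have : π ∘ x = y := by
      funext i
      have := (Fintype.mem_piFinset.1 hx) i
      simpa using this
    rw [this]

lemma exists_ge_Ew (hp : ∀ b, 0 ≤ p b) (h1 : ∑ b, p b = 1) (F : (ι → β) → ℝ) :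
    ∃ x, Ew p F ≤ F x := by
  by_contra! h
  have hle := Ew_mono hp fun x => (h x).le
  rw [Ew_const h1] at hle
  classical
  have h2 : Ew p (fun x => Ew p F - F x) = 0 := by rw [Ew_sub, Ew_const h1, sub_self]
  have h3 : Ew p (fun _ : ι → β => (1 : ℝ)) = 1 := Ew_one h1
  rw [Ew_eq] at h2 h3
  have h4 := (sum_eq_zero_iff_of_nonneg fun x _ =>
    mul_nonneg (prod_nonneg fun i _ => hp _) (sub_nonneg.2 (h x).le)).1 h2
  have h5 : ∀ x : ι → β, ∏ i, p (x i) = 0 := fun x =>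
    (mul_eq_zero.1 (h4 x (mem_univ x))).resolve_right (sub_pos.2 (h x)).ne'
  simp [h5] at h3

end Ew

/-- `A` contains no combinatorial line. -/
def LineFree {ι β : Type} (A : (ι → β) → Prop) : Prop := ∀ l : Line β ι, ∃ b, ¬ A (l b)

/-- In high dimension, line-free sets have density less than `δ` for the product law of `p`. -/
def Hold {β : Type} [Fintype β] (p : β → ℝ) (δ : ℝ) : Prop :=
  ∃ n : ℕ, ∀ (ι : Type) [Fintype ι], n ≤ Fintype.card ι → ∀ A : (ι → β) → Prop, LineFree A →
    Ew p (fun x => ind (A x)) < δ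

/-- Density Hales–Jewett over the alphabet `β`, for all product laws of full support. -/
def DHJ (β : Type) [Fintype β] : Prop :=
  ∀ p : β → ℝ, (∀ b, 0 < p b) → ∑ b, p b = 1 → ∀ δ > 0, Hold p δ

lemma Hold.mono {β : Type} [Fintype β] {p : β → ℝ} {δ δ' : ℝ} (h : Hold p δ) (hd : δ ≤ δ') :
    Hold p δ' := by
  obtain ⟨n, hn⟩ := h
  exact ⟨n, fun ι _ hι A hA => (hn ι hι A hA).trans_le hd⟩

/-- Pulling a line-free set back to a combinatorial subspace keeps it line-free. -/
lemma LineFree.subspace {ι η β : Type} {A : (ι → β) → Prop} (hA : LineFree A)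
    (σ : Subspace η β ι) : LineFree (fun v : η → β => A (σ v)) := by
  intro l
  obtain ⟨e, he⟩ := l.proper
  obtain ⟨i, hi⟩ := σ.proper e
  obtain ⟨b, hb⟩ := hA ⟨fun i => (σ.idxFun i).elim some l.idxFun, ⟨i, by simp [hi, he]⟩⟩
  refine ⟨b, fun h => hb ?_⟩
  convert h using 1
  funext j
  simp only [Line.coe_apply, Subspace.coe_apply]
  cases σ.idxFun j <;> simp [Line.coe_apply]

lemma LineFree.sum_right {ι κ β : Type} {A : (ι ⊕ κ → β) → Prop} (hA : LineFree A) (x : ι → β) :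
    LineFree (fun y : κ → β => A (Sum.elim x y)) := by
  intro l
  obtain ⟨b, hb⟩ := hA (l.vertical x)
  exact ⟨b, by simpa using hb⟩

lemma LineFree.sum_left {ι κ β : Type} {A : (ι ⊕ κ → β) → Prop} (hA : LineFree A) (y : κ → β) :
    LineFree (fun x : ι → β => A (Sum.elim x y)) := by
  intro l
  obtain ⟨b, hb⟩ := hA (l.horizontal y)
  exact ⟨b, by simpa using hb⟩

lemma LineFree.reindex {ι κ β : Type} {A : (ι → β) → Prop} (hA : LineFree A) (e : κ ≃ ι) :
    LineFree (fun x : κ → β => A (x ∘ e.symm)) := by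
  intro l
  obtain ⟨i, hi⟩ := l.proper
  obtain ⟨b, hb⟩ := hA ⟨l.idxFun ∘ e.symm, ⟨e i, by simp [hi]⟩⟩
  exact ⟨b, hb⟩

/-- A finite type splits off a summand of any smaller cardinality. -/
lemma exists_split (T ι : Type) [Fintype T] [Fintype ι] (n : ℕ)
    (h : Fintype.card T + n ≤ Fintype.card ι) :
    ∃ (Y : Type) (_ : Fintype Y), n ≤ Fintype.card Y ∧ Nonempty (T ⊕ Y ≃ ι) := by
  refine ⟨Fin (Fintype.card ι - Fintype.card T), inferInstance, ?_, ?_⟩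
  · simp; omega
  · exact ⟨Fintype.equivOfCardEq (by simp; omega)⟩

/-- To prove density Hales–Jewett it suffices to go slightly below a density `c` all of whose
larger densities are known. -/
lemma Hold_of_step {β : Type} [Fintype β] {p : β → ℝ} (hp : ∀ b, 0 < p b) (h1 : ∑ b, p b = 1)
    (step : ∀ c > 0, (∀ ε > 0, Hold p (c + ε)) → ∃ ε > 0, Hold p (c - ε)) :
    ∀ δ > 0, Hold p δ := by
  set S : Set ℝ := {δ | 0 < δ ∧ Hold p δ} with hS
  have h2 : (2 : ℝ) ∈ S := by
    refine ⟨by norm_num, 0, fun ι _ _ A _ => ?_⟩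
    have := Ew_mono (ι := ι) (fun b => (hp b).le) (fun x => ind_le_one (A x))
    rw [Ew_one h1] at this
    linarith
  have hbdd : BddBelow S := ⟨0, fun x hx => hx.1.le⟩
  have hup : ∀ δ, sInf S < δ → Hold p δ := by
    intro δ hδ
    obtain ⟨x, hx, hxd⟩ := (csInf_lt_iff hbdd ⟨2, h2⟩).1 hδ
    exact hx.2.mono hxd.le
  have h0 : 0 ≤ sInf S := le_csInf ⟨2, h2⟩ fun x hx => hx.1.le
  rcases h0.eq_or_lt with h0 | h0
  · intro δ hδ
    exact hup δ (h0 ▸ hδ)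
  · exfalso
    obtain ⟨ε, hε, hh⟩ := step _ h0 fun ε hε => hup _ (by linarith)
    set m := min ε (sInf S / 2)
    have hm : 0 < m := lt_min hε (by linarith)
    have : sInf S - m ∈ S := by
      refine ⟨?_, hh.mono ?_⟩
      · have : m ≤ sInf S / 2 := min_le_right _ _
        linarith
      · have : m ≤ ε := min_le_left _ _
        linarith
    have := csInf_le hbdd this
    linarith

/-- If `c` is the critical density, a line-free set of density almost `c` has density almost `c`
on every fibre over a bounded number of coordinates: no fibre can exceed `c` by much. -/
lemma fibre_dense {β : Type} [Fintype β] {p : β → ℝ} (hp : ∀ b, 0 < p b) (h1 : ∑ b, p b = 1)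
    {c : ℝ} (hc : ∀ ε > 0, Hold p (c + ε)) (T : Type) [Fintype T] {η : ℝ} (hη : 0 < η) :
    ∃ ε > 0, ∃ n : ℕ, ∀ (Y : Type) [Fintype Y], n ≤ Fintype.card Y →
      ∀ A : (T ⊕ Y → β) → Prop, LineFree A → c - ε ≤ Ew p (fun x => ind (A x)) →
      ∀ t : T → β, c - η ≤ Ew p (fun y : Y → β => ind (A (Sum.elim t y))) := by
  classical
  have hne : Nonempty β := by
    by_contra h
    rw [not_nonempty_iff] at h
    simp at h1
  obtain ⟨b0, hb0⟩ := Finite.exists_min p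
  set q := p b0 ^ Fintype.card T with hq
  have hq0 : 0 < q := pow_pos (hp _) _
  have hε : 0 < η * q / 2 := by positivity
  obtain ⟨n, hn⟩ := hc _ hε
  refine ⟨η * q / 2, hε, n, fun Y _ hY A hA hAd t => ?_⟩
  set d : (T → β) → ℝ := fun t => Ew p (fun y : Y → β => ind (A (Sum.elim t y))) with hd
  have hdlt : ∀ t, d t ≤ c + η * q / 2 := fun t => (hn Y hY _ (hA.sum_right t)).le
  rw [Ew_sumType] at hAd
  set w : (T → β) → ℝ := fun t => ∏ i, p (t i) with hw
  have hwq : ∀ t, q ≤ w t := by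
    intro t
    have : ∏ i : T, p b0 ≤ ∏ i, p (t i) := prod_le_prod (fun i _ => (hp _).le) fun i _ => hb0 _
    simpa using this
  have key : Ew p (fun t : T → β => (c + η * q / 2) - d t) ≤ η * q := by
    rw [Ew_sub, Ew_const h1]
    linarith
  rw [Ew_eq] at key
  have h3 : w t * ((c + η * q / 2) - d t) ≤ η * q :=
    (single_le_sum (f := fun x => w x * ((c + η * q / 2) - d x)) (fun x _ =>
      mul_nonneg (hq0.le.trans (hwq x)) (sub_nonneg.2 (hdlt x))) (mem_univ t)).trans key
  have h4 : q * ((c + η * q / 2) - d t) ≤ η * q :=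
    (mul_le_mul_of_nonneg_right (hwq t) (sub_nonneg.2 (hdlt t))).trans h3
  have h5 : (c + η * q / 2) - d t ≤ η := by
    have : q * ((c + η * q / 2) - d t) ≤ q * η := by linarith
    exact le_of_mul_le_mul_left this hq0
  show c - η ≤ d t
  linarith

/-- Splitting a high-dimensional cube as `T ⊕ Y`. -/
lemma Hold_of_split {β : Type} [Fintype β] {p : β → ℝ} {δ : ℝ} (T : Type) [Fintype T] (n : ℕ)
    (h : ∀ (Y : Type) [Fintype Y], n ≤ Fintype.card Y → ∀ A : (T ⊕ Y → β) → Prop, LineFree A →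
      Ew p (fun x => ind (A x)) < δ) : Hold p δ := by
  refine ⟨Fintype.card T + n, fun ι _ hι A hA => ?_⟩
  obtain ⟨Y, _, hY, ⟨e⟩⟩ := exists_split T ι n hι
  rw [Ew_reindex e]
  exact h Y hY _ (hA.reindex e)

/-- The uniform law on an alphabet. -/
noncomputable def unif (β : Type) [Fintype β] : β → ℝ := fun _ => 1 / Fintype.card β

lemma unif_pos (β : Type) [Fintype β] [Nonempty β] (b : β) : 0 < unif β b := by
  unfold unif; positivity

lemma unif_sum (β : Type) [Fintype β] [Nonempty β] : ∑ b, unif β b = 1 := by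
  simp [unif]

/-- The uniform case of density Hales–Jewett implies the case of all product laws. -/
lemma DHJ_of_unif {β : Type} [Fintype β] [Nonempty β] (h : ∀ δ > 0, Hold (unif β) δ) : DHJ β := by
  intro p hp h1
  refine Hold_of_step hp h1 fun c hc hup => ?_
  obtain ⟨l, hl⟩ := h (c / 2) (by linarith)
  obtain ⟨ε, hε, n, hn⟩ := fibre_dense hp h1 hup (Fin l) (η := c / 2) (by linarith)
  refine ⟨ε, hε, Hold_of_split (Fin l) n fun Y _ hY A hA => ?_⟩
  by_contra! hd
  have h2 := hn Y hY A hA hd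
  have h3 : c / 2 ≤ Ew p (fun y : Y → β => Ew (unif β) fun t : Fin l → β =>
      ind (A (Sum.elim t y))) := by
    rw [Ew_comm]
    have := Ew_mono (ι := Fin l) (fun b => (unif_pos β b).le) h2
    rw [Ew_const (unif_sum β)] at this
    linarith
  obtain ⟨y, hy⟩ := exists_ge_Ew (fun b => (hp b).le) h1 (fun y : Y → β =>
    Ew (unif β) fun t : Fin l → β => ind (A (Sum.elim t y)))
  have := hl (Fin l) (by simp) _ (hA.sum_left y)
  linarith

end GT

namespace GT
open Finset Combinatorics

/-! ### Multidimensional density Hales–Jewett -/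

/-- Pigeonhole over combinatorial lines: a dense family of subsets of a high-dimensional cube
has a line contained in many members of the family. -/
lemma exists_line {α β Y : Type} [Fintype α] [Fintype β] [Fintype Y] {q : α → ℝ} {p : β → ℝ}
    (hq : ∀ b, 0 < q b) (hq1 : ∑ b, q b = 1) (hp : ∀ b, 0 < p b) (hp1 : ∑ b, p b = 1)
    {l : ℕ} {δ : ℝ} (hδ : 0 < δ)
    (hl : ∀ A : (Fin l → α) → Prop, LineFree A → Ew q (fun x => ind (A x)) < δ)
    (E : (Fin l → α) → (Y → β) → Prop)
    (hE : 2 * δ ≤ Ew q fun x : Fin l → α => Ew p fun y : Y → β => ind (E x y)) :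
    ∃ u : Line α (Fin l), δ / Fintype.card (Fin l → Option α) ≤
      Ew p fun y : Y → β => ind (∀ a, E (u a) y) := by
  classical
  by_contra! h
  rw [Ew_comm] at hE
  set K : ℝ := ((Fintype.card (Fin l → Option α) : ℕ) : ℝ)
  have hK : 0 < K := by
    have : 0 < Fintype.card (Fin l → Option α) := Fintype.card_pos
    simp only [K]; exact_mod_cast this
  have h1 : ∀ y : Y → β, Ew q (fun x : Fin l → α => ind (E x y)) ≤
      δ + ∑ w : Fin l → Option α, ind (∃ hw : ∃ i, w i = none, ∀ a, E ((⟨w, hw⟩ : Line α (Fin l)) a) y) := by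
    intro y
    by_cases hy : LineFree (fun x => E x y)
    · have := (hl _ hy).le
      have h2 : 0 ≤ ∑ w : Fin l → Option α,
        ind (∃ hw : ∃ i, w i = none, ∀ a, E ((⟨w, hw⟩ : Line α (Fin l)) a) y) :=
        sum_nonneg fun w _ => ind_nonneg _
      linarith
    · simp only [LineFree] at hy
      push Not at hy
      obtain ⟨u, hu⟩ := hy
      have h2 := single_le_sum (s := univ) (f := fun w : Fin l → Option α =>
        ind (∃ hw : ∃ i, w i = none, ∀ a, E ((⟨w, hw⟩ : Line α (Fin l)) a) y))
        (fun w _ => ind_nonneg _) (mem_univ u.idxFun)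
      have h3 : ind (∃ hw : ∃ i, u.idxFun i = none, ∀ a, E ((⟨u.idxFun, hw⟩ : Line α (Fin l)) a) y) = 1 :=
        ind_true ⟨u.proper, hu⟩
      simp only [h3] at h2
      have h4 := Ew_mono (ι := Fin l) (fun b => (hq b).le) (fun x => ind_le_one (E x y))
      rw [Ew_one hq1] at h4
      linarith
  have h2 := hE.trans (Ew_mono (fun b => (hp b).le) h1)
  rw [Ew_add, Ew_const hp1, Ew_sum] at h2
  have h3 : ∑ w : Fin l → Option α, Ew p (fun y : Y → β =>
      ind (∃ hw : ∃ i, w i = none, ∀ a, E ((⟨w, hw⟩ : Line α (Fin l)) a) y)) <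
      ∑ w : Fin l → Option α, δ / K := by
    refine sum_lt_sum_of_nonempty univ_nonempty fun w _ => ?_
    by_cases hw : ∃ i, w i = none
    · have := h ⟨w, hw⟩
      simpa [hw] using this
    · simp only [hw, IsEmpty.exists_iff, ind_false not_false]
      rw [Ew_const hp1]
      positivity
  rw [sum_const, card_univ, nsmul_eq_mul, mul_div_cancel₀ _ hK.ne'] at h3
  linarith

/-- Multidimensional density Hales–Jewett. -/
lemma mdhj {α : Type} [Fintype α] (h : DHJ α) {p : α → ℝ} (hp : ∀ b, 0 < p b)
    (h1 : ∑ b, p b = 1) (m : ℕ) : ∀ δ > 0, ∃ n : ℕ, ∀ (ι : Type) [Fintype ι],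
      n ≤ Fintype.card ι → ∀ E : (ι → α) → Prop, δ ≤ Ew p (fun x => ind (E x)) →
        ∃ σ : Subspace (Fin m) α ι, ∀ v, E (σ v) := by
  classical
  induction m with
  | zero =>
    intro δ hδ
    refine ⟨0, fun ι _ _ E hE => ?_⟩
    obtain ⟨x, hx⟩ := exists_ge_Ew (fun b => (hp b).le) h1 (fun x : ι → α => ind (E x))
    have hEx : E x := by
      by_contra hn
      rw [ind_false hn] at hx
      linarith
    exact ⟨⟨fun i => Sum.inl (x i), fun e => e.elim0⟩, fun v => hEx⟩
  | succ m ih =>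
    intro δ hδ
    obtain ⟨l, hl⟩ := h p hp h1 (δ / 2) (by linarith)
    obtain ⟨n, hn⟩ := ih (δ / 2 / Fintype.card (Fin l → Option α)) (by
      have : 0 < Fintype.card (Fin l → Option α) := Fintype.card_pos
      positivity)
    refine ⟨Fintype.card (Fin l) + n, fun ι _ hι E hE => ?_⟩
    obtain ⟨Y, _, hY, ⟨e⟩⟩ := exists_split (Fin l) ι n hι
    rw [Ew_reindex e, Ew_sumType] at hE
    obtain ⟨u, hu⟩ := exists_line hp h1 hp h1 (by linarith : 0 < δ / 2)
      (hl (Fin l) (by simp)) (fun x y => E (Sum.elim x y ∘ e.symm)) (by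
        refine le_trans (by linarith) hE)
    obtain ⟨σ, hσ⟩ := hn Y hY _ hu
    refine ⟨⟨fun i => Sum.elim (fun j => (u.idxFun j).elim (Sum.inr 0) Sum.inl)
      (fun j => Sum.map id Fin.succ (σ.idxFun j)) (e.symm i), ?_⟩, ?_⟩
    · intro a
      induction a using Fin.cases with
      | zero =>
        obtain ⟨i, hi⟩ := u.proper
        exact ⟨e (Sum.inl i), by simp [hi]⟩
      | succ a =>
        obtain ⟨i, hi⟩ := σ.proper a
        exact ⟨e (Sum.inr i), by simp [hi]⟩
    · intro v
      convert hσ (fun i => v i.succ) (v 0) using 1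
      funext i
      simp only [Subspace.coe_apply, Function.comp]
      rcases e.symm i with j | j
      · simp only [Sum.elim_inl, Line.coe_apply]
        cases u.idxFun j <;> simp
      · simp only [Sum.elim_inr, Subspace.coe_apply]
        cases σ.idxFun j <;> simp
end GT

namespace GT
open Finset Combinatorics

/-! ### Insensitive sets -/

lemma Ew_unif {ι β : Type} [Fintype ι] [Fintype β] [DecidableEq ι] (F : (ι → β) → ℝ) :
    Ew (unif β) F = (1 / (Fintype.card β : ℝ)) ^ Fintype.card ι * ∑ x, F x := by
  rw [Ew_eq, mul_sum]
  simp [unif]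

lemma Subspace_injective {η β ι : Type} (σ : Subspace η β ι) :
    Function.Injective (fun v : η → β => σ v) := by
  intro v w h
  funext e
  obtain ⟨i, hi⟩ := σ.proper e
  have := congrFun h i
  simpa [Subspace.coe_apply, hi] using this

/-- Under the uniform law, a subspace of dimension `M` in a cube of dimension `l` carries the mass
`|β| ^ M / |β| ^ l`, uniformly distributed. -/
lemma Ew_on_subspace {ι β : Type} [Fintype ι] [Fintype β] [Nonempty β] {M : ℕ}
    (σ : Subspace (Fin M) β ι) (F : (ι → β) → ℝ) :
    Ew (unif β) (fun x => F x * ind (∃ v, x = σ v)) =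
      (Fintype.card β : ℝ) ^ M / (Fintype.card β : ℝ) ^ Fintype.card ι *
        Ew (unif β) (fun v => F (σ v)) := by
  classical
  have hK : (0 : ℝ) < Fintype.card β := by
    have : 0 < Fintype.card β := Fintype.card_pos
    exact_mod_cast this
  rw [Ew_unif, Ew_unif]
  have h1 : ∑ x, F x * ind (∃ v, x = σ v) = ∑ v, F (σ v) := by
    rw [← sum_image (f := F) (g := fun v => σ v) (s := univ)
      fun v _ w _ h => Subspace_injective σ h]
    rw [← sum_subset (subset_univ (univ.image fun v => σ v))]
    · refine sum_congr rfl fun x hx => ?_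
      obtain ⟨v, -, rfl⟩ := mem_image.1 hx
      rw [ind_true ⟨v, rfl⟩, mul_one]
    · intro x _ hx
      rw [ind_false, mul_zero]
      rintro ⟨v, rfl⟩
      exact hx (mem_image_of_mem _ (mem_univ v))
  rw [h1]
  simp only [Fintype.card_fin, div_pow, one_pow]
  field_simp

/-- Enlarging the alphabet of a combinatorial subspace by one letter. -/
def liftSub {η α ι : Type} (σ : Subspace η α ι) : Subspace η (Option α) ι where
  idxFun i := Sum.map some id (σ.idxFun i)
  proper e := (σ.proper e).imp fun i hi => by simp [hi]

lemma liftSub_getD {η α ι : Type} (σ : Subspace η α ι) (a : α) (v : η → Option α) :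
    (fun i => (liftSub σ v i).getD a) = σ (fun e => (v e).getD a) := by
  funext i
  simp only [liftSub, Subspace.coe_apply]
  cases σ.idxFun i <;> simp

/-- Identifying the letter `none` with `a` in a combinatorial subspace. -/
def mergeSub {η α ι : Type} (a : α) (σ : Subspace η (Option α) ι) : Subspace η α ι where
  idxFun i := Sum.map (fun b => b.getD a) id (σ.idxFun i)
  proper e := (σ.proper e).imp fun i hi => by simp [hi]

lemma mergeSub_getD {η α ι : Type} (a : α) (σ : Subspace η (Option α) ι) (v : η → Option α) :
    (fun i => (σ v i).getD a) = mergeSub a σ (fun e => (v e).getD a) := by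
  funext i
  simp only [mergeSub, Subspace.coe_apply]
  cases σ.idxFun i <;> simp

/-- A subspace of a face of the cube, obtained by fixing the first block of coordinates. -/
def faceSub {η β ι κ : Type} (x : ι → β) (σ : Subspace η β κ) : Subspace η β (ι ⊕ κ) where
  idxFun := Sum.elim (fun i => Sum.inl (x i)) σ.idxFun
  proper e := let ⟨i, hi⟩ := σ.proper e; ⟨Sum.inr i, by simpa using hi⟩

lemma faceSub_apply {η β ι κ : Type} (x : ι → β) (σ : Subspace η β κ) (v : η → β) :
    faceSub x σ v = Sum.elim x (σ v) := by
  funext i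
  rcases i with i | i <;> simp [faceSub, Subspace.coe_apply]

/-- A subspace of the opposite face, obtained by fixing the second block of coordinates. -/
def faceSub' {η β ι κ : Type} (y : κ → β) (σ : Subspace η β ι) : Subspace η β (ι ⊕ κ) where
  idxFun := Sum.elim σ.idxFun (fun i => Sum.inl (y i))
  proper e := let ⟨i, hi⟩ := σ.proper e; ⟨Sum.inl i, by simpa using hi⟩

lemma faceSub'_apply {η β ι κ : Type} (y : κ → β) (σ : Subspace η β ι) (v : η → β) :
    faceSub' y σ v = Sum.elim (σ v) y := by
  funext i
  rcases i with i | i <;> simp [faceSub', Subspace.coe_apply]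

/-- The word obtained by replacing every letter `none` by `a`. -/
def mrg {α ι : Type} (a : α) (x : ι → Option α) : ι → α := fun i => (x i).getD a

lemma mrg_sum {α ι κ : Type} (a : α) (x : ι → Option α) (y : κ → Option α) :
    mrg a (Sum.elim x y) = Sum.elim (mrg a x) (mrg a y) := by
  funext i
  rcases i with i | i <;> simp [mrg]

lemma mrg_law {α : Type} [Fintype α] [Nonempty α] (a : α) :
    ∃ q : α → ℝ, (∀ b, 0 < q b) ∧ ∑ b, q b = 1 ∧ ∀ (ι : Type) [Fintype ι] (F : (ι → α) → ℝ),
      Ew (unif (Option α)) (fun x => F (mrg a x)) = Ew q F := by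
  classical
  refine ⟨fun c => ∑ b : Option α with b.getD a = c, unif (Option α) b, fun c => ?_, ?_, ?_⟩
  · exact sum_pos (fun b _ => unif_pos _ _) ⟨some c, by simp⟩
  · exact (sum_fiberwise univ (fun b : Option α => b.getD a) _).trans (unif_sum _)
  · intro ι _ F
    exact Ew_push (fun b : Option α => b.getD a) F

/-- Exhaustion of an insensitive set by subspaces. As long as the set has density above `δ`, a
proportion `κ` of the excess can be covered by disjoint subspaces, on each of which `g` has mean at
most `ε0`; `(1 - κ) ^ j` is what remains of the excess after `j` rounds. -/
lemma ins_round {α : Type} [Fintype α] [Nonempty α] (h : DHJ α) (a : α) (M : ℕ) {δ : ℝ}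
    (hδ : 0 < δ) : ∃ κ : ℝ, 0 < κ ∧ κ ≤ 1 ∧ ∀ j : ℕ, ∃ n : ℕ, ∀ (ι : Type) [Fintype ι],
      n ≤ Fintype.card ι → ∀ g : (ι → Option α) → ℝ, (∀ x, g x ≤ 1) → ∀ ε0 : ℝ, 0 ≤ ε0 →
      (∀ σ : Subspace (Fin M) (Option α) ι, Ew (unif (Option α)) (fun v => g (σ v)) ≤ ε0) →
      ∀ E : (ι → α) → Prop, Ew (unif (Option α)) (fun x => g x * ind (E (mrg a x))) ≤
        ε0 * Ew (unif (Option α)) (fun x => ind (E (mrg a x))) + δ + (1 - κ) ^ j *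
          (Ew (unif (Option α)) (fun x => ind (E (mrg a x))) - δ) := by
  classical
  obtain ⟨q, hq0, hq1, hq⟩ := mrg_law a
  obtain ⟨l0, hl0⟩ := mdhj h hq0 hq1 M δ hδ
  set l := max l0 M with hl
  set u := unif (Option α) with hu
  have hu0 : ∀ b, 0 ≤ u b := fun b => (unif_pos _ b).le
  have hu1 : ∑ b, u b = 1 := unif_sum _
  set K : ℝ := ((Fintype.card (Option α) : ℕ) : ℝ) with hK
  have hK1 : 1 ≤ K := by
    have : 1 ≤ Fintype.card (Option α) := Fintype.card_pos
    simp only [K]; exact_mod_cast this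
  have hK0 : 0 < K := by linarith
  refine ⟨K ^ M / K ^ l, by positivity, ?_, fun j => ?_⟩
  · rw [div_le_one (by positivity)]
    exact pow_le_pow_right₀ hK1 (le_max_right _ _)
  set κ := K ^ M / K ^ l with hκ
  have hκ0 : 0 < κ := by positivity
  have hκ1 : κ ≤ 1 := by
    rw [hκ, div_le_one (by positivity)]
    exact pow_le_pow_right₀ hK1 (le_max_right _ _)
  induction j with
  | zero =>
    refine ⟨0, fun ι _ _ g hg ε0 hε0 _ E => ?_⟩
    have h1 := Ew_mono (ι := ι) hu0 (F := fun x => g x * ind (E (mrg a x)))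
      (F' := fun x => ind (E (mrg a x))) (fun x => by
        have := mul_le_mul_of_nonneg_right (hg x) (ind_nonneg (E (mrg a x)))
        simpa using this)
    have h2 : 0 ≤ Ew u (fun x : ι → Option α => ind (E (mrg a x))) :=
      Ew_nonneg hu0 fun x => ind_nonneg _
    nlinarith
  | succ j ih =>
    obtain ⟨n, hn⟩ := ih
    refine ⟨Fintype.card (Fin l) + n, fun ι _ hι g0 hg0 ε0 hε0 hgs0 E0 => ?_⟩
    obtain ⟨Y, _, hY, ⟨e⟩⟩ := exists_split (Fin l) ι n hι
    -- transport to the split cube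
    set g : (Fin l ⊕ Y → Option α) → ℝ := fun x => g0 (x ∘ e.symm) with hg_def
    set E : (Fin l ⊕ Y → α) → Prop := fun x => E0 (x ∘ e.symm) with hE_def
    have hg : ∀ x, g x ≤ 1 := fun x => hg0 _
    have hgs : ∀ σ : Subspace (Fin M) (Option α) (Fin l ⊕ Y), Ew u (fun v => g (σ v)) ≤ ε0 := by
      intro σ
      have := hgs0 (σ.reindex (Equiv.refl _) (Equiv.refl _) e)
      convert this using 4 with v
      funext i
      simp
    rw [Ew_reindex e, Ew_reindex e (fun x => ind (E0 (mrg a x)))]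
    change Ew u (fun x : Fin l ⊕ Y → Option α => g x * ind (E (mrg a x))) ≤
      ε0 * Ew u (fun x : Fin l ⊕ Y → Option α => ind (E (mrg a x))) + δ + (1 - κ) ^ (j + 1) *
          (Ew u (fun x : Fin l ⊕ Y → Option α => ind (E (mrg a x))) - δ)
    clear_value g E
    -- dense fibres and the subspaces found in them
    set D : (Y → α) → Prop := fun y => δ ≤ Ew q (fun x : Fin l → α => ind (E (Sum.elim x y)))
      with hD
    have hσ : ∀ y, ∃ σ : Subspace (Fin M) α (Fin l), D y → ∀ v, E (Sum.elim (σ v) y) := by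
      intro y
      by_cases hy : D y
      · obtain ⟨σ, hσ⟩ := hl0 (Fin l) (by simp [hl]) _ hy
        exact ⟨σ, fun _ => hσ⟩
      · refine ⟨⟨fun i => if hi : i.1 < M then Sum.inr ⟨i.1, hi⟩ else Sum.inl a, fun e => ?_⟩,
          fun h => absurd h hy⟩
        exact ⟨⟨e.1, e.2.trans_le (le_max_right _ _)⟩, by simp⟩
    choose σ hσ using hσ
    set S : (Fin l → Option α) → (Y → α) → Prop := fun x y => D y ∧ ∃ v, x = liftSub (σ y) v
      with hS
    have hSE : ∀ x y, S x y → E (Sum.elim (mrg a x) y) := by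
      rintro x y ⟨hy, v, rfl⟩
      have := liftSub_getD (σ y) a v
      unfold mrg
      rw [this]
      exact hσ y hy _
    set R : (Fin l → Option α) → (Y → α) → Prop := fun x y =>
      E (Sum.elim (mrg a x) y) ∧ ¬ S x y with hR
    have hsplit : ∀ x y, ind (E (Sum.elim (mrg a x) y)) = ind (S x y) + ind (R x y) := by
      intro x y
      by_cases h1 : S x y
      · rw [ind_true h1, ind_true (hSE x y h1), ind_false fun h : R x y => h.2 h1, add_zero]
      · rw [ind_false h1, zero_add]
        congr 1
        simp [hR, h1]
    -- mass of the removed part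
    have hSind : ∀ x y, ind (S x y) = ind (D y) * ind (∃ v, x = liftSub (σ y) v) :=
      fun x y => ind_and _ _
    have hmassG : ∀ (y : Y → Option α) (F : (Fin l → Option α) → ℝ),
        Ew u (fun x => F x * ind (S x (mrg a y))) =
        ind (D (mrg a y)) * (κ * Ew u (fun v => F (liftSub (σ (mrg a y)) v))) := by
      intro y F
      have := Ew_on_subspace (liftSub (σ (mrg a y))) F
      rw [Fintype.card_fin] at this
      rw [hκ, hK, hu, ← this, ← Ew_mul_left]
      congr 1
      funext x
      rw [hSind]; ring
    -- abbreviations for the masses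
    set μ := Ew u (fun x : Fin l ⊕ Y → Option α => ind (E (mrg a x))) with hμ
    set d := Ew u (fun y : Y → Option α => ind (D (mrg a y))) with hd
    set μ' := Ew u (fun x : Fin l → Option α => Ew u (fun y : Y → Option α =>
      ind (R x (mrg a y)))) with hμ'
    have hμsplit : μ = κ * d + μ' := by
      have h1 : μ = Ew u (fun x : Fin l → Option α => Ew u (fun y : Y → Option α =>
          ind (S x (mrg a y)))) + μ' := by
        rw [hμ, Ew_sumType, hμ', ← Ew_add]
        congr 1; funext x
        rw [← Ew_add]
        congr 1; funext y
        rw [mrg_sum, hsplit]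
      rw [h1, Ew_comm]
      congr 1
      rw [hd, ← Ew_mul_left]
      congr 1; funext y
      have := hmassG y (fun _ => 1)
      simp only [one_mul] at this
      rw [this, Ew_const hu1]; ring
    have hd_ge : μ ≤ d + δ := by
      rw [hμ, Ew_sumType, Ew_comm, hd, ← Ew_const (ι := Y) hu1 δ, ← Ew_add]
      refine Ew_mono hu0 fun y => ?_
      simp only [mrg_sum]
      rw [hq (Fin l) (fun x => ind (E (Sum.elim x (mrg a y))))]
      by_cases hy : D (mrg a y)
      · rw [ind_true hy]
        have := Ew_mono (ι := Fin l) (fun b => (hq0 b).le)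
          (fun x => ind_le_one (E (Sum.elim x (mrg a y))))
        rw [Ew_const hq1] at this
        linarith
      · rw [ind_false hy]
        have := le_of_not_ge hy
        linarith
    have hmain : Ew u (fun x : Fin l ⊕ Y → Option α => g x * ind (E (mrg a x))) ≤
        κ * d * ε0 + (ε0 * μ' + δ + (1 - κ) ^ j * (μ' - δ)) := by
      have h1 : Ew u (fun x : Fin l ⊕ Y → Option α => g x * ind (E (mrg a x))) =
          Ew u (fun y : Y → Option α => Ew u (fun x : Fin l → Option α =>
            g (Sum.elim x y) * ind (S x (mrg a y)))) +
          Ew u (fun x : Fin l → Option α => Ew u (fun y : Y → Option α =>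
            g (Sum.elim x y) * ind (R x (mrg a y)))) := by
        rw [Ew_comm, Ew_sumType, ← Ew_add]
        congr 1; funext x
        rw [← Ew_add]
        congr 1; funext y
        rw [mrg_sum, hsplit]; ring
      rw [h1]
      refine add_le_add ?_ ?_
      · have h2 : κ * d * ε0 = Ew u (fun y : Y → Option α => κ * ε0 * ind (D (mrg a y))) := by
          rw [Ew_mul_left]; ring
        rw [h2]
        refine Ew_mono hu0 fun y => ?_
        rw [hmassG y (fun x => g (Sum.elim x y))]
        have h3 := hgs (faceSub' y (liftSub (σ (mrg a y))))
        simp only [faceSub'_apply] at h3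
        have h4 := mul_le_mul_of_nonneg_left h3 (mul_nonneg (ind_nonneg (D (mrg a y))) hκ0.le)
        linarith
      · have h2 : ε0 * μ' + δ + (1 - κ) ^ j * (μ' - δ) = Ew u (fun x : Fin l → Option α =>
            ε0 * Ew u (fun y : Y → Option α => ind (R x (mrg a y))) + δ +
              (1 - κ) ^ j * (Ew u (fun y : Y → Option α => ind (R x (mrg a y))) - δ)) := by
          rw [Ew_add, Ew_add, Ew_mul_left, Ew_mul_left, Ew_sub, Ew_const hu1]
        rw [h2]
        refine Ew_mono hu0 fun x => ?_
        refine hn Y hY (fun y => g (Sum.elim x y)) (fun y => hg _) ε0 hε0 (fun τ => ?_) (R x)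
        have := hgs (faceSub x τ)
        simpa only [faceSub_apply] using this
    have hpow : 0 ≤ (1 - κ) ^ j := pow_nonneg (by linarith) _
    have h5 : μ' - δ ≤ (1 - κ) * (μ - δ) := by nlinarith
    have h6 := mul_le_mul_of_nonneg_left h5 hpow
    rw [pow_succ]
    nlinarith

/-- A function with small averages on all subspaces of dimension `M` has small correlation with
insensitive sets in high dimension. -/
lemma ins_one {α : Type} [Fintype α] [Nonempty α] (h : DHJ α) (a : α) (M : ℕ) {ε : ℝ}
    (hε : 0 < ε) : ∃ n : ℕ, ∀ (ι : Type) [Fintype ι], n ≤ Fintype.card ι →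
      ∀ g : (ι → Option α) → ℝ, (∀ x, g x ≤ 1) →
      (∀ σ : Subspace (Fin M) (Option α) ι, Ew (unif (Option α)) (fun v => g (σ v)) ≤ ε / 2) →
      ∀ E : (ι → α) → Prop, Ew (unif (Option α)) (fun x => g x * ind (E (mrg a x))) ≤ ε := by
  obtain ⟨κ, hκ0, hκ1, hr⟩ := ins_round h a M (δ := ε / 4) (by linarith)
  obtain ⟨j, hj⟩ := exists_pow_lt_of_lt_one (by linarith : 0 < ε / 4) (by linarith : 1 - κ < 1)
  obtain ⟨n, hn⟩ := hr j
  refine ⟨n, fun ι _ hι g hg hσ E => (hn ι hι g hg (ε / 2) (by linarith) hσ E).trans ?_⟩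
  have hμ1 := Ew_mono (ι := ι) (fun b => (unif_pos (Option α) b).le)
    (fun x => ind_le_one (E (mrg a x)))
  rw [Ew_const (unif_sum _)] at hμ1
  set μ := Ew (unif (Option α)) (fun x : ι → Option α => ind (E (mrg a x)))
  have hpow : 0 ≤ (1 - κ) ^ j := pow_nonneg (by linarith) _
  nlinarith

/-- Several insensitive sets, one for each letter of `J`. -/
lemma ins_many {α : Type} [Fintype α] [Nonempty α] [DecidableEq α] (h : DHJ α) (J : Finset α) :
    ∀ {ε : ℝ}, 0 < ε → ∃ ε0 > 0, ∀ M : ℕ, ∃ n : ℕ, ∀ (ι : Type) [Fintype ι], n ≤ Fintype.card ι →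
      ∀ g : (ι → Option α) → ℝ, (∀ x, |g x| ≤ 1) →
      (∀ σ : Subspace (Fin M) (Option α) ι, Ew (unif (Option α)) (fun v => g (σ v)) ≤ ε0) →
      ∀ E : α → (ι → α) → Prop,
        Ew (unif (Option α)) (fun x => g x * ∏ a ∈ J, ind (E a (mrg a x))) ≤ ε := by
  induction J using Finset.induction_on with
  | empty =>
    intro ε hε
    refine ⟨ε / 2, by linarith, fun M => ?_⟩
    obtain ⟨n, hn⟩ := ins_one h (Classical.arbitrary α) M hε
    refine ⟨n, fun ι _ hι g hg hσ E => ?_⟩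
    have := hn ι hι g (fun x => (abs_le.1 (hg x)).2) hσ (fun _ => True)
    simpa [ind_true] using this
  | insert b J hb ih =>
    intro ε hε
    obtain ⟨ε0, hε0, hM⟩ := ih (ε := ε / 2) (by linarith)
    refine ⟨ε0, hε0, fun M => ?_⟩
    obtain ⟨n1, hn1⟩ := hM M
    obtain ⟨n, hn⟩ := ins_one h b n1 hε
    refine ⟨n, fun ι _ hι g hg hσ E => ?_⟩
    have hp : ∀ x : ι → Option α, |∏ a ∈ J, ind (E a (mrg a x))| ≤ 1 := by
      intro x
      rw [abs_of_nonneg (prod_nonneg fun a _ => ind_nonneg _)]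
      exact prod_le_one (fun a _ => ind_nonneg _) fun a _ => ind_le_one _
    have := hn ι hι (fun x => g x * ∏ a ∈ J, ind (E a (mrg a x))) (fun x => by
        refine (le_abs_self _).trans ?_
        rw [abs_mul]
        exact mul_le_one₀ (hg x) (abs_nonneg _) (hp x)) (fun σ => ?_) (E b)
    · refine le_trans (le_of_eq ?_) this
      congr 1
      funext x
      rw [prod_insert hb]; ring
    · refine le_trans (le_of_eq ?_) (hn1 (Fin n1) (by simp) (fun v => g (σ v)) (fun v => hg _)
        (fun τ => ?_) (fun a v => E a (mergeSub a σ v)))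
      · congr 1; funext v
        congr 1
        refine prod_congr rfl fun a _ => ?_
        congr 2
        exact mergeSub_getD a σ v
      · -- a subspace of a subspace is a subspace
        let ρ : Subspace (Fin M) (Option α) ι :=
          ⟨fun i => (σ.idxFun i).elim Sum.inl τ.idxFun, fun e => by
            obtain ⟨j, hj⟩ := τ.proper e
            obtain ⟨i, hi⟩ := σ.proper j
            exact ⟨i, by simp [hi, hj]⟩⟩
        refine le_trans (le_of_eq ?_) (hσ ρ)
        congr 1; funext v
        congr 1; funext i
        simp only [ρ, Subspace.coe_apply]
        cases σ.idxFun i <;> simp [Subspace.coe_apply]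

/-- Correlation with the complement of an intersection of insensitive sets. -/
lemma ins_compl {α ι : Type} [Fintype α] [Nonempty α] [DecidableEq α] [Fintype ι]
    (g : (ι → Option α) → ℝ) {ε : ℝ}
    (hg : ∀ E : α → (ι → α) → Prop,
        Ew (unif (Option α)) (fun x => g x * ∏ a, ind (E a (mrg a x))) ≤ ε)
    (E : α → (ι → α) → Prop) (J : Finset α) :
    Ew (unif (Option α)) (fun x => g x * (1 - ∏ a ∈ J, ind (E a (mrg a x)))) ≤ #J * ε := by
  induction J using Finset.induction_on with
  | empty =>
    simp [Ew_const (unif_sum (Option α))]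
  | insert b J hb ih =>
    have h1 := hg (fun a v => if a ∈ J then E a v else if a = b then ¬ E a v else True)
    have h2 : ∀ x : ι → Option α, g x * (1 - ∏ a ∈ insert b J, ind (E a (mrg a x))) =
        g x * (1 - ∏ a ∈ J, ind (E a (mrg a x))) + g x * ∏ a, ind
          (if a ∈ J then E a (mrg a x) else if a = b then ¬ E a (mrg a x) else True) := by
      intro x
      rw [← prod_subset (subset_univ (insert b J)), prod_insert hb, prod_insert hb]
      · have : ∏ a ∈ J, ind (if a ∈ J then E a (mrg a x) else
            if a = b then ¬ E a (mrg a x) else True) = ∏ a ∈ J, ind (E a (mrg a x)) :=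
          prod_congr rfl fun a ha => by simp [ha]
        rw [this]
        simp only [hb, if_false, if_true, ind_not]
        ring
      · intro a _ ha
        rw [mem_insert, not_or] at ha
        simp [ha.1, ha.2, ind_true]
    simp only [h2]
    rw [Ew_add, card_insert_of_notMem hb]
    push_cast
    linarith
end GT

namespace GT
open Finset Combinatorics

/-! ### Enlarging the alphabet -/

/-- If `A` is line-free, a point of `A` with at least one letter `none` cannot have all its
specialisations `none ↦ some a` in `A`. -/
lemma LineFree.not_all {α T Y : Type} {A : (T ⊕ Y → Option α) → Prop} (hA : LineFree A)
    (x : T → Option α) (y : Y → Option α) (hx : ∃ t, x t = none) (h0 : A (Sum.elim x y)) :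
    ¬ ∀ a, A (Sum.elim (fun t => some (mrg a x t)) y) := by
  intro h
  obtain ⟨t, ht⟩ := hx
  obtain ⟨b, hb⟩ := hA ⟨Sum.elim (fun t => (x t).elim none (fun c => some (some c)))
    (fun i => some (y i)), ⟨Sum.inl t, by simp [ht]⟩⟩
  apply hb
  cases b with
  | none =>
    convert h0 using 1
    funext i
    rcases i with i | i
    · simp only [Line.coe_apply, Sum.elim_inl]
      cases x i <;> simp
    · simp
  | some a =>
    convert h a using 1
    funext i
    rcases i with i | i
    · simp only [Line.coe_apply, Sum.elim_inl, mrg]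
      cases x i <;> simp
    · simp

/-- Given a line-free set all of whose fibres are dense, there is a subspace `V` on which every
point has all its specialisations simultaneously in `A` for a positive proportion of the fibres. -/
lemma exists_good_subspace {α : Type} [Fintype α] [Nonempty α] {l : ℕ} {δ : ℝ} (hδ : 0 < δ)
    (hl : ∀ A : (Fin l → α) → Prop, LineFree A → Ew (unif α) (fun x => ind (A x)) < δ) (m : ℕ) :
    ∃ (T : Type) (_ : Fintype T), ∀ (Y : Type) [Fintype Y] (A : (T ⊕ Y → Option α) → Prop),
      (∀ t, 2 * δ ≤ Ew (unif (Option α)) (fun y : Y → Option α => ind (A (Sum.elim t y)))) →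
      ∃ V : Subspace (Fin m) (Option α) T, ∀ v, (∃ t, V v t = none) ∧
        δ / Fintype.card (Fin l → Option α) ≤ Ew (unif (Option α)) (fun y : Y → Option α =>
          ind (∀ a, A (Sum.elim (fun t => some (mrg a (V v) t)) y))) := by
  classical
  obtain ⟨N, _, hN⟩ := Subspace.exists_mono_in_high_dimension (α ⊕ Fin l) (Fin l → Option α) (Fin m)
  refine ⟨Fin l ⊕ N, inferInstance, fun Y _ A hA => ?_⟩
  set pt : (N → α ⊕ Fin l) → (Fin l → Option α) → (Fin l ⊕ N → Option α) :=
    fun z w => Sum.elim w (fun i => (z i).elim some w) with hpt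
  have key : ∀ z : N → α ⊕ Fin l, ∃ u : Line α (Fin l), δ / Fintype.card (Fin l → Option α) ≤
      Ew (unif (Option α)) fun y : Y → Option α =>
        ind (∀ a, A (Sum.elim (pt z (fun i => some (u a i))) y)) := by
    intro z
    refine exists_line (unif_pos α) (unif_sum α) (unif_pos _) (unif_sum _) hδ hl
      (fun x y => A (Sum.elim (pt z (fun i => some (x i))) y)) ?_
    rw [← Ew_const (ι := Fin l) (unif_sum α) (2 * δ)]
    exact Ew_mono (fun b => (unif_pos α b).le) fun x => hA _
  choose u hu using key
  obtain ⟨σ, w, hσ⟩ := hN (fun z => (u z).idxFun)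
  obtain ⟨j, hj⟩ : ∃ j, w j = none := by
    have := (u (σ fun _ => Sum.inl (Classical.arbitrary α))).proper
    have h2 := hσ (fun _ => Sum.inl (Classical.arbitrary α))
    simp only at h2
    rwa [h2] at this
  let V : Subspace (Fin m) (Option α) (Fin l ⊕ N) :=
    ⟨Sum.elim (fun i => Sum.inl (w i))
      (fun i => (σ.idxFun i).elim (fun b => Sum.inl (b.elim some w)) Sum.inr), fun e => by
        obtain ⟨i, hi⟩ := σ.proper e
        exact ⟨Sum.inr i, by simp [hi]⟩⟩
  refine ⟨V, fun v => ⟨⟨Sum.inl j, by simp [V, Subspace.coe_apply, hj]⟩, ?_⟩⟩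
  set z' : Fin m → α ⊕ Fin l := fun e => (v e).elim (Sum.inr j) Sum.inl with hz'
  have hV : V v = pt (σ z') w := by
    funext i
    rcases i with i | i
    · simp [V, hpt, Subspace.coe_apply]
    · simp only [V, hpt, Subspace.coe_apply, Sum.elim_inr]
      rcases hi : σ.idxFun i with b | e
      · simp
      · simp only [Sum.elim_inr, hz']
        cases v e <;> simp [hj]
  refine (hu (σ z')).trans (Ew_mono (fun b => (unif_pos _ b).le) fun y => ind_mono fun h a => ?_)
  convert h a using 2
  have h3 : (u (σ z')).idxFun = w := hσ z'
  funext i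
  rw [hV]
  rcases i with i | i
  · simp [hpt, mrg, Line.coe_apply, h3]
  · simp only [hpt, mrg, Sum.elim_inr]
    rcases σ z' i with b | e
    · simp
    · simp [Line.coe_apply, h3]

/-- The induction step of density Hales–Jewett. -/
theorem DHJ_step {α : Type} [Fintype α] [Nonempty α] (h : DHJ α) : DHJ (Option α) := by
  classical
  refine DHJ_of_unif (Hold_of_step (unif_pos _) (unif_sum _) fun c hc hup => ?_)
  obtain ⟨l, hl⟩ := h (unif α) (unif_pos α) (unif_sum α) (c / 4) (by linarith)
  set θ : ℝ := c / 4 / (Fintype.card (Fin l → Option α) : ℝ) with hθ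
  have hθ0 : 0 < θ := by
    have : 0 < Fintype.card (Fin l → Option α) := Fintype.card_pos
    positivity
  have hcθ : 0 < c * θ := mul_pos hc hθ0
  set ε1 := c * θ / 8 with hε1
  set C := c + ε1 + 1 with hC
  have hC0 : 0 < C := by positivity
  have hα0 : 0 < (Fintype.card α : ℝ) := by
    have : 0 < Fintype.card α := Fintype.card_pos
    exact_mod_cast this
  obtain ⟨M, hM⟩ := hup ε1 (by positivity)
  obtain ⟨ε0, hε0, hins⟩ := ins_many h univ (ε := c * θ / (4 * C * Fintype.card α)) (by positivity)
  obtain ⟨m, hm⟩ := hins M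
  obtain ⟨T, _, hT⟩ := exists_good_subspace (by linarith : 0 < c / 4) (hl (Fin l) (by simp)) m
  obtain ⟨ε, hε, n, hn⟩ := fibre_dense (unif_pos _) (unif_sum _) hup T (η := min (c / 2) (c * θ / 8))
    (lt_min (by linarith) (by linarith))
  refine ⟨ε, hε, Hold_of_split T n fun Y _ hY A hA => ?_⟩
  by_contra! hd
  have hfib := hn Y hY A hA hd
  have hη1 : min (c / 2) (c * θ / 8) ≤ c / 2 := min_le_left _ _
  have hη2 : min (c / 2) (c * θ / 8) ≤ c * θ / 8 := min_le_right _ _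
  obtain ⟨V, hV⟩ := hT Y A fun t => le_trans (by linarith) (hfib t)
  set u := unif (Option α) with hu
  have hu0 : ∀ b, 0 ≤ u b := fun b => (unif_pos _ b).le
  have hu1 : ∑ b, u b = 1 := unif_sum _
  -- `P y v` indicates that all specialisations of the point `V v` lie in the fibre `A (·, y)`. For
  -- fixed `y` this is an intersection over `a` of sets insensitive to exchanging `none` and `a`.
  set E : (Y → Option α) → α → (Fin m → α) → Prop := fun y a v =>
    A (Sum.elim (fun t => some (mergeSub a V v t)) y) with hE
  set P : (Y → Option α) → (Fin m → Option α) → ℝ := fun y v => ∏ a, ind (E y a (mrg a v)) with hP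
  have hPind : ∀ y v, P y v = ind (∀ a, A (Sum.elim (fun t => some (mrg a (V v) t)) y)) := by
    intro y v
    have hEe : ∀ a, E y a (mrg a v) = A (Sum.elim (fun t => some (mrg a (V v) t)) y) := by
      intro a
      have := mergeSub_getD a V v
      simp only [hE]
      unfold mrg
      rw [← this]
    simp only [hP, hEe]
    by_cases hall : ∀ a, A (Sum.elim (fun t => some (mrg a (V v) t)) y)
    · rw [ind_true hall]
      exact prod_eq_one fun a _ => ind_true (hall a)
    · rw [ind_false hall]
      push Not at hall
      obtain ⟨a, ha⟩ := hall
      exact prod_eq_zero (mem_univ a) (ind_false ha)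
  set B : (Y → Option α) → (Fin m → Option α) → ℝ := fun y v => ind (A (Sum.elim (V v) y)) with hB
  have hBP : ∀ y v, B y v * P y v = 0 := by
    intro y v
    rw [hPind]
    by_cases h0 : A (Sum.elim (V v) y)
    · rw [ind_false (hA.not_all (V v) y (hV v).1 h0), mul_zero]
    · simp [hB, ind_false h0]
  -- Off the support of `P y` the fibre is barely denser than `c`: the complement of an intersection
  -- of insensitive sets is nearly partitioned into `M`-dimensional subspaces, where `hM` applies.
  have hup' : ∀ y, Ew u (fun v => (B y v - (c + ε1)) * (1 - P y v)) ≤ c * θ / 4 := by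
    intro y
    have h1 := ins_compl (ι := Fin m) (fun v => (B y v - (c + ε1)) / C)
      (hm (Fin m) (by simp) _ (fun v => ?_) (fun σ => ?_)) (E y) univ
    · have h2 : Ew u (fun v => (B y v - (c + ε1)) * (1 - P y v)) =
        C * Ew u (fun v => (B y v - (c + ε1)) / C * (1 - P y v)) := by
        rw [← Ew_mul_left]
        congr 1; funext v
        field_simp
      rw [h2]
      refine (mul_le_mul_of_nonneg_left h1 hC0.le).trans (le_of_eq ?_)
      rw [card_univ]
      field_simp
    · rw [abs_div, abs_of_pos hC0, div_le_one hC0, abs_le]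
      have h1 := ind_nonneg (A (Sum.elim (V v) y))
      have h2 := ind_le_one (A (Sum.elim (V v) y))
      have h3 : 0 < ε1 := by positivity
      constructor <;> simp only [hB] <;> linarith
    · refine le_trans ?_ hε0.le
      have h1 := hM (Fin M) (by simp) _ (((hA.sum_left y).subspace V).subspace σ)
      have h2 : Ew u (fun v => (B y (σ v) - (c + ε1)) / C) =
          (1 / C) * (Ew u (fun v => B y (σ v)) - (c + ε1)) := by
        rw [← Ew_const (ι := Fin M) hu1 (c + ε1), ← Ew_sub, ← Ew_mul_left]
        rw [Ew_const hu1]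
        congr 1; funext v; ring
      rw [h2]
      exact mul_nonpos_of_nonneg_of_nonpos (by positivity) (by simp only [hB]; linarith)
  have h1 : Ew u (fun y : Y → Option α => Ew u (fun v => (B y v - (c + ε1)) * (1 - P y v))) ≤
      c * θ / 4 := by
    rw [← Ew_const (ι := Y) hu1 (c * θ / 4)]
    exact Ew_mono hu0 hup'
  rw [Ew_comm] at h1
  -- On average over `y` the opposite holds: `A` has density nearly `c` at every `V v`, and all of
  -- it lies off the support of `P`, which has density at least `θ`.
  have h2 : c * θ * (3 / 4) ≤ Ew u (fun v : Fin m → Option α =>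
      Ew u (fun y : Y → Option α => (B y v - (c + ε1)) * (1 - P y v))) := by
    rw [← Ew_const (ι := Fin m) hu1 (c * θ * (3 / 4))]
    refine Ew_mono hu0 fun v => ?_
    have h3 : (fun y : Y → Option α => (B y v - (c + ε1)) * (1 - P y v)) =
        fun y => (B y v - (c + ε1)) + (c + ε1) * P y v := by
      funext y
      have := hBP y v
      linear_combination -this
    rw [h3, Ew_add, Ew_sub, Ew_const hu1, Ew_mul_left]
    have h4 := hfib (V v)
    have h5 := (hV v).2
    simp only [← hPind] at h5
    have h6 : (c + ε1) * θ ≤ (c + ε1) * Ew u (fun y => P y v) :=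
      mul_le_mul_of_nonneg_left h5 (by positivity)
    have h7 : 0 ≤ ε1 * θ := by positivity
    simp only [hB]
    nlinarith
  linarith

lemma DHJ_equiv {α β : Type} [Fintype α] [Fintype β] (e : α ≃ β) (h : DHJ α) : DHJ β := by
  classical
  intro p hp h1 δ hδ
  obtain ⟨n, hn⟩ := h (fun a => p (e a)) (fun a => hp _) (by rw [e.sum_comp]; exact h1) δ hδ
  refine ⟨n, fun ι _ hι A hA => ?_⟩
  have := hn ι hι (fun x => A (fun i => e (x i))) (fun L => ?_)
  · refine lt_of_le_of_lt (le_of_eq ?_) this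
    rw [Ew_eq, Ew_eq, ← (Equiv.arrowCongr (Equiv.refl ι) e).sum_comp]
    rfl
  · obtain ⟨b, hb⟩ := hA ⟨fun i => (L.idxFun i).map e, by
      obtain ⟨i, hi⟩ := L.proper
      exact ⟨i, by simp [hi]⟩⟩
    refine ⟨e.symm b, fun hc => hb ?_⟩
    convert hc using 1
    funext i
    simp only [Line.coe_apply]
    cases L.idxFun i <;> simp

/-- The density Hales–Jewett theorem. -/
theorem DHJ_all (k : ℕ) : DHJ (Fin (k + 1)) := by
  induction k with
  | zero =>
    intro p hp h1 δ hδ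
    refine ⟨1, fun ι _ hι A hA => ?_⟩
    have hne : Nonempty ι := Fintype.card_pos_iff.1 hι
    obtain ⟨b, hb⟩ := hA (Line.diagonal _ ι)
    have : (fun x : ι → Fin (0 + 1) => ind (A x)) = fun _ => 0 := by
      funext x
      have hx : x = (Line.diagonal (Fin (0 + 1)) ι) b := by
        funext i
        exact Subsingleton.elim (α := Fin 1) _ _
      rw [hx]
      exact ind_false hb
    rw [this, Ew_const h1]
    exact hδ
  | succ k ih =>
    exact DHJ_equiv (finSuccEquiv (k + 1)).symm (DHJ_step ih)
end GT

namespace GT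
open Finset Combinatorics

/-! ### Szemerédi's theorem with multiplicity -/

/-- Szemerédi's theorem with multiplicity, in a large cyclic group of prime order: a function of
positive mean gives positive weight to a positive proportion of progressions. -/
theorem varnavides (k : ℕ) {δ : ℝ} (hδ : 0 < δ) : ∃ c > 0, ∃ N0 : ℕ, ∀ (N : ℕ) [Fact N.Prime],
    N0 ≤ N → ∀ f : ZMod N → ℝ, (∀ x, 0 ≤ f x) → (∀ x, f x ≤ 1) → δ * N ≤ ∑ x, f x →
    c * (N : ℝ) ^ 2 ≤ ∑ a : ZMod N, ∑ d : ZMod N, ∏ i : Fin (k + 1), f (a + (i : ℕ) * d) := by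
  classical
  obtain ⟨n, hn⟩ := DHJ_all k (unif _) (unif_pos _) (unif_sum _) (δ / 4) (by linarith)
  set u := unif (Fin (k + 1)) with hu
  have hu0 : ∀ b, 0 ≤ u b := fun b => (unif_pos _ b).le
  have hu1 : ∑ b, u b = 1 := unif_sum _
  set P : Finset (ℕ × ℕ) := range (n * k + 1) ×ˢ Icc 1 n with hP
  refine ⟨δ / 4 / (#P + 1) * (δ / 2) ^ (k + 1), by positivity, n + 1, fun N _ hN f hf0 hf1 hf => ?_⟩
  have hN0 : (0 : ℝ) < N := by
    have := (Fact.out : N.Prime).pos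
    exact_mod_cast this
  set A : ZMod N → Prop := fun x => δ / 2 ≤ f x with hA
  set S : ℝ := ∑ a : ZMod N, ∑ d : ZMod N, ind (∀ i : Fin (k + 1), A (a + (i : ℕ) * d)) with hS
  -- the weight of progressions in terms of those inside the level set
  have h1 : (δ / 2) ^ (k + 1) * S ≤
      ∑ a : ZMod N, ∑ d : ZMod N, ∏ i : Fin (k + 1), f (a + (i : ℕ) * d) := by
    rw [hS, mul_sum]
    refine sum_le_sum fun a _ => ?_
    rw [mul_sum]
    refine sum_le_sum fun d _ => ?_
    by_cases h : ∀ i : Fin (k + 1), A (a + (i : ℕ) * d)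
    · rw [ind_true h, mul_one]
      have := prod_le_prod (s := univ) (f := fun _ : Fin (k + 1) => δ / 2)
        (g := fun i => f (a + (i : ℕ) * d)) (fun i _ => by positivity) fun i _ => h i
      rwa [prod_const, card_univ, Fintype.card_fin] at this
    · rw [ind_false h, mul_zero]
      exact prod_nonneg fun i _ => hf0 _
  -- the level set is dense
  have h2 : δ / 2 * N ≤ ∑ x, ind (A x) := by
    have : ∑ x, f x ≤ ∑ x, (ind (A x) + δ / 2) := by
      refine sum_le_sum fun x _ => ?_
      by_cases h : A x
      · rw [ind_true h]; linarith [hf1 x]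
      · rw [ind_false h]; linarith [not_le.1 h]
    rw [sum_add_distrib] at this
    simp only [sum_const, card_univ, ZMod.card, nsmul_eq_mul] at this
    linarith
  -- the random embedding of the combinatorial cube
  set φ : (Fin n → Fin (k + 1)) → ℕ := fun x => ∑ j, (x j : ℕ) with hφ
  have h3 : δ / 2 * (N : ℝ) ^ 2 ≤ ∑ a : ZMod N, ∑ d : ZMod N,
      Ew u (fun x => ind (A (a + φ x * d))) := by
    have : ∑ a : ZMod N, ∑ d : ZMod N, Ew u (fun x => ind (A (a + φ x * d))) =
        N * ∑ x, ind (A x) := by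
      simp only [← Ew_sum]
      rw [← Ew_const (ι := Fin n) hu1 (N * ∑ x, ind (A x))]
      congr 1
      funext x
      rw [sum_comm]
      have : ∀ d : ZMod N, ∑ a : ZMod N, ind (A (a + φ x * d)) = ∑ a, ind (A a) := fun d =>
        Equiv.sum_comp (Equiv.addRight ((φ x : ZMod N) * d)) (fun a => ind (A a))
      simp [this]
    rw [this]
    nlinarith
  have h4 : ∀ a d : ZMod N, Ew u (fun x => ind (A (a + φ x * d))) ≤ δ / 4 +
      ∑ p ∈ P, ind (∀ i : Fin (k + 1), A ((a + p.1 * d) + (i : ℕ) * (p.2 * d))) := by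
    intro a d
    by_cases hl : LineFree (fun x : Fin n → Fin (k + 1) => A (a + φ x * d))
    · have := (hn (Fin n) (by simp) _ hl).le
      have h5 : 0 ≤ ∑ p ∈ P, ind (∀ i : Fin (k + 1), A ((a + p.1 * d) + (i : ℕ) * (p.2 * d))) :=
        sum_nonneg fun p _ => ind_nonneg _
      linarith
    · simp only [LineFree] at hl
      push Not at hl
      obtain ⟨L, hL⟩ := hl
      set s : ℕ := φ (L 0) with hs
      set w : ℕ := #{j | L.idxFun j = none} with hw
      have hsw : ∀ i : Fin (k + 1), φ (L i) = s + i * w := by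
        intro i
        rw [hs, hw, card_filter, mul_sum, hφ]
        simp only
        rw [← sum_add_distrib]
        refine sum_congr rfl fun j _ => ?_
        simp only [Line.coe_apply]
        cases L.idxFun j <;> simp
      have hmem : (s, w) ∈ P := by
        rw [hP, mem_product, mem_range, mem_Icc]
        refine ⟨?_, ?_, ?_⟩
        · have : s ≤ ∑ _j : Fin n, k := sum_le_sum fun j _ => Nat.lt_succ_iff.1 (L 0 j).2
          simp at this
          omega
        · obtain ⟨j, hj⟩ := L.proper
          refine Nat.succ_le_of_lt (card_pos.2 ⟨j, mem_filter.2 ⟨mem_univ _, hj⟩⟩)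
        · exact (card_filter_le (univ : Finset (Fin n)) (fun j => L.idxFun j = none)).trans (by simp)
      have h5 := single_le_sum (s := P) (f := fun p : ℕ × ℕ =>
        ind (∀ i : Fin (k + 1), A ((a + p.1 * d) + (i : ℕ) * (p.2 * d)))) (fun p _ => ind_nonneg _) hmem
      have h6 : ind (∀ i : Fin (k + 1), A ((a + (s : ZMod N) * d) + (i : ℕ) * ((w : ZMod N) * d))) = 1 := by
        refine ind_true fun i => ?_
        have := hL i
        rw [hsw] at this
        convert this using 1
        push_cast
        ring
      simp only [h6] at h5
      have h7 := Ew_mono (ι := Fin n) hu0 (fun x => ind_le_one (A (a + φ x * d)))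
      rw [Ew_const hu1] at h7
      linarith
  have h5 : ∑ a : ZMod N, ∑ d : ZMod N, ∑ p ∈ P,
      ind (∀ i : Fin (k + 1), A ((a + p.1 * d) + (i : ℕ) * (p.2 * d))) = #P * S := by
    have : ∀ p ∈ P, ∑ d : ZMod N, ∑ a : ZMod N,
      ind (∀ i : Fin (k + 1), A ((a + p.1 * d) + (i : ℕ) * (p.2 * d))) = S := by
      intro p hp
      rw [hP, mem_product, mem_Icc] at hp
      have hp2 : (p.2 : ZMod N) ≠ 0 := by
        intro h0
        rw [ZMod.natCast_eq_zero_iff] at h0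
        have := Nat.le_of_dvd (by omega) h0
        omega
      rw [hS, sum_comm (s := univ) (t := univ) (f := fun a d => ind (∀ i : Fin (k + 1), A (a + (i : ℕ) * d)))]
      refine Eq.trans ?_ (Equiv.sum_comp (Equiv.mulLeft₀ (p.2 : ZMod N) hp2)
        (fun d => ∑ a, ind (∀ i : Fin (k + 1), A (a + (i : ℕ) * d))))
      refine sum_congr rfl fun d _ => ?_
      exact Equiv.sum_comp (Equiv.addRight ((p.1 : ZMod N) * d))
        (fun a => ind (∀ i : Fin (k + 1), A (a + (i : ℕ) * ((p.2 : ZMod N) * d))))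
    rw [sum_comm]
    simp only [sum_comm (s := univ) (t := P)]
    rw [sum_congr rfl this]
    simp
  have h6 : δ / 4 * (N : ℝ) ^ 2 ≤ #P * S := by
    have := h3.trans (sum_le_sum fun a _ => sum_le_sum fun d _ => h4 a d)
    simp only [sum_add_distrib] at this
    rw [h5] at this
    simp only [sum_const, card_univ, ZMod.card, nsmul_eq_mul] at this
    nlinarith
  refine le_trans ?_ h1
  have hS0 : 0 ≤ S := sum_nonneg fun a _ => sum_nonneg fun d _ => ind_nonneg _
  have h7 : δ / 4 * (N : ℝ) ^ 2 / (#P + 1) ≤ S := by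
    rw [div_le_iff₀ (by positivity)]
    nlinarith
  calc δ / 4 / (#P + 1) * (δ / 2) ^ (k + 1) * (N : ℝ) ^ 2
      = (δ / 2) ^ (k + 1) * (δ / 4 * (N : ℝ) ^ 2 / (#P + 1)) := by ring
    _ ≤ (δ / 2) ^ (k + 1) * S := by gcongr
end GT

namespace GT
open Finset Function
open scoped BigOperators

set_option linter.unusedSectionVars false

/-! ### Averages and generalised Cauchy–Schwarz -/

section averages
variable {ι X : Type} [Fintype ι] [DecidableEq ι] [Fintype X] [Nonempty X]

/-- `g` does not depend on the coordinate `j`. -/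
def Indep (j : ι) (g : (ι → X) → ℝ) : Prop := ∀ x b, g (update x j b) = g x

/-- The pair consisting of a point and a new value for its `j`-th coordinate can be exchanged. -/
lemma expect_swap (j : ι) (G : (ι → X) → X → ℝ) :
    𝔼 x : ι → X, 𝔼 b : X, G x b = 𝔼 x : ι → X, 𝔼 b : X, G (update x j b) (x j) := by
  have h : ∀ G : (ι → X) → X → ℝ, 𝔼 x, 𝔼 b, G x b = 𝔼 p ∈ univ ×ˢ univ, G p.1 p.2 :=
    fun G => (expect_product' univ univ G).symm
  rw [h G, h fun x b => G (update x j b) (x j)]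
  refine expect_nbij' (fun p => (update p.1 j p.2, p.1 j)) (fun p => (update p.1 j p.2, p.1 j))
    ?_ ?_ ?_ ?_ ?_ <;> simp

lemma expect_update (j : ι) (F : (ι → X) → ℝ) :
    𝔼 x : ι → X, 𝔼 b : X, F (update x j b) = 𝔼 x, F x := by
  have := expect_swap j (fun x (_ : X) => F x)
  rw [← this]
  simp

/-- Averaging one factor over the coordinate `j` when the other does not depend on it. -/
lemma expect_fold {j : ι} {u : (ι → X) → ℝ} (hu : Indep j u) (F : (ι → X) → ℝ) :
    𝔼 x, u x * 𝔼 b, F (update x j b) = 𝔼 x, u x * F x := by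
  rw [← expect_update j (fun x => u x * F x)]
  refine expect_congr rfl fun x _ => ?_
  rw [mul_expect]
  refine expect_congr rfl fun b _ => ?_
  rw [hu]

lemma expect_eval (j : ι) (F : X → ℝ) : 𝔼 x : ι → X, F (x j) = 𝔼 b, F b := by
  rw [← expect_update j (fun x : ι → X => F (x j))]
  simp

lemma expect_eval' (j : ι) (F : (ι → X) → X → ℝ) (hF : ∀ x b c, F (update x j c) b = F x b) :
    𝔼 x : ι → X, 𝔼 b, F x b = 𝔼 x : ι → X, F x (x j) := by
  rw [expect_swap j]
  simp [hF]

lemma Indep.avg (j : ι) (F : (ι → X) → ℝ) : Indep j (fun x => 𝔼 b, F (update x j b)) := by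
  intro x b; simp

lemma Indep.mul {j : ι} {u v : (ι → X) → ℝ} (hu : Indep j u) (hv : Indep j v) :
    Indep j (fun x => u x * v x) := by
  intro x b; simp only [hu x b, hv x b]

lemma abs_expect_le {α : Type*} [Fintype α] (F : α → ℝ) : |𝔼 x, F x| ≤ 𝔼 x, |F x| := by
  simpa [Real.norm_eq_abs] using
    RCLike.norm_expect_le (K := ℝ) (s := (univ : Finset α)) (f := F)

lemma expect_mono {α : Type*} [Fintype α] {F G : α → ℝ} (h : ∀ x, F x ≤ G x) :
    𝔼 x, F x ≤ 𝔼 x, G x := expect_le_expect fun x _ => h x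

lemma expect_nonneg' {α : Type*} [Fintype α] {F : α → ℝ} (h : ∀ x, 0 ≤ F x) :
    0 ≤ 𝔼 x, F x := expect_nonneg fun x _ => h x

/-- Cauchy–Schwarz for averages. -/
lemma expect_cs {α : Type*} [Fintype α] (F G : α → ℝ) :
    (𝔼 x, F x * G x) ^ 2 ≤ (𝔼 x, F x ^ 2) * 𝔼 x, G x ^ 2 := by
  simp only [Fintype.expect_eq_sum_div_card, div_pow, div_mul_div_comm, ← sq]
  gcongr
  exact sum_mul_sq_le_sq_mul_sq univ F G

/-- Weighted Cauchy–Schwarz for averages. -/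
lemma expect_cs_weight {α : Type*} [Fintype α] {W F G : α → ℝ} (hW : ∀ x, |F x| ≤ W x) :
    (𝔼 x, F x * G x) ^ 2 ≤ (𝔼 x, W x) * 𝔼 x, W x * G x ^ 2 := by
  have hW0 : ∀ x, 0 ≤ W x := fun x => (abs_nonneg _).trans (hW x)
  have h1 : |𝔼 x, F x * G x| ≤ 𝔼 x, √(W x) * (√(W x) * |G x|) := by
    refine (abs_expect_le _).trans (expect_mono fun x => ?_)
    rw [abs_mul, ← mul_assoc, Real.mul_self_sqrt (hW0 x)]
    exact mul_le_mul_of_nonneg_right (hW x) (abs_nonneg _)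
  have h2 := expect_cs (fun x => √(W x)) (fun x => √(W x) * |G x|)
  simp only [mul_pow, sq_abs, Real.sq_sqrt (hW0 _)] at h2
  calc (𝔼 x, F x * G x) ^ 2 = |𝔼 x, F x * G x| ^ 2 := (sq_abs _).symm
    _ ≤ (𝔼 x, √(W x) * (√(W x) * |G x|)) ^ 2 := by gcongr
    _ ≤ _ := h2

end averages

section mix
variable {ι X : Type} [DecidableEq ι]

/-- The point with the coordinates of `x'` on `τ` and those of `x` elsewhere. -/
def mix (τ : Finset ι) (x x' : ι → X) : ι → X := fun i => if i ∈ τ then x' i else x i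

lemma mix_insert {j : ι} {τ : Finset ι} (h : j ∉ τ) (x x' : ι → X) :
    mix (insert j τ) x x' = mix τ (update x j (x' j)) x' := by
  funext i
  by_cases hi : i = j
  · subst hi; simp [mix, h]
  · simp [mix, hi]

lemma mix_insert' {j : ι} {τ : Finset ι} (x x' : ι → X) :
    mix (insert j τ) x x' = update (mix τ x x') j (x' j) := by
  funext i
  by_cases hi : i = j
  · subst hi; simp [mix]
  · simp [mix, hi]

lemma mix_update_left {j : ι} {τ : Finset ι} (h : j ∉ τ) (x x' : ι → X) (b : X) :
    mix τ (update x j b) x' = update (mix τ x x') j b := by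
  funext i
  by_cases hi : i = j
  · subst hi; simp [mix, h]
  · simp [mix, hi]

lemma mix_update_right {j : ι} {τ : Finset ι} (h : j ∉ τ) (x x' : ι → X) (b : X) :
    mix τ x (update x' j b) = mix τ x x' := by
  funext i
  by_cases hi : i = j
  · subst hi; simp [mix, h]
  · simp [mix, hi]

lemma mix_empty (x x' : ι → X) : mix ∅ x x' = x := by
  funext i; simp [mix]

end mix

/-- The linear forms condition: averages of products of distinct weights at the vertices of a
combinatorial cube are within `ε` of `1`. -/
def LF {ι X : Type} [Fintype ι] [DecidableEq ι] [Fintype X] (ν : ι → (ι → X) → ℝ) (ε : ℝ) :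
    Prop :=
  ∀ T : ι → Finset (Finset ι), (∀ j, ∀ τ ∈ T j, j ∉ τ) →
    |𝔼 x : ι → X, 𝔼 x' : ι → X, ∏ j, ∏ τ ∈ T j, ν j (mix τ x x') - 1| ≤ ε

section GCS
variable {ι X : Type} [Fintype ι] [DecidableEq ι] [Fintype X] [Nonempty X]

/-- The weight `ν_j(x)^{[j ∈ s]} ν_j(x with j₀-th coordinate b)^{[j ∈ t]}`. -/
def wt (ν : ι → (ι → X) → ℝ) (j0 : ι) (s t : Finset ι) (j : ι) (x : ι → X) (b : X) : ℝ :=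
  (if j ∈ s then ν j x else 1) * (if j ∈ t then ν j (update x j0 b) else 1)

/-- The Gowers-type average after Cauchy–Schwarz has been applied in the directions in `P`. -/
noncomputable def Qf (F : (ι → X) → ℝ) (H h : ι → (ι → X) → X → ℝ) (j0 : ι) (P : Finset ι) : ℝ :=
  𝔼 x : ι → X, 𝔼 x' : ι → X, (∏ τ ∈ P.powerset, F (mix τ x x')) *
    ((∏ j ∈ P, ∏ τ ∈ (P.erase j).powerset, H j (mix τ x x') (x' j0)) *
      ∏ j ∈ (univ.erase j0) \ P, ∏ τ ∈ P.powerset, h j (mix τ x x') (x' j0))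


lemma prod_powerset_insert_mix {j : ι} {P : Finset ι} (hj : j ∉ P) (f : (ι → X) → ℝ)
    (x x' : ι → X) : ∏ τ ∈ (insert j P).powerset, f (mix τ x x') =
      (∏ τ ∈ P.powerset, f (mix τ x x')) *
        ∏ τ ∈ P.powerset, f (mix τ (update x j (x' j)) x') := by
  rw [prod_powerset_insert hj]
  congr 1
  refine prod_congr rfl fun τ hτ => ?_
  rw [mix_insert (fun h => hj (mem_powerset.1 hτ h))]

/-- One application of Cauchy–Schwarz. -/
lemma Qf_step (F : (ι → X) → ℝ) (H h : ι → (ι → X) → X → ℝ) (j0 : ι)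
    (hH : ∀ j, j ≠ j0 → ∀ b, Indep j (fun x => H j x b))
    (hh : ∀ j, j ≠ j0 → ∀ b, Indep j (fun x => h j x b))
    (hhH : ∀ j, j ≠ j0 → ∀ x b, |h j x b| ≤ H j x b) {P : Finset ι} {j : ι}
    (hj0 : j ≠ j0) (hj : j ∉ P) :
    Qf F H h j0 P ^ 2 ≤
      (𝔼 x : ι → X, 𝔼 x' : ι → X, ∏ τ ∈ P.powerset, H j (mix τ x x') (x' j0)) *
        Qf F H h j0 (insert j P) := by
  have hτ : ∀ {τ}, τ ∈ P.powerset → j ∉ τ := fun hτ h => hj (mem_powerset.1 hτ h)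
  set A : (ι → X) → (ι → X) → ℝ := fun x x' => ∏ τ ∈ P.powerset, h j (mix τ x x') (x' j0) with hA
  set W : (ι → X) → (ι → X) → ℝ := fun x x' => ∏ τ ∈ P.powerset, H j (mix τ x x') (x' j0) with hW
  set G : (ι → X) → (ι → X) → ℝ := fun x x' => (∏ τ ∈ P.powerset, F (mix τ x x')) *
    ((∏ i ∈ P, ∏ τ ∈ (P.erase i).powerset, H i (mix τ x x') (x' j0)) *
      ∏ i ∈ (univ.erase j0) \ (insert j P), ∏ τ ∈ P.powerset, h i (mix τ x x') (x' j0)) with hG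
  have hAj : ∀ x', Indep j (fun x => A x x') := by
    intro x' x b
    refine prod_congr rfl fun τ ht => ?_
    rw [mix_update_left (hτ ht)]
    exact hh j hj0 _ _ _
  have hWj : ∀ x', Indep j (fun x => W x x') := by
    intro x' x b
    refine prod_congr rfl fun τ ht => ?_
    rw [mix_update_left (hτ ht)]
    exact hH j hj0 _ _ _
  have hGj : ∀ x x' b, G x (update x' j b) = G x x' := by
    intro x x' b
    have hj0' : update x' j b j0 = x' j0 := update_of_ne hj0.symm _ _
    simp only [hG, hj0']
    congr 1
    · exact prod_congr rfl fun τ ht => by rw [mix_update_right (hτ ht)]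
    · congr 1
      · refine prod_congr rfl fun i _ => prod_congr rfl fun τ ht => ?_
        rw [mix_update_right (hτ (powerset_mono.2 (erase_subset _ _) ht))]
      · exact prod_congr rfl fun i _ => prod_congr rfl fun τ ht => by
          rw [mix_update_right (hτ ht)]
  have hWj' : ∀ x x' b, W x (update x' j b) = W x x' := by
    intro x x' b
    have hj0' : update x' j b j0 = x' j0 := update_of_ne hj0.symm _ _
    simp only [hW, hj0']
    exact prod_congr rfl fun τ ht => by rw [mix_update_right (hτ ht)]
  have hmem : j ∈ (univ.erase j0) \ P := by simp [hj0, hj]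
  have hQ : Qf F H h j0 P = 𝔼 x', 𝔼 x, A x x' * G x x' := by
    rw [Qf, expect_comm]
    refine expect_congr rfl fun x' _ => expect_congr rfl fun x _ => ?_
    rw [← mul_prod_erase _ _ hmem, ← sdiff_insert]
    simp only [hA, hG]
    ring
  have hQ2 : Qf F H h j0 P = 𝔼 p : (ι → X) × (ι → X),
      A p.2 p.1 * 𝔼 b, G (update p.2 j b) p.1 := by
    rw [hQ, ← univ_product_univ, expect_product]
    exact expect_congr rfl fun x' _ => (expect_fold (hAj x') (fun x => G x x')).symm
  rw [hQ2]
  refine (expect_cs_weight (W := fun p : (ι → X) × (ι → X) => W p.2 p.1) fun p => ?_).trans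
    (le_of_eq ?_)
  · simp only [hA, hW, abs_prod]
    exact prod_le_prod (fun _ _ => abs_nonneg _) fun τ _ => hhH j hj0 _ _
  congr 1
  · rw [← univ_product_univ, expect_product, expect_comm]
  · rw [← univ_product_univ, expect_product, Qf]
    -- the square of the inner average becomes an average over `x j` and `x' j`
    have h1 : ∀ x' : ι → X, 𝔼 x, W x x' * (𝔼 b, G (update x j b) x') ^ 2 =
        𝔼 x, 𝔼 b, W x x' * (G x x' * G (update x j b) x') := by
      intro x'
      have h2 := expect_fold (j := j) (u := fun x => W x x' * 𝔼 b, G (update x j b) x')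
        ((hWj x').mul (Indep.avg j fun x => G x x')) (fun x => G x x')
      calc _ = 𝔼 x, (W x x' * 𝔼 b, G (update x j b) x') * 𝔼 b, G (update x j b) x' :=
            expect_congr rfl fun x _ => by ring
        _ = _ := h2
        _ = _ := expect_congr rfl fun x _ => by
            rw [mul_assoc, mul_comm (𝔼 b, G (update x j b) x') , mul_expect, mul_expect]
    simp only [h1]
    rw [expect_comm]
    refine expect_congr rfl fun x _ => ?_
    rw [expect_eval' j (fun x' b => W x x' * (G x x' * G (update x j b) x'))]
    · refine expect_congr rfl fun x' _ => ?_
      rw [prod_powerset_insert_mix hj, prod_insert hj, erase_insert hj]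
      have e1 : ∏ i ∈ P, ∏ τ ∈ ((insert j P).erase i).powerset, H i (mix τ x x') (x' j0) =
          (∏ i ∈ P, ∏ τ ∈ (P.erase i).powerset, H i (mix τ x x') (x' j0)) *
          ∏ i ∈ P, ∏ τ ∈ (P.erase i).powerset, H i (mix τ (update x j (x' j)) x') (x' j0) := by
        rw [← prod_mul_distrib]
        refine prod_congr rfl fun i hi => ?_
        have hij : i ≠ j := fun h => hj (h ▸ hi)
        rw [erase_insert_of_ne hij.symm]
        exact prod_powerset_insert_mix (fun h => hj (mem_of_mem_erase h))
          (fun z => H i z (x' j0)) x x'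
      have e2 : ∏ i ∈ (univ.erase j0) \ (insert j P), ∏ τ ∈ (insert j P).powerset,
          h i (mix τ x x') (x' j0) =
          (∏ i ∈ (univ.erase j0) \ (insert j P), ∏ τ ∈ P.powerset, h i (mix τ x x') (x' j0)) *
          ∏ i ∈ (univ.erase j0) \ (insert j P), ∏ τ ∈ P.powerset,
            h i (mix τ (update x j (x' j)) x') (x' j0) := by
        rw [← prod_mul_distrib]
        exact prod_congr rfl fun i _ =>
          prod_powerset_insert_mix hj (fun z => h i z (x' j0)) x x'
      rw [e1, e2]
      simp only [hW, hG]
      ring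
    · intro x' b c
      simp only [hWj', hGj]

end GCS
end GT

namespace GT
open Finset Function
open scoped BigOperators

set_option linter.unusedSectionVars false

/-! ### Systems of pseudorandom weights -/

/-- A system of pseudorandom weights: `ν j` is nonnegative, does not depend on the `j`-th
coordinate, and the linear forms condition holds with error `ε`. -/
structure PR {ι X : Type} [Fintype ι] [DecidableEq ι] [Fintype X] (ν : ι → (ι → X) → ℝ) (ε : ℝ) :
    Prop where
  nonneg : ∀ j x, 0 ≤ ν j x
  indep : ∀ j, Indep j (ν j)
  lf : LF ν ε

lemma PR.mono {ι X : Type} [Fintype ι] [DecidableEq ι] [Fintype X] {ν : ι → (ι → X) → ℝ}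
    {ε ε' : ℝ} (h : PR ν ε) (he : ε ≤ ε') : PR ν ε' :=
  ⟨h.nonneg, h.indep, fun T hT => (h.lf T hT).trans he⟩

section L1
variable {ι : Type} [Fintype ι] [DecidableEq ι]

lemma wt_nonneg {X : Type} {ν : ι → (ι → X) → ℝ} (hν : ∀ j x, 0 ≤ ν j x) (j0 : ι) (s t : Finset ι)
    (j : ι) (x : ι → X) (b : X) : 0 ≤ wt ν j0 s t j x b := by
  have h1 := hν j x
  have h2 := hν j (update x j0 b)
  rw [wt]
  refine mul_nonneg ?_ ?_ <;> split_ifs <;> first | assumption | norm_num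

lemma wt_indep {X : Type} {ν : ι → (ι → X) → ℝ} (hν : ∀ j, Indep j (ν j)) {j0 : ι} (s t : Finset ι)
    {j : ι} (hj : j ≠ j0) (b : X) : Indep j (fun x => wt ν j0 s t j x b) := by
  intro x c
  simp only [wt]
  rw [hν j, update_comm hj, hν j]

/-- The cube vertices at which `ν j` occurs in a product of `wt`'s. -/
def TT (s t : Finset ι) (j0 : ι) (P : Finset ι) (j : ι) : Finset (Finset ι) :=
  (if j ∈ s then P.powerset else ∅) ∪ (if j ∈ t then P.powerset.image (insert j0) else ∅)

lemma notMem_TT {s t : Finset ι} {j0 : ι} {P : Finset ι} {j : ι} (hj : j ≠ j0) (hP : j ∉ P)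
    {τ : Finset ι} (hτ : τ ∈ TT s t j0 P j) : j ∉ τ := by
  rw [TT, mem_union] at hτ
  rcases hτ with h | h
  · split_ifs at h with h'
    · exact fun h2 => hP (mem_powerset.1 h h2)
    · simp at h
  · split_ifs at h with h'
    · obtain ⟨σ, hσ, rfl⟩ := mem_image.1 h
      rw [mem_insert, not_or]
      exact ⟨hj, fun h2 => hP (mem_powerset.1 hσ h2)⟩
    · simp at h

/-- A product of weights over a cube of points is a product of values of `ν j` over the points indexed
by `TT`, which puts it in the shape covered by the linear forms condition. -/
lemma prod_wt {X : Type} (ν : ι → (ι → X) → ℝ) {j0 : ι} (s t : Finset ι) {P : Finset ι}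
    (hP : j0 ∉ P) (j : ι) (x x' : ι → X) :
    ∏ τ ∈ P.powerset, wt ν j0 s t j (mix τ x x') (x' j0) =
      ∏ τ ∈ TT s t j0 P j, ν j (mix τ x x') := by
  have hd : Disjoint (if j ∈ s then P.powerset else ∅)
      (if j ∈ t then P.powerset.image (insert j0) else ∅) := by
    split_ifs <;> try simp only [disjoint_empty_left, disjoint_empty_right]
    rw [disjoint_left]
    intro τ h1 h2
    obtain ⟨σ, _, rfl⟩ := mem_image.1 h2
    exact hP (mem_powerset.1 h1 (mem_insert_self _ _))
  rw [TT, prod_union hd]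
  simp only [wt]
  rw [prod_mul_distrib]
  congr 1
  · split_ifs <;> simp
  · split_ifs
    · rw [prod_image]
      · exact prod_congr rfl fun τ _ => by rw [mix_insert']
      · intro a ha b hb hab
        have ha' : j0 ∉ a := fun h => hP (mem_powerset.1 ha h)
        have hb' : j0 ∉ b := fun h => hP (mem_powerset.1 hb h)
        rw [← erase_insert ha', ← erase_insert hb']
        exact congrArg (fun z => z.erase j0) hab
    · simp

/-- After Cauchy–Schwarz has been applied in all directions only weights remain. -/
lemma Qf_final {X : Type} [Fintype X] [Nonempty X] {ν : ι → (ι → X) → ℝ} {ε : ℝ}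
    (hν : PR ν ε) (j0 : ι) (s t : Finset ι) (h : ι → (ι → X) → X → ℝ) :
    |Qf (fun x => ν j0 x - 1) (wt ν j0 s t) h j0 (univ.erase j0)| ≤
      2 ^ (2 ^ (univ.erase j0).card) * ε := by
  set E := (univ : Finset ι).erase j0 with hE
  set T : Finset (Finset ι) → ι → Finset (Finset ι) :=
    fun A j => if j = j0 then A else TT s t j0 (E.erase j) j with hT
  set M : Finset (Finset ι) → ℝ := fun A =>
    𝔼 x : ι → X, 𝔼 x' : ι → X, ∏ j, ∏ τ ∈ T A j, ν j (mix τ x x') with hM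
  set sg : Finset (Finset ι) → ℝ := fun A => ∏ _τ ∈ E.powerset \ A, (-1) with hsg
  have hM1 : ∀ A ∈ E.powerset.powerset, |M A - 1| ≤ ε := by
    intro A hA
    refine hν.lf _ fun j τ hτ => ?_
    simp only [hT] at hτ
    split_ifs at hτ with hj
    · subst hj
      intro h2
      have := mem_powerset.1 (mem_powerset.1 hA hτ) h2
      simp [hE] at this
    · exact notMem_TT hj (by simp) hτ
  have hsum : ∑ A ∈ E.powerset.powerset, sg A = 0 := by
    have := prod_add (fun _ => (1:ℝ)) (fun _ => (-1:ℝ)) E.powerset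
    simp only [prod_const_one, one_mul] at this
    rw [← this]
    exact prod_eq_zero (mem_powerset.2 (empty_subset E)) (by norm_num)
  have hQ : Qf (fun x => ν j0 x - 1) (wt ν j0 s t) h j0 E =
      ∑ A ∈ E.powerset.powerset, sg A * M A := by
    have key : ∀ x x' : ι → X, (∏ τ ∈ E.powerset, (ν j0 (mix τ x x') - 1)) *
        ((∏ j ∈ E, ∏ τ ∈ (E.erase j).powerset, wt ν j0 s t j (mix τ x x') (x' j0)) *
          ∏ j ∈ E \ E, ∏ τ ∈ E.powerset, h j (mix τ x x') (x' j0)) =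
        ∑ A ∈ E.powerset.powerset, sg A * ∏ j, ∏ τ ∈ T A j, ν j (mix τ x x') := by
      intro x x'
      rw [Finset.sdiff_self, prod_empty, mul_one]
      simp only [sub_eq_add_neg]
      rw [prod_add, sum_mul]
      refine sum_congr rfl fun A _ => ?_
      rw [← mul_prod_erase univ _ (mem_univ j0)]
      have e1 : T A j0 = A := by simp [hT]
      rw [e1]
      have e2 : ∏ j ∈ E, ∏ τ ∈ (E.erase j).powerset, wt ν j0 s t j (mix τ x x') (x' j0) =
          ∏ j ∈ E, ∏ τ ∈ T A j, ν j (mix τ x x') := by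
        refine prod_congr rfl fun j hj => ?_
        have hj' : j ≠ j0 := ne_of_mem_erase hj
        rw [prod_wt ν s t (by simp [hE]) j x x']
        simp [hT, hj']
      rw [e2]
      simp only [hsg]
      ring
    rw [Qf]
    simp only [← hE, key]
    simp only [hM, expect_sum_comm, ← mul_expect]
  rw [hQ]
  have : ∑ A ∈ E.powerset.powerset, sg A * M A =
      ∑ A ∈ E.powerset.powerset, sg A * (M A - 1) := by
    simp only [mul_sub, sum_sub_distrib, mul_one, hsum, sub_zero]
  rw [this]
  calc _ ≤ ∑ A ∈ E.powerset.powerset, |sg A * (M A - 1)| := abs_sum_le_sum_abs _ _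
    _ ≤ ∑ _A ∈ E.powerset.powerset, ε := by
        refine sum_le_sum fun A hA => ?_
        rw [abs_mul]
        have : |sg A| = 1 := by simp [hsg]
        rw [this, one_mul]
        exact hM1 A hA
    _ = _ := by simp [card_powerset]

/-- The averages `Qf` are small for pseudorandom `ν`, by induction on the number `n` of directions
in which Cauchy–Schwarz has not yet been applied, starting from `Qf_final`. -/
lemma Qf_small (n : ℕ) : ∀ η > 0, ∃ ε > 0, ∀ (X : Type) [Fintype X] [Nonempty X]
    (ν : ι → (ι → X) → ℝ), PR ν ε → ∀ (j0 : ι) (s t : Finset ι) (h : ι → (ι → X) → X → ℝ),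
    (∀ j, j ≠ j0 → ∀ b, Indep j (fun x => h j x b)) →
    (∀ j, j ≠ j0 → ∀ x b, |h j x b| ≤ wt ν j0 s t j x b) →
    ∀ P ⊆ univ.erase j0, (univ.erase j0 \ P).card = n →
    |Qf (fun x => ν j0 x - 1) (wt ν j0 s t) h j0 P| ≤ η := by
  induction n with
  | zero =>
    intro η hη
    refine ⟨η / 2 ^ (2 ^ Fintype.card ι), by positivity, ?_⟩
    intro X _ _ ν hν j0 s t h _ _ P hP hn
    have hPE : P = univ.erase j0 :=
      hP.antisymm (sdiff_eq_empty_iff_subset.1 (card_eq_zero.1 hn))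
    subst hPE
    refine (Qf_final hν j0 s t h).trans ?_
    rw [mul_div_assoc', div_le_iff₀ (by positivity), mul_comm]
    gcongr
    · norm_num
    · norm_num
    · exact card_le_univ _
  | succ n ih =>
    intro η hη
    obtain ⟨ε, hε, H⟩ := ih (η ^ 2 / 2) (by positivity)
    refine ⟨min 1 ε, by positivity, ?_⟩
    intro X _ _ ν hν j0 s t h hh hh' P hP hn
    obtain ⟨j, hj⟩ : (univ.erase j0 \ P).Nonempty := card_pos.1 (by omega)
    rw [mem_sdiff, mem_erase] at hj
    obtain ⟨⟨hj0, -⟩, hjP⟩ := hj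
    have hsub : insert j P ⊆ univ.erase j0 :=
      insert_subset (by simp [hj0]) hP
    have h1 := Qf_step (fun x => ν j0 x - 1) (wt ν j0 s t) h j0
      (fun j hj b => wt_indep hν.indep s t hj b) hh hh' hj0 hjP
    have h2 := H X ν (hν.mono (min_le_right _ _)) j0 s t h hh hh' (insert j P) hsub (by
      rw [sdiff_insert, card_erase_of_mem (by simp [hj0, hjP]), hn]; rfl)
    have h3 : |𝔼 x : ι → X, 𝔼 x' : ι → X,
        ∏ τ ∈ P.powerset, wt ν j0 s t j (mix τ x x') (x' j0) - 1| ≤ 1 := by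
      have hj0P : j0 ∉ P := fun h => by simpa using hP h
      have := hν.lf (fun i => if i = j then TT s t j0 P j else ∅) (by
        intro i τ hτ
        split_ifs at hτ with hi
        · rw [hi]; exact notMem_TT hj0 hjP hτ
        · simp at hτ)
      refine le_trans (le_of_eq ?_) (this.trans (min_le_left _ _))
      congr 2
      refine expect_congr rfl fun x _ => expect_congr rfl fun x' _ => ?_
      rw [prod_wt ν s t hj0P, ← mul_prod_erase univ _ (mem_univ j)]
      rw [if_pos rfl, eq_comm]
      refine (congrArg _ (prod_eq_one ?_)).trans (mul_one _)
      intro i hi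
      rw [if_neg (ne_of_mem_erase hi), prod_empty]
    rw [abs_le] at h3
    refine abs_le_of_sq_le_sq ?_ hη.le
    rw [abs_le] at h2
    have h4 : 0 ≤ 𝔼 x : ι → X, 𝔼 x' : ι → X,
        ∏ τ ∈ P.powerset, wt ν j0 s t j (mix τ x x') (x' j0) := by linarith
    nlinarith

/-- A weight may be replaced by `1` in averages against products of functions, the `j`-th of which
does not depend on the `j`-th coordinate and is dominated by `ν j` at up to two points. -/
lemma replace_weight (η : ℝ) (hη : 0 < η) : ∃ ε > 0, ∀ (X : Type) [Fintype X] [Nonempty X]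
    (ν : ι → (ι → X) → ℝ), PR ν ε → ∀ (j0 : ι) (s t : Finset ι) (h : ι → (ι → X) → X → ℝ),
    (∀ j, j ≠ j0 → ∀ b, Indep j (fun x => h j x b)) →
    (∀ j, j ≠ j0 → ∀ x b, |h j x b| ≤ wt ν j0 s t j x b) →
    |𝔼 x, 𝔼 b, (ν j0 x - 1) * ∏ j ∈ univ.erase j0, h j x b| ≤ η := by
  obtain ⟨ε, hε, H⟩ := Qf_small (ι := ι) (Fintype.card ι - 1) η hη
  refine ⟨ε, hε, ?_⟩
  intro X _ _ ν hν j0 s t h hh hh'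
  have := H X ν hν j0 s t h hh hh' ∅ (empty_subset _) (by simp)
  refine le_trans (le_of_eq ?_) this
  congr 1
  rw [Qf]
  refine expect_congr rfl fun x _ => ?_
  rw [← expect_eval j0]
  refine expect_congr rfl fun x' _ => ?_
  simp [mix_empty]

end L1
end GT

namespace GT
open Finset Function
open scoped BigOperators

set_option linter.unusedSectionVars false

/-! ### The counting lemma -/

section counting
variable {ι : Type} [Fintype ι] [DecidableEq ι]

/-- `F` has cut norm at most `ε` in direction `j`: it does not correlate with products of
`[0, 1]`-valued functions, the `i`-th of which does not depend on the `i`-th coordinate. -/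
def Cut {X : Type} [Fintype X] (j : ι) (F : (ι → X) → ℝ) (ε : ℝ) : Prop :=
  ∀ u : ι → (ι → X) → ℝ, (∀ i, i ≠ j → Indep i (u i)) → (∀ i x, 0 ≤ u i x) → (∀ i x, u i x ≤ 1) →
    |𝔼 x, F x * ∏ i ∈ univ.erase j, u i x| ≤ ε

lemma Cut.mono {X : Type} [Fintype X] {j : ι} {F : (ι → X) → ℝ} {ε ε' : ℝ} (h : Cut j F ε)
    (he : ε ≤ ε') : Cut j F ε' := fun u h1 h2 h3 => (h u h1 h2 h3).trans he

/-- The average over the `j`-th coordinate of the product of the functions other than `g j`. -/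
noncomputable def slice {X : Type} [Fintype X] (j : ι) (g : ι → (ι → X) → ℝ) (x : ι → X) : ℝ :=
  𝔼 b, ∏ i ∈ univ.erase j, g i (update x j b)

section
variable {X : Type} [Fintype X] [Nonempty X]

lemma slice_indep (j : ι) (g : ι → (ι → X) → ℝ) : Indep j (slice j g) := by
  intro x b
  simp [slice]

lemma fold_slice {j : ι} {u : (ι → X) → ℝ} (hu : Indep j u) (g : ι → (ι → X) → ℝ) :
    𝔼 x, u x * slice j g x = 𝔼 x, u x * ∏ i ∈ univ.erase j, g i x :=
  expect_fold hu fun x => ∏ i ∈ univ.erase j, g i x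

lemma fold_slice_slice {j : ι} {u : (ι → X) → ℝ} (hu : Indep j u) (p q : ι → (ι → X) → ℝ) :
    𝔼 x, u x * (slice j p x * slice j q x) =
      𝔼 x, 𝔼 b, u x * ∏ i ∈ univ.erase j, (p i x * q i (update x j b)) := by
  have h1 := fold_slice (hu.mul (slice_indep j q)) p
  calc _ = 𝔼 x, u x * slice j q x * slice j p x := expect_congr rfl fun x _ => by ring
    _ = _ := h1
    _ = _ := expect_congr rfl fun x _ => by
        rw [slice, mul_expect, expect_mul]
        refine expect_congr rfl fun b _ => ?_
        rw [prod_mul_distrib]; ring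

lemma slice_nonneg {j : ι} {g : ι → (ι → X) → ℝ} (hg : ∀ i x, 0 ≤ g i x) (x : ι → X) :
    0 ≤ slice j g x := expect_nonneg' fun _ => prod_nonneg fun i _ => hg i _

lemma slice_mono {j : ι} {g h : ι → (ι → X) → ℝ} (hg : ∀ i x, 0 ≤ g i x)
    (hgh : ∀ i, i ≠ j → ∀ x, g i x ≤ h i x) (x : ι → X) : slice j g x ≤ slice j h x :=
  expect_mono fun _ => prod_le_prod (fun i _ => hg i _) fun i hi => hgh i (ne_of_mem_erase hi) _

lemma slice_le_one {j : ι} {g : ι → (ι → X) → ℝ} (hg : ∀ i x, 0 ≤ g i x)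
    (hg1 : ∀ i x, g i x ≤ 1) (x : ι → X) : slice j g x ≤ 1 := by
  refine (slice_mono (h := fun _ _ => 1) hg (fun i _ x => hg1 i x) x).trans (le_of_eq ?_)
  simp [slice]

/-- Counting for bounded functions, by telescoping. -/
lemma counting_bounded {ε : ℝ} {g h : ι → (ι → X) → ℝ} (hgi : ∀ j, Indep j (g j))
    (hhi : ∀ j, Indep j (h j)) (hg0 : ∀ j x, 0 ≤ g j x) (hg1 : ∀ j x, g j x ≤ 1)
    (hh0 : ∀ j x, 0 ≤ h j x) (hh1 : ∀ j x, h j x ≤ 1)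
    (hc : ∀ j, Cut j (fun x => g j x - h j x) ε) :
    |(𝔼 x, ∏ j, g j x) - 𝔼 x, ∏ j, h j x| ≤ Fintype.card ι * ε := by
  have key : ∀ A : Finset ι, |(𝔼 x, ∏ j, (if j ∈ A then g j x else h j x)) - 𝔼 x, ∏ j, h j x| ≤
      A.card * ε := by
    intro A
    induction A using Finset.induction_on with
    | empty => simp
    | insert j A hj ih =>
      have h1 := hc j (fun i => if i ∈ A then g i else h i)
        (fun i _ => by split_ifs; exacts [hgi i, hhi i])
        (fun i x => by split_ifs; exacts [hg0 i x, hh0 i x])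
        (fun i x => by split_ifs; exacts [hg1 i x, hh1 i x])
      have h2 : 𝔼 x, (g j x - h j x) * ∏ i ∈ univ.erase j, (if i ∈ A then g i else h i) x =
          (𝔼 x, ∏ i, (if i ∈ insert j A then g i x else h i x)) -
            𝔼 x, ∏ i, (if i ∈ A then g i x else h i x) := by
        rw [← expect_sub_distrib]
        refine expect_congr rfl fun x _ => ?_
        rw [← mul_prod_erase univ (fun i => if i ∈ insert j A then g i x else h i x) (mem_univ j),
          ← mul_prod_erase univ (fun i => if i ∈ A then g i x else h i x) (mem_univ j), sub_mul]
        have e : ∏ i ∈ univ.erase j, (if i ∈ insert j A then g i x else h i x) =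
            ∏ i ∈ univ.erase j, (if i ∈ A then g i x else h i x) :=
          prod_congr rfl fun i hi => by simp [ne_of_mem_erase hi]
        have e' : ∏ i ∈ univ.erase j, (if i ∈ A then g i else h i) x =
            ∏ i ∈ univ.erase j, (if i ∈ A then g i x else h i x) :=
          prod_congr rfl fun i hi => by split_ifs <;> rfl
        rw [e, e']
        simp [hj]
      rw [h2] at h1
      rw [card_insert_of_notMem hj, Nat.cast_succ, add_mul, one_mul, add_comm]
      refine (abs_sub_le _ (𝔼 x, ∏ i, (if i ∈ A then g i x else h i x)) _).trans ?_
      exact add_le_add h1 ih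
  simpa using key univ

/-- The averages of `S`-weights over a coordinate are close to `1` in mean square. -/
lemma slice_weight_sq {ε : ℝ} {ν : ι → (ι → X) → ℝ} (hν : PR ν ε) {j0 : ι} {S : Finset ι}
    (hS : j0 ∉ S) (c : ℝ) : ∃ a, |a - (1 + c) ^ 2| ≤ ε * (1 + 2 * |c|) ∧
    𝔼 x, (slice j0 (fun i x => if i ∈ S then ν i x else 1) x + c) ^ 2 = a := by
  refine ⟨_, ?_, rfl⟩
  set p : ι → (ι → X) → ℝ := fun i x => if i ∈ S then ν i x else 1 with hp
  have hpi : ∀ x, ∏ i, p i x = ∏ i ∈ univ.erase j0, p i x := by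
    intro x
    rw [← mul_prod_erase univ _ (mem_univ j0)]
    simp [hp, hS]
  have h1 : |(𝔼 x, slice j0 p x) - 1| ≤ ε := by
    have e1 : 𝔼 x, slice j0 p x = 𝔼 x, ∏ i, p i x := by
      have := fold_slice (j := j0) (u := fun _ : ι → X => (1:ℝ)) (fun _ _ => rfl) p
      simpa only [one_mul, ← hpi] using this
    have := hν.lf (fun i => if i ∈ S then {∅} else ∅) (by
      intro j τ hτ
      split_ifs at hτ
      · rw [mem_singleton.1 hτ]; simp
      · simp at hτ)
    rw [e1]
    refine le_trans (le_of_eq ?_) this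
    congr 2
    refine expect_congr rfl fun x _ => ?_
    rw [eq_comm]
    refine (expect_congr rfl fun x' _ => ?_).trans (expect_const univ_nonempty _)
    refine prod_congr rfl fun i _ => ?_
    simp only [hp]
    split_ifs <;> simp [mix_empty]
  have h2 : |(𝔼 x, slice j0 p x * slice j0 p x) - 1| ≤ ε := by
    have e1 := fold_slice_slice (j := j0) (u := fun _ : ι → X => (1:ℝ)) (fun _ _ => rfl) p p
    simp only [one_mul] at e1
    have := hν.lf (fun i => if i ∈ S then {∅, {j0}} else ∅) (by
      intro j τ hτ
      split_ifs at hτ with hj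
      · rw [mem_insert, mem_singleton] at hτ
        rcases hτ with rfl | rfl
        · simp
        · rw [mem_singleton]; rintro rfl; exact hS hj
      · simp at hτ)
    rw [e1]
    refine le_trans (le_of_eq ?_) this
    congr 2
    refine expect_congr rfl fun x _ => ?_
    rw [← expect_eval j0]
    refine expect_congr rfl fun x' _ => ?_
    rw [← mul_prod_erase univ _ (mem_univ j0)]
    simp only [hS, if_false, prod_empty, one_mul]
    refine prod_congr rfl fun i _ => ?_
    simp only [hp]
    split_ifs
    · rw [prod_pair (by simp), mix_empty]
      have := mix_insert' (j := j0) (τ := ∅) x x'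
      rw [mix_empty] at this
      rw [← this]; rfl
    · simp
  have e : 𝔼 x, (slice j0 p x + c) ^ 2 =
      (𝔼 x, slice j0 p x * slice j0 p x) + 2 * c * (𝔼 x, slice j0 p x) + c ^ 2 := by
    rw [mul_expect, ← expect_add_distrib]
    have : c ^ 2 = 𝔼 _x : ι → X, c ^ 2 := (expect_const univ_nonempty _).symm
    rw [this, ← expect_add_distrib]
    exact expect_congr rfl fun x _ => by ring
  rw [e]
  calc _ = |((𝔼 x, slice j0 p x * slice j0 p x) - 1) + 2 * c * ((𝔼 x, slice j0 p x) - 1)| := by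
        congr 1; ring
    _ ≤ |(𝔼 x, slice j0 p x * slice j0 p x) - 1| + |2 * c * ((𝔼 x, slice j0 p x) - 1)| :=
        abs_add_le _ _
    _ ≤ ε + 2 * |c| * ε := by
        rw [abs_mul, abs_mul, abs_two]
        gcongr
    _ = _ := by ring

end

/-- A bound for a product of two slices against `ν j0 - 1`. -/
lemma replace_weight_slice (η : ℝ) (hη : 0 < η) : ∃ ε > 0, ∀ (X : Type) [Fintype X] [Nonempty X]
    (ν : ι → (ι → X) → ℝ), PR ν ε → ∀ (j0 : ι) (s t : Finset ι) (p q : ι → (ι → X) → ℝ),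
    (∀ j, Indep j (p j)) → (∀ j, Indep j (q j)) → (∀ j x, 0 ≤ p j x) → (∀ j x, 0 ≤ q j x) →
    (∀ j x, p j x ≤ if j ∈ s then ν j x else 1) → (∀ j x, q j x ≤ if j ∈ t then ν j x else 1) →
    |𝔼 x, (ν j0 x - 1) * (slice j0 p x * slice j0 q x)| ≤ η := by
  obtain ⟨ε, hε, H⟩ := replace_weight (ι := ι) η hη
  refine ⟨ε, hε, ?_⟩
  intro X _ _ ν hν j0 s t p q hp hq hp0 hq0 hp1 hq1
  rw [fold_slice_slice (u := fun x => ν j0 x - 1) (fun x b => by simp only [hν.indep j0 x b])]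
  refine H X ν hν j0 s t (fun j x b => p j x * q j (update x j0 b)) ?_ ?_
  · intro j hj b x c
    simp only
    rw [hp j, update_comm hj, hq j]
  · intro j hj x b
    rw [abs_of_nonneg (mul_nonneg (hp0 _ _) (hq0 _ _)), wt]
    refine mul_le_mul (hp1 j x) (hq1 j _) (hq0 _ _) ((hp0 j x).trans (hp1 j x))

/-- The counting lemma: if `g j` is dominated by a pseudorandom weight and is close in cut norm to
the bounded function `h j`, the averages of the products agree up to a small error. -/
lemma counting (S : Finset ι) : ∀ η > 0, ∃ ε > 0, ∀ (X : Type) [Fintype X] [Nonempty X]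
    (ν : ι → (ι → X) → ℝ), PR ν ε → ∀ (g h : ι → (ι → X) → ℝ), (∀ j, Indep j (g j)) →
    (∀ j, Indep j (h j)) → (∀ j x, 0 ≤ g j x) → (∀ j x, g j x ≤ if j ∈ S then ν j x else 1) →
    (∀ j x, 0 ≤ h j x) → (∀ j x, h j x ≤ 1) → (∀ j, Cut j (fun x => g j x - h j x) ε) →
    |(𝔼 x, ∏ j, g j x) - 𝔼 x, ∏ j, h j x| ≤ η := by
  induction S using Finset.induction_on with
  | empty =>
    intro η hη
    refine ⟨η / (Fintype.card ι + 1), by positivity, ?_⟩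
    intro X _ _ ν _ g h hgi hhi hg0 hg1 hh0 hh1 hc
    refine (counting_bounded hgi hhi hg0 (by simpa using hg1) hh0 hh1 hc).trans ?_
    rw [mul_div_assoc', div_le_iff₀ (by positivity)]
    nlinarith
  | insert j1 S hj1 ih =>
    intro η hη
    obtain ⟨ε1, hε1, H1⟩ := replace_weight_slice (ι := ι) (η ^ 2 / 64) (by positivity)
    obtain ⟨ε2, hε2, H2⟩ := ih (η ^ 2 / 64) (by positivity)
    set ε3 := min (min 1 (η / 2)) ((η ^ 2 / 64) ^ 2 / 21) with hε3
    have hε3p : 0 < ε3 := by positivity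
    have b1 : ε3 ≤ 1 := (min_le_left _ _).trans (min_le_left _ _)
    have b2 : ε3 ≤ η / 2 := (min_le_left _ _).trans (min_le_right _ _)
    have b3 : ε3 ≤ (η ^ 2 / 64) ^ 2 / 21 := min_le_right _ _
    refine ⟨min ε1 (min ε2 ε3), by positivity, ?_⟩
    intro X _ _ ν hν g h hgi hhi hg0 hg1 hh0 hh1 hc
    have hν1 := hν.mono (min_le_left _ _)
    have hν2 := hν.mono ((min_le_right _ _).trans (min_le_left _ _))
    have hν3 := hν.mono ((min_le_right _ _).trans (min_le_right _ _))
    have hc2 := fun j => (hc j).mono ((min_le_right _ _).trans (min_le_left _ _))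
    have hc3 := fun j => (hc j).mono ((min_le_right _ _).trans (min_le_right _ _))
    have hg1S : ∀ j, j ≠ j1 → ∀ x, g j x ≤ if j ∈ S then ν j x else 1 := by
      intro j hj x
      simpa [hj] using hg1 j x
    set g' := slice j1 g with hg'
    set h' := slice j1 h with hh'
    set n' := slice j1 (fun i x => if i ∈ S then ν i x else 1) with hn'
    have g'0 : ∀ x, 0 ≤ g' x := slice_nonneg hg0
    have hlow : ∀ x, 0 ≤ h' x := slice_nonneg hh0
    have hupp : ∀ x, h' x ≤ 1 := slice_le_one hh0 hh1
    have g'n : ∀ x, g' x ≤ n' x := slice_mono hg0 hg1S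
    -- counting with the `j1`-th function replaced by the same bounded function on both sides
    have hIH : ∀ u : (ι → X) → ℝ, Indep j1 u → (∀ x, 0 ≤ u x) → (∀ x, u x ≤ 1) →
        |𝔼 x, (g' x - h' x) * u x| ≤ η ^ 2 / 64 := by
      intro u hu hu0 hu1
      have hfold : ∀ p : ι → (ι → X) → ℝ,
          𝔼 x, u x * slice j1 p x = 𝔼 x, ∏ j, update p j1 u j x := by
        intro p
        rw [fold_slice hu]
        refine expect_congr rfl fun x _ => ?_
        rw [← mul_prod_erase univ _ (mem_univ j1), update_self]
        congr 1
        exact prod_congr rfl fun j hj => by rw [update_of_ne (ne_of_mem_erase hj)]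
      have := H2 X ν hν2 (update g j1 u) (update h j1 u) ?_ ?_ ?_ ?_ ?_ ?_ ?_
      · rw [← hfold, ← hfold, ← expect_sub_distrib] at this
        refine le_trans (le_of_eq ?_) this
        congr 1
        exact expect_congr rfl fun x _ => by simp only [hg', hh']; ring
      all_goals
        intro j
        by_cases hj : j = j1
        · subst hj
          simp only [update_self]
          first
          | exact hu
          | exact hu0
          | exact hu1
          | (simp only [hj1, if_false]; exact hu1)
          | (intro v _ _ _; simpa using hε2.le)
        · simp only [update_of_ne hj]
          first
          | exact hgi j
          | exact hhi j
          | exact hg0 j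
          | exact hg1S j hj
          | exact hh0 j
          | exact hh1 j
          | exact hc2 j
    have hg'i : Indep j1 g' := slice_indep j1 g
    have hh'i : Indep j1 h' := slice_indep j1 h
    have I1 := hIH (fun x => min (g' x) 1) (fun x b => by simp only [hg'i x b])
      (fun x => le_min (g'0 x) zero_le_one) (fun x => min_le_right _ _)
    have I2 := hIH h' hh'i hlow hupp
    -- the part of `g'` above `1` is negligible
    have I3 : |𝔼 x, (g' x - h' x) * (g' x - min (g' x) 1)| ≤ η ^ 2 / 64 := by
      have k1 : |𝔼 x, (g' x - h' x) * (g' x - min (g' x) 1)| ≤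
          𝔼 x, (n' x + 1) * |n' x + -1| := by
        refine (abs_expect_le _).trans (expect_mono fun x => ?_)
        rw [abs_mul]
        refine mul_le_mul ?_ ?_ (abs_nonneg _) (by linarith [g'0 x, g'n x])
        · rw [abs_le]; constructor <;> linarith [g'0 x, g'n x, hlow x, hupp x]
        · rw [abs_of_nonneg (by linarith [min_le_left (g' x) 1])]
          rcases le_total (g' x) 1 with hx | hx
          · rw [min_eq_left hx, sub_self]; exact abs_nonneg _
          · rw [min_eq_right hx]
            exact le_trans (by linarith [g'n x]) (le_abs_self _)
      have k2 := expect_cs (fun x => n' x + 1) (fun x => |n' x + -1|)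
      simp only [sq_abs] at k2
      obtain ⟨a, ha, ea⟩ := slice_weight_sq hν3 hj1 1
      obtain ⟨c, hc', ec⟩ := slice_weight_sq hν3 hj1 (-1)
      rw [← hn'] at ea ec
      rw [ea, ec] at k2
      norm_num at ha hc'
      rw [abs_le] at ha
      have hc0 : 0 ≤ c := by rw [← ec]; exact expect_nonneg' fun x => sq_nonneg _
      have hc2 : c ≤ 3 * ε3 := by linarith [le_abs_self c]
      have ha0 : 0 ≤ a := by rw [← ea]; exact expect_nonneg' fun x => sq_nonneg _
      have k3 : a * c ≤ 7 * (3 * ε3) := mul_le_mul (by linarith) hc2 hc0 (by norm_num)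
      refine k1.trans (abs_le_of_sq_le_sq' ?_ (by positivity)).2
      linarith
    have I4 : 𝔼 x, (g' x - h' x) ^ 2 ≤ 3 * (η ^ 2 / 64) := by
      have : 𝔼 x, (g' x - h' x) ^ 2 = (𝔼 x, (g' x - h' x) * (g' x - min (g' x) 1)) +
          (𝔼 x, (g' x - h' x) * min (g' x) 1) - 𝔼 x, (g' x - h' x) * h' x := by
        rw [← expect_add_distrib, ← expect_sub_distrib]
        exact expect_congr rfl fun x _ => by ring
      rw [this]
      rw [abs_le] at I1 I2 I3
      linarith
    have hh1' : ∀ j x, h j x ≤ if j ∈ (∅ : Finset ι) then ν j x else 1 := by simpa using hh1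
    have J1 := H1 X ν hν1 j1 _ _ g g hgi hgi hg0 hg0 hg1 hg1
    have J2 := H1 X ν hν1 j1 _ _ g h hgi hhi hg0 hh0 hg1 hh1'
    have J3 := H1 X ν hν1 j1 _ _ h h hhi hhi hh0 hh0 hh1' hh1'
    rw [← hg'] at J1 J2
    rw [← hh'] at J2 J3
    have I5 : 𝔼 x, ν j1 x * (g' x - h' x) ^ 2 ≤ 7 * (η ^ 2 / 64) := by
      have : 𝔼 x, ν j1 x * (g' x - h' x) ^ 2 = (𝔼 x, (g' x - h' x) ^ 2) +
          (𝔼 x, (ν j1 x - 1) * (g' x * g' x)) - 2 * (𝔼 x, (ν j1 x - 1) * (g' x * h' x)) +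
          𝔼 x, (ν j1 x - 1) * (h' x * h' x) := by
        rw [mul_expect, ← expect_add_distrib, ← expect_sub_distrib, ← expect_add_distrib]
        exact expect_congr rfl fun x _ => by ring
      rw [this]
      rw [abs_le] at J1 J2 J3
      linarith
    have I6 : 𝔼 x, ν j1 x ≤ 2 := by
      have := hν3.lf (fun i => if i = j1 then {∅} else ∅) (by
        intro j τ hτ
        split_ifs at hτ
        · rw [mem_singleton.1 hτ]; simp
        · simp at hτ)
      have e : 𝔼 x : ι → X, 𝔼 x' : ι → X,
          ∏ j, ∏ τ ∈ (if j = j1 then {∅} else ∅ : Finset (Finset ι)), ν j (mix τ x x') =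
          𝔼 x, ν j1 x := by
        refine expect_congr rfl fun x _ => ?_
        refine (expect_congr rfl fun x' _ => ?_).trans (expect_const univ_nonempty _)
        rw [← mul_prod_erase univ _ (mem_univ j1), if_pos rfl, prod_singleton, mix_empty]
        refine (congrArg _ (prod_eq_one fun i hi => ?_)).trans (mul_one _)
        rw [if_neg (ne_of_mem_erase hi), prod_empty]
      rw [e, abs_le] at this
      linarith
    have I7 : |𝔼 x, g j1 x * (g' x - h' x)| ≤ η / 2 := by
      refine abs_le_of_sq_le_sq ?_ (by positivity)
      have hg1' : ∀ x, |g j1 x| ≤ ν j1 x := fun x => by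
        rw [abs_of_nonneg (hg0 _ _)]
        simpa using hg1 j1 x
      refine (expect_cs_weight hg1').trans ?_
      have h0 : 0 ≤ 𝔼 x, ν j1 x * (g' x - h' x) ^ 2 :=
        expect_nonneg' fun x => mul_nonneg (hν.nonneg _ _) (sq_nonneg _)
      nlinarith
    have I8 : |𝔼 x, (g j1 x - h j1 x) * ∏ j ∈ univ.erase j1, h j x| ≤ η / 2 :=
      (hc3 j1 h (fun i _ => hhi i) hh0 hh1).trans b2
    have e : (𝔼 x, ∏ j, g j x) - 𝔼 x, ∏ j, h j x =
        (𝔼 x, g j1 x * (g' x - h' x)) +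
          𝔼 x, (g j1 x - h j1 x) * ∏ j ∈ univ.erase j1, h j x := by
      simp only [mul_sub, sub_mul, expect_sub_distrib]
      rw [fold_slice (hgi j1), fold_slice (hgi j1)]
      have e1 : ∀ x, ∏ j, g j x = g j1 x * ∏ j ∈ univ.erase j1, g j x :=
        fun x => (mul_prod_erase univ (fun i => g i x) (mem_univ j1)).symm
      have e2 : ∀ x, ∏ j, h j x = h j1 x * ∏ j ∈ univ.erase j1, h j x :=
        fun x => (mul_prod_erase univ (fun i => h i x) (mem_univ j1)).symm
      simp only [e1, e2]
      ring
    rw [e]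
    refine (abs_add_le _ _).trans ?_
    linarith

end counting
end GT

namespace GT
open Finset Function
open scoped BigOperators

set_option linter.unusedSectionVars false

/-! ### The dense model theorem -/

section model
variable {G : Type} [Fintype G] [Nonempty G]

/-- Correlation bounds pass from a set of test functions to its convex hull. -/
lemma abs_expect_convexHull {D : Set (G → ℝ)} {F : G → ℝ} {ε : ℝ}
    (h : ∀ φ ∈ D, |𝔼 a, F a * φ a| ≤ ε) {φ : G → ℝ} (hφ : φ ∈ convexHull ℝ D) :
    |𝔼 a, F a * φ a| ≤ ε := by
  have hconv : Convex ℝ {φ : G → ℝ | |𝔼 a, F a * φ a| ≤ ε} := by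
    intro p hp q hq s t hs ht hst
    simp only [Set.mem_ofPred_eq] at *
    have : 𝔼 a, F a * (s • p + t • q) a = s * (𝔼 a, F a * p a) + t * 𝔼 a, F a * q a := by
      rw [mul_expect, mul_expect, ← expect_add_distrib]
      exact expect_congr rfl fun a _ => by simp; ring
    rw [this]
    calc _ ≤ |s * (𝔼 a, F a * p a)| + |t * 𝔼 a, F a * q a| := abs_add_le _ _
      _ ≤ s * ε + t * ε := by
        rw [abs_mul, abs_mul, abs_of_nonneg hs, abs_of_nonneg ht]
        gcongr
      _ = ε := by rw [← add_mul, hst, one_mul]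
  exact convexHull_min h hconv hφ

/-- If products of test functions lie in the convex hull, so do products of elements of the hull. -/
lemma convexHull_mul {D : Set (G → ℝ)} (hmul : ∀ φ ∈ D, ∀ ψ ∈ D, φ * ψ ∈ convexHull ℝ D)
    {φ ψ : G → ℝ} (hφ : φ ∈ convexHull ℝ D) (hψ : ψ ∈ convexHull ℝ D) :
    φ * ψ ∈ convexHull ℝ D := by
  have hc : ∀ χ : G → ℝ, Convex ℝ {p : G → ℝ | χ * p ∈ convexHull ℝ D} := by
    intro χ p hp q hq s t hs ht hst
    simp only [Set.mem_ofPred_eq] at *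
    have : χ * (s • p + t • q) = s • (χ * p) + t • (χ * q) := by
      rw [mul_add, mul_smul_comm, mul_smul_comm]
    rw [this]
    exact convex_convexHull ℝ D hp hq hs ht hst
  have h1 : ∀ χ ∈ D, χ * ψ ∈ convexHull ℝ D := fun χ hχ =>
    convexHull_min (t := {p : G → ℝ | χ * p ∈ convexHull ℝ D}) (fun p hp => hmul χ hχ p hp)
      (hc χ) hψ
  have h2 := convexHull_min (t := {p : G → ℝ | ψ * p ∈ convexHull ℝ D})
    (fun p hp => by simp only [Set.mem_ofPred_eq]; rw [mul_comm]; exact h1 p hp) (hc ψ) hφ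
  rw [mul_comm]
  exact h2

/-- If no bounded function is close to `f` when tested against `D`, a single element of the convex
hull of `D` witnesses this for all bounded functions (minimax). -/
lemma exists_separating {D : Set (G → ℝ)} (hsymm : ∀ φ ∈ D, -φ ∈ D) (f : G → ℝ) {η : ℝ}
    (hno : ∀ p : G → ℝ, (∀ a, 0 ≤ p a) → (∀ a, p a ≤ 1) →
      ∃ φ ∈ D, η < |𝔼 a, (f a - p a) * φ a|) :
    ∃ ψ ∈ convexHull ℝ D, ∀ p : G → ℝ, (∀ a, 0 ≤ p a) → (∀ a, p a ≤ 1) →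
      η < 𝔼 a, (f a - p a) * ψ a := by
  set K : Set (G → ℝ) := Set.Icc 0 1 with hK
  have memK : ∀ p : G → ℝ, p ∈ K ↔ (∀ a, 0 ≤ p a) ∧ ∀ a, p a ≤ 1 := by
    intro p; rfl
  have hKc : IsCompact K := by
    rw [hK, ← Set.pi_univ_Icc]
    exact isCompact_univ_pi fun _ => isCompact_Icc
  set B : (G → ℝ) → (G → ℝ) → ℝ := fun p φ => 𝔼 a, (f a - p a) * φ a with hB
  have cont1 : ∀ φ, Continuous fun p => B p φ := by
    intro φ
    simp only [hB, Fintype.expect_eq_sum_div_card]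
    fun_prop
  have cont2 : ∀ p, Continuous fun φ => B p φ := by
    intro p
    simp only [hB, Fintype.expect_eq_sum_div_card]
    fun_prop
  have aff1 : ∀ φ p q (s t : ℝ), s + t = 1 → B (s • p + t • q) φ = s * B p φ + t * B q φ := by
    intro φ p q s t hst
    simp only [hB]
    rw [mul_expect, mul_expect, ← expect_add_distrib]
    refine expect_congr rfl fun a _ => ?_
    obtain rfl : s = 1 - t := by linarith
    simp only [Pi.add_apply, Pi.smul_apply, smul_eq_mul]
    ring
  have aff2 : ∀ φ p q (s t : ℝ), s + t = 1 → B φ (s • p + t • q) = s * B φ p + t * B φ q := by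
    intro φ p q s t hst
    simp only [hB]
    rw [mul_expect, mul_expect, ← expect_add_distrib]
    refine expect_congr rfl fun a _ => ?_
    simp only [Pi.add_apply, Pi.smul_apply, smul_eq_mul]
    ring
  have hno' : ∀ p ∈ K, ∃ φ ∈ D, η < B p φ := by
    intro p hp
    obtain ⟨φ, hφ, h⟩ := hno p ((memK p).1 hp).1 ((memK p).1 hp).2
    rcases lt_abs.1 h with h | h
    · exact ⟨φ, hφ, h⟩
    · refine ⟨-φ, hsymm φ hφ, h.trans_le (le_of_eq ?_)⟩
      simp only [hB, Pi.neg_apply, mul_neg, expect_neg_distrib]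
  obtain ⟨s, hs, hsf, hcov⟩ := hKc.elim_finite_subcover_image (b := D)
    (c := fun φ => {p | η < B p φ}) (fun φ _ => isOpen_lt continuous_const (cont1 φ))
    (fun p hp => by
      obtain ⟨φ, hφ, h⟩ := hno' p hp
      exact Set.mem_biUnion hφ h)
  obtain ⟨ψ, hψ, H⟩ := Sion.exists_lt_iInf_of_lt_iInf_of_finite (X := K)
    (Y := convexHull ℝ D) (f := B) ⟨0, (memK 0).2 ⟨fun _ => le_rfl, fun _ => zero_le_one⟩⟩ hKc
    (fun φ _ => (cont1 φ).lowerSemicontinuous.lowerSemicontinuousOn _)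
    (fun φ _ r => by
      intro p hp q hq s t hs ht hst
      refine ⟨convex_Icc (0 : G → ℝ) 1 hp.1 hq.1 hs ht hst, ?_⟩
      have h1 := hp.2
      have h2 := hq.2
      simp only at h1 h2 ⊢
      rw [aff1 φ p q s t hst]
      calc _ ≤ s * r + t * r := by gcongr
        _ = r := by rw [← add_mul, hst, one_mul])
    (convex_convexHull ℝ D)
    (fun p _ => (cont2 p).upperSemicontinuous.upperSemicontinuousOn _)
    (fun φ _ r => by
      intro p hp q hq s t hs ht hst
      refine ⟨convex_convexHull ℝ D hp.1 hq.1 hs ht hst, ?_⟩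
      have h1 := hp.2
      have h2 := hq.2
      simp only at h1 h2 ⊢
      rw [aff2 φ p q s t hst]
      calc r = s * r + t * r := by rw [← add_mul, hst, one_mul]
        _ ≤ _ := by gcongr)
    (convex_Icc 0 1) hsf (hs.trans (subset_convexHull ℝ D)) (t := η)
    (fun p hp => by
      obtain ⟨φ, hφ, h⟩ := Set.mem_iUnion₂.1 (hcov hp)
      exact ⟨φ, hφ, h⟩)
  exact ⟨ψ, hψ, fun p h0 h1 => H p ((memK p).2 ⟨h0, h1⟩)⟩

end model

/-- The dense model theorem: a function dominated by a weight `ν`, which is indistinguishable from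
`1` by a family `D` of test functions whose convex hull is closed under products, is
indistinguishable by `D` from a function with values in `[0, 1]`. -/
lemma dense_model (η : ℝ) (hη : 0 < η) : ∃ ε > 0, ∀ (G : Type) [Fintype G] [Nonempty G]
    (D : Set (G → ℝ)), (1 ∈ D) → (∀ φ ∈ D, -φ ∈ D) → (∀ φ ∈ D, ∀ a, |φ a| ≤ 1) →
    (∀ φ ∈ D, ∀ ψ ∈ D, φ * ψ ∈ convexHull ℝ D) → ∀ ν f : G → ℝ, (∀ a, 0 ≤ f a) →
    (∀ a, f a ≤ ν a) → (∀ φ ∈ D, |𝔼 a, (ν a - 1) * φ a| ≤ ε) →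
    ∃ p : G → ℝ, (∀ a, 0 ≤ p a) ∧ (∀ a, p a ≤ 1) ∧
      ∀ φ ∈ D, |𝔼 a, (f a - p a) * φ a| ≤ η := by
  obtain ⟨P, hP⟩ := exists_polynomial_near_of_continuousOn (-1) 1 (fun t => max t 0)
    (by fun_prop) (η / 8) (by positivity)
  set C : ℝ := ∑ i ∈ range (P.natDegree + 1), |P.coeff i| with hC
  have hC0 : 0 ≤ C := sum_nonneg fun _ _ => abs_nonneg _
  refine ⟨min 1 (η / (8 * (C + 1))), by positivity, ?_⟩
  intro G _ _ D h1D hsymm hbd hmul ν f hf0 hfν hν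
  by_contra! hno
  obtain ⟨ψ, hψ, H⟩ := exists_separating hsymm f hno
  have hpow : ∀ i : ℕ, ψ ^ i ∈ convexHull ℝ D := by
    intro i
    induction i with
    | zero => exact subset_convexHull ℝ D (by simpa using h1D)
    | succ i ih => rw [pow_succ]; exact convexHull_mul hmul ih hψ
  have hψ1 : ∀ a, |ψ a| ≤ 1 := by
    intro a
    have hc : Convex ℝ {φ : G → ℝ | |φ a| ≤ 1} := by
      intro p hp q hq s t hs ht hst
      simp only [Set.mem_ofPred_eq, Pi.add_apply, Pi.smul_apply, smul_eq_mul] at *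
      calc _ ≤ |s * p a| + |t * q a| := abs_add_le _ _
        _ ≤ s * 1 + t * 1 := by
          rw [abs_mul, abs_mul, abs_of_nonneg hs, abs_of_nonneg ht]
          gcongr
        _ = 1 := by linarith
    exact convexHull_min (fun φ hφ => hbd φ hφ a) hc hψ
  have hε := fun i => abs_expect_convexHull hν (hpow i)
  -- the polynomial `P` applied to `ψ`
  have hPψ : |𝔼 a, (ν a - 1) * P.eval (ψ a)| ≤ η / 8 := by
    have e : 𝔼 a, (ν a - 1) * P.eval (ψ a) =
        ∑ i ∈ range (P.natDegree + 1), P.coeff i * 𝔼 a, (ν a - 1) * (ψ ^ i) a := by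
      simp only [mul_expect]
      rw [← expect_sum_comm]
      refine expect_congr rfl fun a _ => ?_
      rw [Polynomial.eval_eq_sum_range, mul_sum]
      exact sum_congr rfl fun i _ => by simp only [Pi.pow_apply]; ring
    rw [e]
    calc _ ≤ ∑ i ∈ range (P.natDegree + 1), |P.coeff i * 𝔼 a, (ν a - 1) * (ψ ^ i) a| :=
          abs_sum_le_sum_abs _ _
      _ ≤ ∑ i ∈ range (P.natDegree + 1), |P.coeff i| * (η / (8 * (C + 1))) := by
          refine sum_le_sum fun i _ => ?_
          rw [abs_mul]
          exact mul_le_mul_of_nonneg_left ((hε i).trans (min_le_right _ _)) (abs_nonneg _)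
      _ = C * (η / (8 * (C + 1))) := by rw [← sum_mul]
      _ ≤ η / 8 := by
          rw [mul_div_assoc', div_le_div_iff₀ (by positivity) (by norm_num)]
          nlinarith
  have hν1 : 𝔼 a, |ν a - 1| ≤ 3 := by
    have h2 := hν 1 h1D
    simp only [Pi.one_apply, mul_one, expect_sub_distrib] at h2
    rw [expect_const univ_nonempty] at h2
    have h3 : 𝔼 a, |ν a - 1| ≤ 𝔼 a, (ν a + 1) := expect_mono fun a => by
      have := (hf0 a).trans (hfν a)
      rw [abs_le]; constructor <;> linarith
    rw [expect_add_distrib, expect_const univ_nonempty] at h3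
    have := (le_abs_self _).trans (h2.trans (min_le_left _ _))
    linarith
  have h4 := H (fun a => if 0 < ψ a then 1 else 0) (fun a => by split_ifs <;> norm_num)
    (fun a => by split_ifs <;> norm_num)
  have h5 : 𝔼 a, (f a - if 0 < ψ a then 1 else 0) * ψ a ≤
      𝔼 a, ((ν a - 1) * P.eval (ψ a) + |ν a - 1| * (η / 8)) := by
    refine expect_mono fun a => ?_
    have hm := hP (ψ a) (abs_le.1 (hψ1 a))
    have h6 : (f a - if 0 < ψ a then 1 else 0) * ψ a ≤ (ν a - 1) * max (ψ a) 0 := by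
      split_ifs with hpos
      · rw [max_eq_left hpos.le]
        exact mul_le_mul_of_nonneg_right (by linarith [hfν a]) hpos.le
      · rw [max_eq_right (not_lt.1 hpos), mul_zero, sub_zero]
        exact mul_nonpos_of_nonneg_of_nonpos (hf0 a) (not_lt.1 hpos)
    have h7 : (ν a - 1) * (max (ψ a) 0 - P.eval (ψ a)) ≤ |ν a - 1| * (η / 8) := by
      refine (le_abs_self _).trans ?_
      rw [abs_mul, abs_sub_comm (max _ _)]
      gcongr
    linarith
  rw [expect_add_distrib, ← expect_mul] at h5
  have h8 := (le_abs_self _).trans hPψ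
  nlinarith

end GT

namespace GT
open Finset Function
open scoped BigOperators

set_option linter.unusedSectionVars false

/-! ### The relative Szemerédi theorem -/

section testfunctions
variable {m N : ℕ} [NeZero N]

/-- The average of `∏ i, u i` over the points `y` with coordinate sum `a`. -/
noncomputable def phiD (u : Fin (m + 1) → (Fin (m + 1) → ZMod N) → ℝ) (a : ZMod N) : ℝ :=
  𝔼 y : Fin (m + 1) → ZMod N, ∏ i, u i (y + Pi.single 0 (a - ∑ t, y t))

/-- The test functions for cut norms, as functions of the sum of the coordinates. -/
def Dset (m N : ℕ) [NeZero N] : Set (ZMod N → ℝ) :=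
  {φ | ∃ u : Fin (m + 1) → (Fin (m + 1) → ZMod N) → ℝ,
    (∀ i, Indep i (u i)) ∧ (∀ i y, |u i y| ≤ 1) ∧ φ = phiD u}

lemma sum_shift (y : Fin (m + 1) → ZMod N) (a : ZMod N) :
    ∑ t, (y + Pi.single 0 (a - ∑ t, y t) : Fin (m + 1) → ZMod N) t = a := by
  simp [sum_add_distrib]

lemma expect_phiD (F : ZMod N → ℝ) (u : Fin (m + 1) → (Fin (m + 1) → ZMod N) → ℝ) :
    𝔼 a, F a * phiD u a = 𝔼 y : Fin (m + 1) → ZMod N, F (∑ t, y t) * ∏ i, u i y := by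
  simp only [phiD, mul_expect]
  rw [expect_comm, ← expect_update 0 fun y => F (∑ t, y t) * ∏ i, u i y]
  refine expect_congr rfl fun y _ => ?_
  refine Fintype.expect_equiv (Equiv.addRight (y 0 - ∑ t, y t)) _ _ fun a => ?_
  have e : update y 0 (a + (y 0 - ∑ t, y t)) = y + Pi.single 0 (a - ∑ t, y t) := by
    funext t
    by_cases ht : t = 0
    · subst ht; simp; ring
    · simp [ht]
  rw [Equiv.coe_addRight, e, sum_shift]

lemma Indep.shift {i : Fin (m + 1)} {u : (Fin (m + 1) → ZMod N) → ℝ} (hu : Indep i u)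
    (s : Fin (m + 1) → ZMod N) : Indep i fun y => u (y + s) := by
  intro y b
  have : update y i b + s = update (y + s) i (b + s i) := by
    funext t
    by_cases ht : t = i
    · subst ht; simp
    · simp [ht]
  simp only [this, hu _ _]

lemma one_mem_Dset : (1 : ZMod N → ℝ) ∈ Dset m N :=
  ⟨fun _ _ => 1, fun _ _ _ => rfl, fun _ _ => by simp, by funext a; simp [phiD]⟩

lemma neg_mem_Dset : ∀ φ ∈ Dset m N, -φ ∈ Dset m N := by
  rintro _ ⟨u, h1, h2, rfl⟩
  refine ⟨fun i y => (if i = 0 then -1 else 1) * u i y, fun i y b => by simp only [h1 i y b],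
    fun i y => ?_, ?_⟩
  · rw [abs_mul]
    have : |(if i = 0 then -1 else 1 : ℝ)| = 1 := by split_ifs <;> simp
    rw [this, one_mul]
    exact h2 i y
  · funext a
    simp only [phiD, prod_mul_distrib, Pi.neg_apply]
    rw [← expect_neg_distrib]
    refine expect_congr rfl fun y _ => ?_
    simp

lemma abs_le_of_mem_Dset : ∀ φ ∈ Dset m N, ∀ a, |φ a| ≤ 1 := by
  rintro _ ⟨u, h1, h2, rfl⟩ a
  refine (abs_expect_le _).trans ?_
  calc _ ≤ 𝔼 _y : Fin (m + 1) → ZMod N, (1 : ℝ) := expect_mono fun y => by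
        rw [abs_prod]
        exact prod_le_one (fun _ _ => abs_nonneg _) fun i _ => h2 i _
    _ = 1 := expect_const univ_nonempty _

/-- A product of averages over the points with sum `a` is an average, over translations `z`, of
functions of the same type. -/
lemma mul_mem_Dset : ∀ φ ∈ Dset m N, ∀ ψ ∈ Dset m N, φ * ψ ∈ convexHull ℝ (Dset m N) := by
  rintro _ ⟨u, h1, h2, rfl⟩ _ ⟨v, h3, h4, rfl⟩
  set w : (Fin (m + 1) → ZMod N) → Fin (m + 1) → (Fin (m + 1) → ZMod N) → ℝ :=
    fun z i y => u i y * v i (y + (z + Pi.single 0 (-∑ t, z t))) with hw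
  have hmem : ∀ z, phiD (w z) ∈ convexHull ℝ (Dset m N) := fun z => subset_convexHull ℝ _
    ⟨w z, fun i => (h1 i).mul ((h3 i).shift _), fun i y => by
      rw [abs_mul]; exact mul_le_one₀ (h2 i _) (abs_nonneg _) (h4 i _), rfl⟩
  have e : phiD u * phiD v = ∑ z : Fin (m + 1) → ZMod N,
      ((Fintype.card (Fin (m + 1) → ZMod N) : ℝ)⁻¹) • phiD (w z) := by
    funext a
    rw [← smul_sum, Pi.smul_apply, Finset.sum_apply, smul_eq_mul, inv_mul_eq_div,
      ← Fintype.expect_eq_sum_div_card (fun z => phiD (w z) a)]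
    simp only [Pi.mul_apply]
    rw [phiD, expect_mul]
    simp only [phiD]
    rw [expect_comm]
    refine expect_congr rfl fun y _ => ?_
    rw [mul_expect]
    refine (Fintype.expect_equiv (Equiv.addLeft y) _ _ fun z => ?_).symm
    rw [← prod_mul_distrib]
    refine prod_congr rfl fun i _ => ?_
    simp only [hw, Equiv.coe_addLeft]
    congr 2
    funext t
    by_cases ht : t = 0
    · subst ht; simp [sum_add_distrib]; ring
    · simp [ht]
  rw [e]
  refine (convex_convexHull ℝ (Dset m N)).sum_mem (fun _ _ => by positivity) ?_
    fun z _ => hmem z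
  rw [sum_const, card_univ, nsmul_eq_mul, mul_inv_cancel₀]
  exact_mod_cast Fintype.card_ne_zero

end testfunctions

section forms
variable {m N : ℕ}

/-- The linear form `∑ i, (i - j) x_i`. -/
def psi (j : Fin (m + 2)) (x : Fin (m + 2) → ZMod N) : ZMod N :=
  ∑ i : Fin (m + 2), (((i : ℕ) : ZMod N) - ((j : ℕ) : ZMod N)) * x i

lemma lin_update {ι : Type} [Fintype ι] [DecidableEq ι] (c : ι → ZMod N) (x : ι → ZMod N) (j : ι)
    (b : ZMod N) : ∑ i, c i * update x j b i = (∑ i, c i * x i) + c j * (b - x j) := by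
  rw [← sub_eq_iff_eq_add', ← sum_sub_distrib]
  rw [sum_eq_single j]
  · simp; ring
  · intro i _ hi; simp [hi]
  · simp

lemma psi_indep (F : ZMod N → ℝ) (j : Fin (m + 2)) :
    Indep j fun x : Fin (m + 2) → ZMod N => F (psi j x) := by
  intro x b
  simp only [psi, lin_update]
  simp

/-- The `j`-th form is the `j`-th term of an arithmetic progression. -/
lemma psi_eq (j : Fin (m + 2)) (x : Fin (m + 2) → ZMod N) :
    psi j x = (∑ i : Fin (m + 2), ((i : ℕ) : ZMod N) * x i) + ((j : ℕ) : ZMod N) *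
      (∑ i : Fin (m + 2), (-1) * x i) := by
  rw [psi, mul_sum, ← sum_add_distrib]
  exact sum_congr rfl fun i _ => by ring

/-- The start and the step of the progression formed by the `psi j` are jointly uniform. -/
lemma expect_forms [NeZero N] (H : ZMod N → ZMod N → ℝ) :
    𝔼 x : Fin (m + 2) → ZMod N, H (∑ i : Fin (m + 2), ((i : ℕ) : ZMod N) * x i)
      (∑ i : Fin (m + 2), (-1) * x i) = 𝔼 a, 𝔼 d, H a d := by
  have h1 : 𝔼 x : Fin (m + 2) → ZMod N, H (∑ i : Fin (m + 2), ((i : ℕ) : ZMod N) * x i)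
      (∑ i : Fin (m + 2), (-1) * x i) = 𝔼 x : Fin (m + 2) → ZMod N, 𝔼 d,
        H (∑ i : Fin (m + 2), ((i : ℕ) : ZMod N) * x i) d := by
    rw [← expect_update 0]
    refine expect_congr rfl fun x _ => ?_
    refine Fintype.expect_equiv (Equiv.subLeft ((∑ i : Fin (m + 2), (-1) * x i) + x 0)) _ _
      fun b => ?_
    simp only [lin_update]
    congr 1
    · simp
    · simp; ring
  rw [h1, ← expect_update 1]
  refine (expect_congr rfl fun x _ => ?_).trans (expect_const univ_nonempty _)
  refine Fintype.expect_equiv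
    (Equiv.addRight ((∑ i : Fin (m + 2), ((i : ℕ) : ZMod N) * x i) - x 1)) _ _ fun b => ?_
  refine expect_congr rfl fun d _ => ?_
  simp only [lin_update]
  congr 1
  simp; ring

variable [Fact N.Prime]

lemma cast_sub_ne_zero (hN : m + 2 ≤ N) {i j : Fin (m + 2)} (h : i ≠ j) :
    ((i : ℕ) : ZMod N) - ((j : ℕ) : ZMod N) ≠ 0 := by
  rw [sub_ne_zero]
  intro hv
  rw [ZMod.natCast_eq_natCast_iff', Nat.mod_eq_of_lt (by omega), Nat.mod_eq_of_lt (by omega)] at hv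
  exact h (Fin.ext hv)

/-- The point with `j`-th coordinate `c` at which the nonzero summands of `psi j` are the `y i`. -/
def pt (j : Fin (m + 2)) (c : ZMod N) (y : Fin (m + 1) → ZMod N) : Fin (m + 2) → ZMod N :=
  j.insertNth (α := fun _ => ZMod N) c
    fun i => y i * (((j.succAbove i : ℕ) : ZMod N) - ((j : ℕ) : ZMod N))⁻¹

lemma psi_pt (hN : m + 2 ≤ N) (j : Fin (m + 2)) (c : ZMod N) (y : Fin (m + 1) → ZMod N) :
    psi j (pt j c y) = ∑ t, y t := by
  rw [psi, Fin.sum_univ_succAbove _ j]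
  simp only [pt, Fin.insertNth_apply_same, Fin.insertNth_apply_succAbove, sub_self, zero_mul,
    zero_add]
  refine sum_congr rfl fun i _ => ?_
  have := cast_sub_ne_zero hN (Fin.succAbove_ne j i)
  field_simp

lemma pt_update (j : Fin (m + 2)) (c : ZMod N) (y : Fin (m + 1) → ZMod N) (i : Fin (m + 1))
    (b : ZMod N) : pt j c (update y i b) = update (pt j c y) (j.succAbove i)
      (b * (((j.succAbove i : ℕ) : ZMod N) - ((j : ℕ) : ZMod N))⁻¹) := by
  funext t
  rcases Fin.eq_self_or_eq_succAbove j t with rfl | ⟨s, rfl⟩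
  · rw [update_of_ne (Fin.succAbove_ne _ _).symm]
    simp [pt]
  · by_cases hs : s = i
    · subst hs; simp [pt]
    · have : j.succAbove s ≠ j.succAbove i := fun h => hs (Fin.succAbove_right_injective h)
      rw [update_of_ne this]
      simp [pt, hs]

/-- For fixed `j`, averaging over all points amounts to averaging over the parameters of `pt j`. -/
lemma expect_pt (hN : m + 2 ≤ N) (j : Fin (m + 2)) (K : (Fin (m + 2) → ZMod N) → ℝ) :
    𝔼 x, K x = 𝔼 c, 𝔼 y, K (pt j c y) := by
  have h : 𝔼 c, 𝔼 y, K (pt j c y) =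
      𝔼 p : ZMod N × (Fin (m + 1) → ZMod N), K (pt j p.1 p.2) := by
    rw [← univ_product_univ, expect_product]
  rw [h]
  refine expect_nbij' (fun x => (x j, fun i => x (j.succAbove i) *
    (((j.succAbove i : ℕ) : ZMod N) - ((j : ℕ) : ZMod N)))) (fun p => pt j p.1 p.2)
    (by simp) (by simp) ?_ ?_ ?_
  · intro x _
    funext t
    rcases Fin.eq_self_or_eq_succAbove j t with rfl | ⟨s, rfl⟩
    · simp [pt]
    · have := cast_sub_ne_zero hN (Fin.succAbove_ne j s)
      simp only [pt, Fin.insertNth_apply_succAbove]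
      field_simp
  · rintro ⟨c, y⟩ _
    simp only [pt, Fin.insertNth_apply_same, Fin.insertNth_apply_succAbove, Prod.mk.injEq,
      true_and]
    funext i
    have := cast_sub_ne_zero hN (Fin.succAbove_ne j i)
    field_simp
  · intro x _
    congr 1
    funext t
    rcases Fin.eq_self_or_eq_succAbove j t with rfl | ⟨s, rfl⟩
    · simp [pt]
    · have := cast_sub_ne_zero hN (Fin.succAbove_ne j s)
      simp only [pt, Fin.insertNth_apply_succAbove]
      field_simp

lemma erase_eq_image (j : Fin (m + 2)) : univ.erase j = univ.image j.succAbove := by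
  rw [Fin.image_succAbove_univ, ← compl_singleton]

/-- Cut norms are controlled by the test functions in `Dset`. -/
lemma cut_psi (hN : m + 2 ≤ N) {F : ZMod N → ℝ} {ε : ℝ}
    (hF : ∀ φ ∈ Dset m N, |𝔼 a, F a * φ a| ≤ ε) (j : Fin (m + 2)) :
    Cut j (fun x => F (psi j x)) ε := by
  intro u hu h0 h1
  rw [expect_pt hN j]
  refine (abs_expect_le _).trans ?_
  refine (expect_mono (G := fun _ => ε) fun c => ?_).trans_eq (expect_const univ_nonempty _)
  have := hF (phiD fun i y => u (j.succAbove i) (pt j c y)) ⟨_, ?_, ?_, rfl⟩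
  · rw [expect_phiD] at this
    refine le_trans (le_of_eq ?_) this
    congr 1
    refine expect_congr rfl fun y _ => ?_
    simp only [psi_pt hN]
    rw [erase_eq_image, prod_image (fun a _ b _ h => Fin.succAbove_right_injective h)]
  · intro i y b
    simp only [pt_update]
    exact hu _ (Fin.succAbove_ne j i) _ _
  · intro i y
    rw [abs_of_nonneg (h0 _ _)]
    exact h1 _ _

/-- A pseudorandom weight is indistinguishable from `1` by the test functions. -/
lemma weight_test (η : ℝ) (hη : 0 < η) : ∃ ε > 0, ∀ (N : ℕ) [Fact N.Prime], m + 2 ≤ N →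
    ∀ ν : ZMod N → ℝ, PR (fun (j : Fin (m + 2)) x => ν (psi j x)) ε →
    ∀ φ ∈ Dset m N, |𝔼 a, (ν a - 1) * φ a| ≤ η := by
  obtain ⟨ε, hε, H⟩ := replace_weight (ι := Fin (m + 2)) η hη
  refine ⟨ε, hε, ?_⟩
  rintro N _ hN ν hν _ ⟨u, h1, h2, rfl⟩
  set Y : (Fin (m + 2) → ZMod N) → Fin (m + 1) → ZMod N := fun x i => x (Fin.succAbove 0 i) *
    ((((Fin.succAbove 0 i : Fin (m + 2)) : ℕ) : ZMod N) - (((0 : Fin (m + 2)) : ℕ) : ZMod N))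
    with hY
  have hYp : ∀ c y, Y (pt 0 c y) = y := by
    intro c y
    funext i
    have := cast_sub_ne_zero hN (Fin.succAbove_ne 0 i)
    simp only [hY, pt, Fin.insertNth_apply_succAbove]
    field_simp
  have hYu : ∀ x i b, Y (update x (Fin.succAbove 0 i) b) = update (Y x) i (b *
    ((((Fin.succAbove 0 i : Fin (m + 2)) : ℕ) : ZMod N) - (((0 : Fin (m + 2)) : ℕ) : ZMod N))) := by
    intro x i b
    funext t
    by_cases ht : t = i
    · subst ht; simp [hY]
    · have : Fin.succAbove 0 t ≠ Fin.succAbove (0 : Fin (m + 2)) i :=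
        fun h => ht (Fin.succAbove_right_injective h)
      simp only [hY, update_of_ne this, update_of_ne ht]
  set h : Fin (m + 2) → (Fin (m + 2) → ZMod N) → ZMod N → ℝ :=
    fun j x _ => if hj : j = 0 then 1 else u (j.pred hj) (Y x) with hh
  have hsucc : ∀ i x b, h (Fin.succAbove 0 i) x b = u i (Y x) := by
    intro i x b
    simp [hh]
  have := H (ZMod N) (fun j x => ν (psi j x)) hν 0 ∅ ∅ h ?_ ?_
  · refine le_trans (le_of_eq ?_) this
    congr 1
    rw [expect_phiD, expect_pt hN 0, eq_comm]
    refine (expect_congr rfl fun c _ => ?_).trans (expect_const univ_nonempty _)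
    refine expect_congr rfl fun y _ => ?_
    refine (expect_congr rfl fun b _ => ?_).trans (expect_const univ_nonempty _)
    rw [psi_pt hN, erase_eq_image, prod_image (fun a _ b _ h => Fin.succAbove_right_injective h)]
    simp only [hsucc, hYp]
  · intro j hj b x c
    obtain ⟨i, rfl⟩ := Fin.exists_succAbove_eq hj
    change h _ (update x _ c) b = h _ x b
    rw [hsucc i _ b, hsucc i _ b, hYu]
    exact h1 i _ _
  · intro j hj x b
    obtain ⟨i, rfl⟩ := Fin.exists_succAbove_eq hj
    rw [hsucc i x b]
    simpa [wt] using h2 i _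

/-- The relative Szemerédi theorem: a dense function dominated by a pseudorandom weight has a
positive proportion of the expected number of weighted arithmetic progressions. -/
theorem relative_szemeredi (m : ℕ) {δ : ℝ} (hδ : 0 < δ) : ∃ c > 0, ∃ ε > 0, ∃ N0 : ℕ,
    ∀ (N : ℕ) [Fact N.Prime], N0 ≤ N → ∀ ν f : ZMod N → ℝ, (∀ a, 0 ≤ f a) → (∀ a, f a ≤ ν a) →
    LF (fun (j : Fin (m + 2)) x => ν (psi j x)) ε → δ ≤ 𝔼 a, f a →
    c ≤ 𝔼 a, 𝔼 d, ∏ j : Fin (m + 2), f (a + (j : ℕ) * d) := by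
  obtain ⟨c, hc, N0, HV⟩ := varnavides (m + 1) (half_pos hδ)
  obtain ⟨ε1, hε1, HC⟩ := counting (ι := Fin (m + 2)) univ (c / 2) (half_pos hc)
  obtain ⟨ε2, hε2, HD⟩ := dense_model (min ε1 (δ / 2)) (by positivity)
  obtain ⟨ε3, hε3, HW⟩ := weight_test (m := m) ε2 hε2
  refine ⟨c / 2, half_pos hc, min ε1 ε3, by positivity, max N0 (m + 2), ?_⟩
  intro N _ hN ν f hf0 hfν hLF hfδ
  have hNm : m + 2 ≤ N := (le_max_right _ _).trans hN
  have hPR : PR (fun (j : Fin (m + 2)) x => ν (psi j x)) (min ε1 ε3) :=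
    ⟨fun j x => (hf0 _).trans (hfν _), fun j => psi_indep ν j, hLF⟩
  obtain ⟨p, hp0, hp1, hp⟩ := HD (ZMod N) (Dset m N) one_mem_Dset neg_mem_Dset
    abs_le_of_mem_Dset mul_mem_Dset ν f hf0 hfν (HW N hNm ν (hPR.mono (min_le_right _ _)))
  have hpδ : δ / 2 ≤ 𝔼 a, p a := by
    have := hp 1 one_mem_Dset
    simp only [Pi.one_apply, mul_one, expect_sub_distrib] at this
    have := (le_abs_self _).trans (this.trans (min_le_right _ _))
    linarith
  have hNpos : (0 : ℝ) < N := by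
    have := (Fact.out : N.Prime).pos
    exact_mod_cast this
  have hV := HV N ((le_max_left _ _).trans hN) p hp0 hp1 (by
    rw [Fintype.expect_eq_sum_div_card, ZMod.card, le_div_iff₀ hNpos] at hpδ
    exact hpδ)
  have hV' : c ≤ 𝔼 a, 𝔼 d, ∏ j : Fin (m + 2), p (a + (j : ℕ) * d) := by
    simp only [Fintype.expect_eq_sum_div_card, ZMod.card, ← sum_div]
    rw [div_div, le_div_iff₀ (by positivity), ← sq]
    exact hV
  have hform : ∀ F : ZMod N → ℝ, 𝔼 x : Fin (m + 2) → ZMod N, ∏ j, F (psi j x) =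
      𝔼 a, 𝔼 d, ∏ j : Fin (m + 2), F (a + (j : ℕ) * d) := by
    intro F
    rw [← expect_forms (m := m)]
    simp only [psi_eq]
  have hcount := HC (ZMod N) _ (hPR.mono (min_le_left _ _)) (fun j x => f (psi j x))
    (fun j x => p (psi j x)) (psi_indep f) (psi_indep p) (fun _ _ => hf0 _)
    (fun j x => by simpa using hfν _) (fun _ _ => hp0 _) (fun _ _ => hp1 _)
    (fun j => cut_psi hNm (F := fun a => f a - p a)
      (fun φ hφ => (hp φ hφ).trans (min_le_left _ _)) j)
  rw [hform, hform, abs_le] at hcount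
  linarith

end forms
end GT

namespace GT
open Finset Function
open scoped BigOperators

set_option linter.unusedSectionVars false

/-! ### Frequencies and their weights -/

section freq
variable {κ : Type} [Fintype κ] [DecidableEq κ] (p : κ → ℕ) [∀ i, Fact (p i).Prime]

/-- Frequencies: residues modulo each of the primes `p i`. The element `α` stands for the rational
`∑ i, α i / p i` modulo `1`. -/
abbrev Fr := (i : κ) → ZMod (p i)

/-- The primes dividing the denominator of a frequency. -/
def supp (α : Fr p) : Finset κ := univ.filter fun i => α i ≠ 0

/-- The frequencies with denominator at most `R`. -/
def Fq (R : ℕ) : Finset (Fr p) := univ.filter fun α => ∏ i ∈ supp p α, p i ≤ R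

variable {p}

lemma mem_supp {α : Fr p} {i : κ} : i ∈ supp p α ↔ α i ≠ 0 := by simp [supp]

lemma mem_Fq {R : ℕ} {α : Fr p} : α ∈ Fq p R ↔ ∏ i ∈ supp p α, p i ≤ R := by simp [Fq]

/-- Sums over frequencies of a product of local factors, grouped according to the support inside
`T`. -/
lemma sum_group {K : Type*} [CommRing K] (T : Finset κ) (h : Finset κ → K)
    (f : (i : κ) → ZMod (p i) → K) :
    ∑ α : Fr p, h (supp p α ∩ T) * ∏ i, f i (α i) = ∑ S ∈ T.powerset, h S *
      ∏ i, (if i ∈ T then (if i ∈ S then ∑ a ∈ univ.erase 0, f i a else f i 0)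
        else ∑ a, f i a) := by
  rw [← sum_fiberwise_of_maps_to (s := univ) (t := T.powerset) (g := fun α => supp p α ∩ T)
    (fun α _ => mem_powerset.2 inter_subset_right)]
  refine sum_congr rfl fun S hS => ?_
  have hST := mem_powerset.1 hS
  have e1 : ∀ i, (if i ∈ T then (if i ∈ S then ∑ a ∈ univ.erase 0, f i a else f i 0)
      else ∑ a, f i a) =
      ∑ a ∈ (if i ∈ T then (if i ∈ S then univ.erase 0 else {0}) else univ : Finset (ZMod (p i))),
        f i a := by
    intro i; split_ifs <;> simp
  simp only [e1]
  rw [prod_univ_sum, mul_sum]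
  refine sum_congr ?_ fun α hα => ?_
  · ext α
    rw [mem_filter, Fintype.mem_piFinset]
    simp only [mem_univ, true_and]
    constructor
    · intro h i
      rw [← h]
      simp only [mem_inter, mem_supp]
      split_ifs with h1 h2
      · simp [h2.1]
      · simp only [mem_singleton]; by_contra h3; exact h2 ⟨h3, h1⟩
      · simp
    · intro h
      ext i
      have := h i
      simp only [mem_inter, mem_supp]
      by_cases h1 : i ∈ T
      · by_cases h2 : i ∈ S
        · simp [h1, h2] at this; simp [h1, h2, this]
        · simp [h1, h2] at this; simp [h2, this]
      · have h2 : i ∉ S := fun h => h1 (hST h)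
        simp [h1, h2]
  · rw [Fintype.mem_piFinset] at hα
    congr 2
    ext i
    have := hα i
    simp only [mem_inter, mem_supp]
    by_cases h1 : i ∈ T
    · by_cases h2 : i ∈ S
      · simp [h1, h2] at this; simp [h1, h2, this]
      · simp [h1, h2] at this; simp [h2, this]
    · have h2 : i ∉ S := fun h => h1 (hST h)
      simp [h1, h2]

/-- The local weight `μ(q) / φ(q)`, for `q = 1` or `q = p`. -/
noncomputable def gl (p : ℕ) (a : ZMod p) : ℝ := if a = 0 then 1 else -1 / ((p : ℝ) - 1)

/-- The weight `μ(q) / φ(q)` of a frequency with denominator `q`. -/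
noncomputable def wF (α : Fr p) : ℝ := ∏ i, gl (p i) (α i)

variable (p) in
/-- The normalising sum of `1 / φ(q)` over the denominators `q ≤ R`. -/
noncomputable def Gs (R : ℕ) : ℝ := ∑ S : Finset κ with ∏ i ∈ S, p i ≤ R, ∏ i ∈ S, ((p i : ℝ) - 1)⁻¹

lemma two_le_p (i : κ) : (2 : ℝ) ≤ p i := by
  exact_mod_cast (Fact.out : (p i).Prime).two_le

lemma card_erase_zmod (q : ℕ) [Fact q.Prime] :
    (((univ : Finset (ZMod q)).erase 0).card : ℝ) = (q : ℝ) - 1 := by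
  rw [card_erase_of_mem (mem_univ _), card_univ, ZMod.card,
    Nat.cast_sub (Fact.out : q.Prime).one_lt.le, Nat.cast_one]

/-- A sum over the frequencies in `Fq p R` is a sum over the possible supports. -/
lemma sum_Fq {K : Type*} [CommRing K] (R : ℕ) (f : (i : κ) → ZMod (p i) → K)
    (hf : ∀ i, f i 0 = 1) : ∑ α ∈ Fq p R, ∏ i, f i (α i) =
      ∑ S : Finset κ with ∏ i ∈ S, p i ≤ R, ∏ i ∈ S, ∑ a ∈ univ.erase 0, f i a := by
  have := sum_group (p := p) univ (fun S => if ∏ i ∈ S, p i ≤ R then (1 : K) else 0) f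
  simp only [inter_univ, ite_mul, one_mul, zero_mul, mem_univ, if_true, hf,
    powerset_univ] at this
  rw [Fq, sum_filter, this, sum_filter]
  refine sum_congr rfl fun S _ => ?_
  split_ifs
  · rw [prod_ite_mem, univ_inter]
  · rfl

lemma gl_zero (q : ℕ) : gl q 0 = 1 := by simp [gl]

lemma Gs_eq (R : ℕ) : ∑ α ∈ Fq p R, wF α ^ 2 = Gs p R := by
  have := sum_Fq (p := p) R (fun i a => gl (p i) a ^ 2) (fun i => by simp [gl])
  simp only [prod_pow] at this
  rw [Gs]
  refine this.trans (sum_congr rfl fun S _ => prod_congr rfl fun i _ => ?_)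
  have h2 := two_le_p (p := p) i
  rw [sum_congr rfl (g := fun _ => ((p i : ℝ) - 1)⁻¹ ^ 2) fun a ha => ?_]
  · rw [sum_const, nsmul_eq_mul, card_erase_zmod]
    field_simp
  · rw [gl, if_neg (ne_of_mem_erase ha)]
    rw [neg_div, one_div, neg_sq]

lemma one_le_Gs {R : ℕ} (hR : 1 ≤ R) : 1 ≤ Gs p R := by
  have h : (∅ : Finset κ) ∈ univ.filter fun S : Finset κ => ∏ i ∈ S, p i ≤ R := by simpa using hR
  rw [Gs]
  refine le_trans (by simp) (single_le_sum (f := fun S : Finset κ => ∏ i ∈ S, ((p i : ℝ) - 1)⁻¹)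
    (fun S _ => prod_nonneg fun i _ => ?_) h)
  have := two_le_p (p := p) i
  exact inv_nonneg.2 (by linarith)

lemma abs_gl_le (i : κ) (a : ZMod (p i)) : |gl (p i) a| ≤ 1 := by
  have := two_le_p (p := p) i
  rw [gl]
  split_ifs
  · simp
  · rw [abs_div, abs_neg, abs_one, abs_of_nonneg (by linarith)]
    exact div_le_one_of_le₀ (by linarith) (by linarith)

lemma abs_wF_le (α : Fr p) : |wF α| ≤ 1 := by
  rw [wF, abs_prod]
  exact prod_le_one (fun _ _ => abs_nonneg _) fun i _ => abs_gl_le i _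

/-- The majorant of the local correlation of `gl` with its shift by `b`. -/
noncomputable def hl (q : ℕ) (b : ZMod q) : ℝ := if b = 0 then 1 else 3 / ((q : ℝ) - 1)

lemma hl_nonneg (i : κ) (b : ZMod (p i)) : 0 ≤ hl (p i) b := by
  have := two_le_p (p := p) i
  rw [hl]; split_ifs
  · norm_num
  · exact div_nonneg (by norm_num) (by linarith)

/-- The autocorrelation of the local weight is small at nonzero frequencies, which bounds the local
factors of the coefficients of `|lam|²`. -/
lemma local_corr (q : ℕ) [Fact q.Prime] {b : ZMod q} (hb : b ≠ 0) :
    ∑ a, |gl q a| * |gl q (a - b)| ≤ 3 / ((q : ℝ) - 1) := by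
  have h2 : (2 : ℝ) ≤ q := by exact_mod_cast (Fact.out : q.Prime).two_le
  set t : ℝ := ((q : ℝ) - 1)⁻¹ with ht
  have hq1 : (0 : ℝ) < q - 1 := by linarith
  have ht0 : 0 < t := inv_pos.2 hq1
  have hgl : ∀ a : ZMod q, a ≠ 0 → |gl q a| = t := by
    intro a ha
    rw [gl, if_neg ha, abs_div, abs_neg, abs_one, abs_of_pos hq1, one_div]
  have hle : ∀ a ∈ (univ.erase (0 : ZMod q)), |gl q a| * |gl q (a - b)| ≤
      t * t + if a = b then t else 0 := by
    intro a ha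
    rw [hgl a (ne_of_mem_erase ha)]
    split_ifs with hab
    · rw [hab, sub_self, gl_zero, abs_one, mul_one]; nlinarith
    · rw [hgl _ (sub_ne_zero.2 hab), add_zero]
  rw [← add_sum_erase _ _ (mem_univ 0), gl_zero, zero_sub, hgl _ (neg_ne_zero.2 hb), abs_one,
    one_mul]
  refine (add_le_add_right (sum_le_sum hle) t).trans ?_
  rw [sum_add_distrib, sum_const, nsmul_eq_mul, card_erase_zmod, sum_ite_eq' _ b,
    if_pos (mem_erase.2 ⟨hb, mem_univ _⟩), div_eq_mul_inv, ← ht]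
  have : ((q : ℝ) - 1) * (t * t) = t := by rw [ht]; field_simp
  linarith

/-- The correlation of the weights with their shift by `β`. -/
lemma corr_le (R : ℕ) (β : Fr p) :
    ∑ α ∈ Fq p R with α - β ∈ Fq p R, |wF α| * |wF (α - β)| ≤
      Gs p R * ∏ i, hl (p i) (β i) := by
  set T : Finset κ := univ.filter fun i => β i = 0 with hT
  have h1 : ∑ α ∈ Fq p R with α - β ∈ Fq p R, |wF α| * |wF (α - β)| ≤
      ∑ α : Fr p, (if ∏ i ∈ supp p α ∩ T, p i ≤ R then 1 else 0) *
        ∏ i, (|gl (p i) (α i)| * |gl (p i) (α i - β i)|) := by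
    refine (sum_le_sum_of_subset_of_nonneg (filter_subset _ _) fun _ _ _ => by positivity).trans ?_
    rw [Fq, sum_filter]
    refine sum_le_sum fun α _ => ?_
    split_ifs with h h' h'
    · rw [one_mul, prod_mul_distrib, wF, wF, abs_prod, abs_prod]; rfl
    · exact absurd ((prod_le_prod_of_subset_of_one_le' inter_subset_left
        fun i _ _ => (Fact.out : (p i).Prime).one_lt.le).trans h) h'
    · rw [one_mul]; exact prod_nonneg fun _ _ => by positivity
    · simp
  refine h1.trans ?_
  rw [sum_group T (fun S => if ∏ i ∈ S, p i ≤ R then (1 : ℝ) else 0)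
    (fun i a => |gl (p i) a| * |gl (p i) (a - β i)|)]
  have h2 : ∀ S ∈ T.powerset, (∏ i, (if i ∈ T then (if i ∈ S then
      ∑ a ∈ univ.erase 0, |gl (p i) a| * |gl (p i) (a - β i)| else
        |gl (p i) 0| * |gl (p i) (0 - β i)|) else ∑ a, |gl (p i) a| * |gl (p i) (a - β i)|)) ≤
      (∏ i ∈ S, ((p i : ℝ) - 1)⁻¹) * ∏ i, hl (p i) (β i) := by
    intro S hS
    have e : ∏ i ∈ S, ((p i : ℝ) - 1)⁻¹ = ∏ i, if i ∈ S then ((p i : ℝ) - 1)⁻¹ else 1 := by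
      rw [prod_ite_mem, univ_inter]
    rw [e, ← prod_mul_distrib]
    refine prod_le_prod (fun i _ => by split_ifs <;> positivity) fun i _ => ?_
    by_cases hi : β i = 0
    · have hiT : i ∈ T := by simp [hT, hi]
      rw [if_pos hiT, hl, if_pos hi, mul_one, hi]
      split_ifs
      · rw [sum_congr rfl (g := fun _ => ((p i : ℝ) - 1)⁻¹ * ((p i : ℝ) - 1)⁻¹) fun a ha => ?_]
        · have := two_le_p (p := p) i
          rw [sum_const, nsmul_eq_mul, card_erase_zmod, ← mul_assoc, mul_inv_cancel₀ (by linarith),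
            one_mul]
        · have := two_le_p (p := p) i
          rw [sub_zero, gl, if_neg (ne_of_mem_erase ha), abs_div, abs_neg, abs_one,
            abs_of_nonneg (by linarith), one_div]
      · simp [gl]
    · have hiT : i ∉ T := by simp [hT, hi]
      have hiS : i ∉ S := fun h => hiT (mem_powerset.1 hS h)
      rw [if_neg hiT, if_neg hiS, one_mul, hl, if_neg hi]
      exact local_corr _ hi
  have hprod : 0 ≤ ∏ i, hl (p i) (β i) := prod_nonneg fun i _ => hl_nonneg i _
  rw [Gs, sum_mul, sum_filter]
  have hsub : ∑ S ∈ T.powerset, (if ∏ i ∈ S, p i ≤ R then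
      (∏ i ∈ S, ((p i : ℝ) - 1)⁻¹) * ∏ i, hl (p i) (β i) else 0) ≤
      ∑ S : Finset κ, (if ∏ i ∈ S, p i ≤ R then
      (∏ i ∈ S, ((p i : ℝ) - 1)⁻¹) * ∏ i, hl (p i) (β i) else 0) := by
    refine sum_le_sum_of_subset_of_nonneg (subset_univ _) fun S _ _ => ?_
    split_ifs
    · refine mul_nonneg (prod_nonneg fun i _ => ?_) hprod
      have := two_le_p (p := p) i
      exact inv_nonneg.2 (by linarith)
    · exact le_rfl
  refine le_trans (sum_le_sum fun S hS => ?_) hsub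
  split_ifs
  · rw [one_mul]; exact h2 S hS
  · simp

end freq
end GT

namespace GT
open Finset Function
open scoped BigOperators ComplexConjugate

set_option linter.unusedSectionVars false

/-! ### The truncated Ramanujan expansion -/

section char
variable {κ : Type} [Fintype κ] [DecidableEq κ] {p : κ → ℕ} [∀ i, Fact (p i).Prime]

/-- The additive character `x ↦ exp (2 π i ∑ i, x i / p i)`. -/
noncomputable def Psi : AddChar (Fr p) ℂ where
  toFun x := ∏ i, ZMod.stdAddChar (x i)
  map_zero_eq_one' := by simp
  map_add_eq_mul' x y := by simp [AddChar.map_add_eq_mul, prod_mul_distrib]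

lemma Psi_apply (x : Fr p) : Psi x = ∏ i, ZMod.stdAddChar (x i) := rfl

lemma norm_Psi (x : Fr p) : ‖Psi x‖ = 1 := by
  rw [Psi_apply, norm_prod]
  exact prod_eq_one fun i _ => by rw [ZMod.stdAddChar_apply, Circle.norm_coe]

/-- For distinct primes `p i` the character `Psi` is faithful, by the Chinese remainder theorem. -/
lemma Psi_ne_one (hp : Injective p) {x : Fr p} (hx : x ≠ 0) : Psi x ≠ 1 := by
  obtain ⟨i, hi⟩ := Function.ne_iff.1 hx
  intro h
  set m := ∏ j ∈ univ.erase i, p j with hm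
  have h1 : Psi (m • x) = 1 := by rw [AddChar.map_nsmul_eq_pow, h, one_pow]
  rw [Psi_apply, ← mul_prod_erase univ _ (mem_univ i), prod_eq_one, mul_one] at h1
  · have h2 : (m • x) i = 0 := by
      apply ZMod.injective_stdAddChar
      rw [h1, AddChar.map_zero_eq_one]
    rw [Pi.smul_apply, nsmul_eq_mul, mul_eq_zero, ZMod.natCast_eq_zero_iff] at h2
    rcases h2 with h2 | h2
    · rw [hm, (Fact.out : (p i).Prime).prime.dvd_finsetProd_iff] at h2
      obtain ⟨j, hj, hij⟩ := h2
      exact ne_of_mem_erase hj (hp ((Nat.prime_dvd_prime_iff_eq Fact.out Fact.out).1 hij)).symm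
    · exact hi h2
  · intro j hj
    have : (m : ZMod (p j)) = 0 := by
      rw [ZMod.natCast_eq_zero_iff]
      exact dvd_prod_of_mem _ hj
    rw [Pi.smul_apply, nsmul_eq_mul, this, zero_mul, AddChar.map_zero_eq_one]

/-- Incomplete sums of a nontrivial character are bounded by its period. -/
lemma norm_sum_Psi_le (hp : Injective p) {x : Fr p} (hx : x ≠ 0) (B : ℕ) :
    ‖∑ n ∈ range B, Psi ((n : Fr p) * x)‖ ≤ ∏ i ∈ supp p x, p i := by
  set D := ∏ i ∈ supp p x, p i with hD
  have hD0 : 0 < D := prod_pos fun i _ => (Fact.out : (p i).Prime).pos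
  set ζ := Psi x with hζ
  have h1 : ζ ≠ 1 := Psi_ne_one hp hx
  have hζD : ζ ^ D = 1 := by
    rw [hζ, ← AddChar.map_nsmul_eq_pow]
    have : D • x = 0 := by
      ext i
      rw [Pi.smul_apply, nsmul_eq_mul, Pi.zero_apply, mul_eq_zero, ZMod.natCast_eq_zero_iff]
      by_cases hi : x i = 0
      · exact Or.inr hi
      · exact Or.inl (dvd_prod_of_mem _ (mem_supp.2 hi))
    rw [this, AddChar.map_zero_eq_one]
  have e : ∀ n : ℕ, Psi ((n : Fr p) * x) = ζ ^ n := fun n => by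
    rw [hζ, ← AddChar.map_nsmul_eq_pow, nsmul_eq_mul]
  simp only [e]
  have e2 : ∑ n ∈ range B, ζ ^ n = ∑ n ∈ range (B % D), ζ ^ n := by
    have h3 := mul_geom_sum ζ B
    have h4 := mul_geom_sum ζ (B % D)
    have h5 : ζ ^ B = ζ ^ (B % D) := by
      conv_lhs => rw [← Nat.div_add_mod B D, pow_add, pow_mul, hζD, one_pow, one_mul]
    rw [h5, ← h4] at h3
    exact mul_left_cancel₀ (sub_ne_zero.2 h1) h3
  rw [e2]
  refine (norm_sum_le _ _).trans ?_
  rw [sum_congr rfl (g := fun _ => (1 : ℝ)) fun n _ => by rw [norm_pow, hζ, norm_Psi, one_pow]]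
  rw [sum_const, card_range, nsmul_eq_mul, mul_one]
  exact_mod_cast (Nat.mod_lt B hD0).le

variable (p) in
/-- The truncated Ramanujan expansion of `n ↦ φ(n) Λ(n) / n`, at the primes `p i`. -/
noncomputable def lam (R : ℕ) (n : ℤ) : ℂ := ∑ α ∈ Fq p R, (wF α : ℂ) * Psi (α * (n : Fr p))

/-- The coefficients of `|lam|²`. -/
noncomputable def kF (R : ℕ) (β : Fr p) : ℝ :=
  ∑ α ∈ Fq p R with α - β ∈ Fq p R, wF α * wF (α - β)

/-- The Fourier expansion of `|lam|²`. -/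
lemma lam_sq (R : ℕ) (n : ℤ) :
    ((‖lam p R n‖ ^ 2 : ℝ) : ℂ) = ∑ β : Fr p, (kF R β : ℂ) * Psi (β * (n : Fr p)) := by
  have h1 : ((‖lam p R n‖ ^ 2 : ℝ) : ℂ) = lam p R n * conj (lam p R n) := by
    rw [Complex.mul_conj, Complex.normSq_eq_norm_sq]
  rw [h1, lam, map_sum, sum_mul_sum]
  have h2 : ∀ α ∈ Fq p R, ∑ α' ∈ Fq p R, (wF α : ℂ) * Psi (α * (n : Fr p)) *
      conj ((wF α' : ℂ) * Psi (α' * (n : Fr p))) =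
      ∑ β : Fr p, if α - β ∈ Fq p R then (wF α : ℂ) * wF (α - β) * Psi (β * (n : Fr p)) else 0 := by
    intro α _
    rw [← sum_filter]
    symm
    refine sum_nbij' (fun β => α - β) (fun α' => α - α') ?_ ?_ ?_ ?_ ?_
    · intro β hβ; exact (mem_filter.1 hβ).2
    · intro α' h; simpa using h
    · intro β _; simp
    · intro β _; simp
    · intro β _
      rw [(starRingEnd ℂ).map_mul, Complex.conj_ofReal, ← AddChar.map_neg_eq_conj,
        show β * (n : Fr p) = α * n + -((α - β) * n) by ring, AddChar.map_add_eq_mul]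
      ring
  rw [sum_congr rfl h2, sum_comm]
  refine sum_congr rfl fun β _ => ?_
  rw [← sum_filter, kF, Complex.ofReal_sum, sum_mul]
  exact sum_congr rfl fun α _ => by push_cast; rfl

lemma kF_zero (R : ℕ) : kF R (0 : Fr p) = Gs p R := by
  rw [← Gs_eq, kF]
  simp only [sub_zero, filter_mem_eq_inter, inter_self]
  exact sum_congr rfl fun α _ => (sq _).symm

lemma abs_kF_le (R : ℕ) (β : Fr p) : |kF R β| ≤ Gs p R * ∏ i, hl (p i) (β i) :=
  (abs_sum_le_sum_abs _ _).trans (by simpa only [abs_mul] using corr_le R β)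

lemma sum_abs_kF_le (R : ℕ) : ∑ β : Fr p, |kF R β| ≤ ((Fq p R).card : ℝ) ^ 2 := by
  have h1 : ∀ β : Fr p, |kF R β| ≤ ∑ α ∈ Fq p R, if α - β ∈ Fq p R then (1 : ℝ) else 0 := by
    intro β
    refine (abs_sum_le_sum_abs _ _).trans ?_
    rw [← sum_filter]
    refine sum_le_sum fun α _ => ?_
    rw [abs_mul]
    exact mul_le_one₀ (abs_wF_le _) (abs_nonneg _) (abs_wF_le _)
  refine (sum_le_sum fun β _ => h1 β).trans ?_
  rw [sum_comm, sq, ← nsmul_eq_mul]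
  refine sum_le_card_nsmul _ _ _ fun α _ => ?_
  rw [← sum_filter, sum_const, nsmul_eq_mul, mul_one]
  exact_mod_cast card_le_card_of_injOn (fun β => α - β) (fun β hβ => (mem_filter.1 hβ).2)
    (fun a _ b _ h => by simpa using h)

/-- The frequencies occurring in `|lam|²` have denominator at most `R ^ 2`. -/
lemma kF_supp {R : ℕ} {β : Fr p} (h : kF R β ≠ 0) : ∏ i ∈ supp p β, p i ≤ R ^ 2 := by
  obtain ⟨α, hα, -⟩ := exists_ne_zero_of_sum_ne_zero h
  rw [mem_filter, mem_Fq, mem_Fq] at hα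
  have hs : supp p β ⊆ supp p α ∪ supp p (α - β) := by
    intro i
    simp only [mem_union, mem_supp, Pi.sub_apply]
    intro h1; by_contra h2; push Not at h2
    rw [h2.1, zero_sub, neg_eq_zero] at h2; exact h1 h2.2
  have h1 : ∀ i, 1 ≤ p i := fun i => (Fact.out : (p i).Prime).one_lt.le
  calc _ ≤ ∏ i ∈ supp p α ∪ supp p (α - β), p i :=
        prod_le_prod_of_subset_of_one_le' hs fun i _ _ => h1 i
    _ ≤ (∏ i ∈ supp p α ∪ supp p (α - β), p i) * ∏ i ∈ supp p α ∩ supp p (α - β), p i :=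
        Nat.le_mul_of_pos_right _ (prod_pos fun i _ => h1 i)
    _ = _ := prod_union_inter
    _ ≤ R * R := Nat.mul_le_mul hα.1 hα.2
    _ = R ^ 2 := (sq R).symm

lemma norm_lam_sq_le (R : ℕ) (n : ℤ) : ‖lam p R n‖ ^ 2 ≤ ((Fq p R).card : ℝ) ^ 2 := by
  refine pow_le_pow_left₀ (norm_nonneg _) ?_ 2
  refine (norm_sum_le _ _).trans ?_
  rw [← mul_one ((Fq p R).card : ℝ), ← nsmul_eq_mul]
  refine sum_le_card_nsmul _ _ _ fun α _ => ?_
  rw [norm_mul, norm_Psi, mul_one, Complex.norm_real]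
  exact abs_wF_le α

/-- `lam` attains its maximal value at the integers without small prime factors. -/
lemma lam_coprime (R : ℕ) {n : ℤ} (hn : ∀ i, ((n : ℤ) : ZMod (p i)) ≠ 0) :
    lam p R n = Gs p R := by
  have h := sum_Fq (p := p) R (fun i a => (gl (p i) a : ℂ) * ZMod.stdAddChar (a * (n : ZMod (p i))))
    (fun i => by simp [gl])
  have e : lam p R n = ∑ α ∈ Fq p R,
      ∏ i, (gl (p i) (α i) : ℂ) * ZMod.stdAddChar (α i * (n : ZMod (p i))) := by
    refine sum_congr rfl fun α _ => ?_
    rw [prod_mul_distrib, wF, Complex.ofReal_prod, Psi_apply]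
    rfl
  rw [e, h, Gs, Complex.ofReal_sum]
  refine sum_congr rfl fun S _ => ?_
  rw [Complex.ofReal_prod]
  refine prod_congr rfl fun i _ => ?_
  have h0 : ∑ a : ZMod (p i), ZMod.stdAddChar (a * (n : ZMod (p i))) = (0 : ℂ) := by
    have := AddChar.sum_mulShift (n : ZMod (p i)) (ZMod.isPrimitive_stdAddChar (p i))
    rw [if_neg (hn i)] at this
    simpa using this
  rw [← add_sum_erase _ _ (mem_univ 0), zero_mul, AddChar.map_zero_eq_one] at h0
  rw [sum_congr rfl (g := fun a => ((-1 / ((p i : ℝ) - 1) : ℝ) : ℂ) *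
    ZMod.stdAddChar (a * (n : ZMod (p i)))) fun a ha => by rw [gl, if_neg (ne_of_mem_erase ha)],
    ← mul_sum, eq_neg_of_add_eq_zero_right h0]
  push_cast
  ring

end char
end GT

namespace GT
open Finset Function
open scoped BigOperators ComplexConjugate

set_option linter.unusedSectionVars false

/-! ### Correlations along linear forms on boxes -/

section local_factor
variable {J σ : Type} [Fintype J] [Fintype σ] [DecidableEq J] [DecidableEq σ]

/-- The relations modulo `q` between the linear forms with coefficients `ℓ`. -/
abbrev Rel (q : ℕ) (ℓ : J → σ → ℤ) (v : J → ZMod q) : Prop :=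
  ∀ s, ∑ j, (ℓ j s : ZMod q) * v j = 0

/-- The local factor at `q` in the estimate for correlations along the forms `ℓ`. -/
noncomputable def Vl (q : ℕ) [NeZero q] (ℓ : J → σ → ℤ) : ℝ :=
  ∑ v : J → ZMod q with Rel q ℓ v, ∏ j, hl q (v j)

/-- Relations with support exactly `U` are determined by their values on all of `U` but two elements:
each of the forms `j`, `j'` has a variable absent from the other, so both coefficients can be
solved for. -/
lemma rel_card {q : ℕ} [Fact q.Prime] {ℓ : J → σ → ℤ}
    (h2 : ∀ j j', j ≠ j' → ∃ s, (ℓ j s : ZMod q) ≠ 0 ∧ ℓ j' s = 0) {U : Finset J} {j j' : J}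
    (hj : j ∈ U) (hj' : j' ∈ U) (hjj : j ≠ j') :
    (univ.filter fun v : J → ZMod q => Rel q ℓ v ∧ (univ.filter fun i => v i ≠ 0) = U).card ≤
      (q - 1) ^ (U.card - 2) := by
  set U' := (U.erase j).erase j' with hU'
  have hc : U'.card = U.card - 2 := by
    rw [hU', card_erase_of_mem (mem_erase.2 ⟨hjj.symm, hj'⟩), card_erase_of_mem hj]; rfl
  have hpi : (Fintype.piFinset fun i : J => if i ∈ U' then (univ : Finset (ZMod q)).erase 0
      else {0}).card = (q - 1) ^ (U.card - 2) := by
    rw [Fintype.card_piFinset, ← hc, ← prod_const, ← prod_subset (subset_univ U')]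
    · refine prod_congr rfl fun i hi => ?_
      rw [if_pos hi, card_erase_of_mem (mem_univ _), card_univ, ZMod.card]
    · intro i _ hi
      rw [if_neg hi, card_singleton]
  rw [← hpi]
  refine card_le_card_of_injOn (fun v => update (update v j 0) j' 0) ?_ ?_
  · intro v hv
    rw [mem_coe, mem_filter] at hv
    rw [mem_coe, Fintype.mem_piFinset]
    intro i
    have hi : v i ≠ 0 ↔ i ∈ U := by rw [← hv.2.2]; simp
    by_cases h1 : i = j'
    · subst h1; simp [hU']
    · change update (update v j 0) j' 0 i ∈ _
      rw [update_of_ne h1]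
      by_cases h3 : i = j
      · subst h3; simp [hU']
      · rw [update_of_ne h3]
        have : i ∈ U' ↔ i ∈ U := by simp [hU', h1, h3]
        by_cases h4 : i ∈ U
        · rw [if_pos (this.2 h4)]; simpa using hi.2 h4
        · rw [if_neg (fun h => h4 (this.1 h))]; simpa using fun h => h4 (hi.1 h)
  · intro v hv w hw h
    rw [mem_coe, mem_filter] at hv hw
    have hoff : ∀ i, i ≠ j → i ≠ j' → v i - w i = 0 := by
      intro i h1 h3
      have := congrFun h i
      simp only [update_of_ne h3, update_of_ne h1] at this
      rw [this, sub_self]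
    have hrel : ∀ s, ∑ i, (ℓ i s : ZMod q) * (v i - w i) = 0 := by
      intro s
      simp only [mul_sub, sum_sub_distrib, hv.2.1 s, hw.2.1 s, sub_self]
    have key : ∀ a b : J, a ≠ b → (∀ i, i ≠ a → i ≠ b → v i - w i = 0) → v a = w a := by
      intro a b hab ho
      obtain ⟨s, hs1, hs2⟩ := h2 a b hab
      have h5 := hrel s
      rw [sum_eq_single a] at h5
      · exact sub_eq_zero.1 ((mul_eq_zero.1 h5).resolve_left hs1)
      · intro i _ hi
        by_cases hib : i = b
        · rw [hib, hs2, Int.cast_zero, zero_mul]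
        · rw [ho i hi hib, mul_zero]
      · simp
    ext i
    by_cases h1 : i = j
    · rw [h1]; exact key j j' hjj hoff
    · by_cases h3 : i = j'
      · rw [h3]; exact key j' j hjj.symm fun i a b => hoff i b a
      · exact sub_eq_zero.1 (hoff i h1 h3)

/-- A nontrivial relation between the forms involves at least two of them, and is determined
by the remaining coefficients: this gives the saving of `(q - 1) ^ 2`. -/
lemma Vl_le {q : ℕ} [Fact q.Prime] {ℓ : J → σ → ℤ} (h1 : ∀ j, ∃ s, (ℓ j s : ZMod q) ≠ 0)
    (h2 : ∀ j j', j ≠ j' → ∃ s, (ℓ j s : ZMod q) ≠ 0 ∧ ℓ j' s = 0) :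
    Vl q ℓ ≤ 1 + 6 ^ Fintype.card J / ((q : ℝ) - 1) ^ 2 := by
  have hq2 := (Fact.out : q.Prime).two_le
  have hq : (2 : ℝ) ≤ q := by exact_mod_cast hq2
  have hq0 : (0 : ℝ) < q - 1 := by linarith
  have hU : ∀ U : Finset J, ∑ v : J → ZMod q with Rel q ℓ v ∧
      (univ.filter fun i => v i ≠ 0) = U, ∏ j, hl q (v j) ≤
      (if U = ∅ then 1 else 0) + 3 ^ Fintype.card J / ((q : ℝ) - 1) ^ 2 := by
    intro U
    have hpos : (0 : ℝ) ≤ 3 ^ Fintype.card J / ((q : ℝ) - 1) ^ 2 := by positivity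
    have hconst : ∀ v ∈ (univ.filter fun v : J → ZMod q => Rel q ℓ v ∧
        (univ.filter fun i => v i ≠ 0) = U), ∏ j, hl q (v j) = (3 / ((q : ℝ) - 1)) ^ U.card := by
      intro v hv
      have hvU := (mem_filter.1 hv).2.2
      rw [← prod_const, ← prod_subset (subset_univ U)]
      · refine prod_congr rfl fun i hi => ?_
        rw [← hvU, mem_filter] at hi
        rw [hl, if_neg hi.2]
      · intro i _ hi
        rw [← hvU, mem_filter] at hi
        have : v i = 0 := by by_contra h; exact hi ⟨mem_univ _, h⟩
        rw [hl, if_pos this]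
    rw [sum_congr rfl hconst, sum_const, nsmul_eq_mul]
    by_cases hUe : U = ∅
    · rw [if_pos hUe, hUe, card_empty, pow_zero, mul_one]
      refine le_trans ?_ (le_add_of_nonneg_right hpos)
      norm_cast
      refine card_le_one.2 fun v hv w hw => ?_
      have hz : ∀ v ∈ (univ.filter fun v : J → ZMod q => Rel q ℓ v ∧
        (univ.filter fun i => v i ≠ 0) = ∅), v = 0 := by
        intro v hv
        ext i
        have := (mem_filter.1 hv).2.2
        have h3 := filter_eq_empty_iff.1 this (mem_univ i)
        simpa using h3
      rw [hz v hv, hz w hw]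
    · rw [if_neg hUe, zero_add]
      obtain ⟨j, hj⟩ := nonempty_iff_ne_empty.2 hUe
      by_cases hex : ∃ j' ∈ U, j ≠ j'
      · obtain ⟨j', hj', hjj⟩ := hex
        have hc := rel_card h2 hj hj' hjj
        have hU2 : 2 ≤ U.card := one_lt_card.2 ⟨j, hj, j', hj', hjj⟩
        obtain ⟨u, hu⟩ := Nat.exists_eq_add_of_le hU2
        have hc' : ((univ.filter fun v : J → ZMod q => Rel q ℓ v ∧
            (univ.filter fun i => v i ≠ 0) = U).card : ℝ) ≤ ((q : ℝ) - 1) ^ u := by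
          rw [hu, Nat.add_sub_cancel_left] at hc
          have : (((q - 1 : ℕ) : ℝ)) = (q : ℝ) - 1 := by
            rw [Nat.cast_sub (by omega), Nat.cast_one]
          rw [← this]; exact_mod_cast hc
        refine (mul_le_mul_of_nonneg_right hc' (by positivity)).trans ?_
        have h3 : ((q : ℝ) - 1) ^ u * (3 / ((q : ℝ) - 1)) ^ U.card =
            3 ^ U.card / ((q : ℝ) - 1) ^ 2 := by
          rw [hu, div_pow, pow_add (_ - 1 : ℝ)]
          field_simp
        rw [h3]
        gcongr
        · norm_num
        · exact card_le_univ U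
      · push Not at hex
        have hU1 : U = {j} := by
          ext i; rw [mem_singleton]; exact ⟨fun h => (hex i h).symm, fun h => h ▸ hj⟩
        have : (univ.filter fun v : J → ZMod q => Rel q ℓ v ∧
            (univ.filter fun i => v i ≠ 0) = U) = ∅ := by
          refine filter_eq_empty_iff.2 fun v _ => ?_
          rintro ⟨hr, hs⟩
          obtain ⟨s, hs1⟩ := h1 j
          have hv : ∀ i, v i ≠ 0 ↔ i = j := by
            intro i
            have : i ∈ univ.filter (fun i => v i ≠ 0) ↔ i ∈ U := by rw [hs]
            simpa [hU1] using this
          have h5 := hr s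
          rw [sum_eq_single j] at h5
          · exact ((hv j).2 rfl) ((mul_eq_zero.1 h5).resolve_left hs1)
          · intro i _ hi
            have : v i = 0 := by by_contra h; exact hi ((hv i).1 h)
            rw [this, mul_zero]
          · simp
        rw [this, card_empty, Nat.cast_zero, zero_mul]
        exact hpos
  rw [Vl, ← sum_fiberwise_of_maps_to (t := (univ : Finset (Finset J)))
    (g := fun v : J → ZMod q => univ.filter fun i => v i ≠ 0) (fun _ _ => mem_univ _)]
  simp only [filter_filter]
  refine (sum_le_sum fun U _ => hU U).trans ?_
  rw [sum_add_distrib, sum_ite_eq' univ, if_pos (mem_univ _), sum_const, card_univ,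
    Fintype.card_finset, nsmul_eq_mul]
  apply le_of_eq
  push_cast
  rw [← mul_div_assoc, ← mul_pow]
  norm_num

end local_factor

section main
variable {κ : Type} [Fintype κ] [DecidableEq κ] {p : κ → ℕ} [∀ i, Fact (p i).Prime]
variable {J σ : Type} [Fintype J] [Fintype σ] [DecidableEq J] [DecidableEq σ]

/-- The frequency of the variable `z s` in the product of the characters `b j` of the forms. -/
def freq (W : ℕ) (ℓ : J → σ → ℤ) (b : J → Fr p) (s : σ) : Fr p :=
  ∑ j, (W : Fr p) * (ℓ j s : Fr p) * b j

/-- The contribution of the characters `b j` to the average in `lam_avg`. -/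
noncomputable def Tb (R : ℕ) (W : ℕ) (ℓ : J → σ → ℤ) (c : J → ℤ) (B : ℕ) (b : J → Fr p) : ℂ :=
  (∏ j, (kF R (b j) : ℂ)) * Psi (∑ j, b j * (c j : Fr p)) *
    ∏ s, ((∑ n ∈ range B, Psi ((n : Fr p) * freq W ℓ b s)) / B)

lemma Psi_sum {ι : Type} (S : Finset ι) (x : ι → Fr p) : Psi (∑ i ∈ S, x i) = ∏ i ∈ S, Psi (x i) := by
  classical
  induction S using Finset.induction_on with
  | empty => simp
  | insert a S ha ih => rw [sum_insert ha, prod_insert ha, AddChar.map_add_eq_mul, ih]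

/-- The average of a product of values of `|lam|²` as a sum over tuples of frequencies. -/
lemma avg_expand (R : ℕ) (W : ℕ) (ℓ : J → σ → ℤ) (c : J → ℤ) (B : ℕ) :
    ((𝔼 z : σ → Fin B, ∏ j, ‖lam p R (c j + W * ∑ s, ℓ j s * ((z s : ℕ) : ℤ))‖ ^ 2 : ℝ) : ℂ) =
      ∑ b : J → Fr p, Tb R W ℓ c B b := by
  rw [Fintype.expect_eq_sum_div_card]
  push_cast
  have h1 : ∀ z : σ → Fin B, ∏ j, (‖lam p R (c j + W * ∑ s, ℓ j s * ((z s : ℕ) : ℤ))‖ : ℂ) ^ 2 =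
      ∑ b : J → Fr p, (∏ j, (kF R (b j) : ℂ)) * Psi (∑ j, b j * (c j : Fr p)) *
        ∏ s, Psi (((z s : ℕ) : Fr p) * freq W ℓ b s) := by
    intro z
    have h2 : ∀ j, (‖lam p R (c j + W * ∑ s, ℓ j s * ((z s : ℕ) : ℤ))‖ : ℂ) ^ 2 = ∑ β : Fr p,
      (kF R β : ℂ) * Psi (β * ((c j + W * ∑ s, ℓ j s * ((z s : ℕ) : ℤ) : ℤ) : Fr p)) := by
      intro j; rw [← lam_sq]; push_cast; rfl
    rw [prod_congr rfl fun j _ => h2 j, prod_univ_sum, Fintype.piFinset_univ]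
    refine sum_congr rfl fun b _ => ?_
    rw [prod_mul_distrib, mul_assoc]
    congr 1
    rw [← Psi_sum, ← Psi_sum, ← AddChar.map_add_eq_mul]
    congr 1
    push_cast
    simp only [freq, mul_add, mul_sum, sum_add_distrib]
    congr 1
    rw [sum_comm]
    refine sum_congr rfl fun s _ => sum_congr rfl fun j _ => by ring
  rw [sum_congr rfl fun z _ => h1 z, sum_comm, sum_div]
  refine sum_congr rfl fun b _ => ?_
  rw [← mul_sum, Tb, mul_div_assoc]
  congr 1
  rw [prod_div_distrib, prod_const, card_univ, Fintype.card_fun, Fintype.card_fin]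
  simp only [← Fin.sum_univ_eq_sum_range (fun n => Psi ((n : Fr p) * _))]
  rw [prod_univ_sum, Fintype.piFinset_univ]
  push_cast
  rfl

lemma Tb_zero (R : ℕ) (W : ℕ) (ℓ : J → σ → ℤ) (c : J → ℤ) {B : ℕ} (hB : 0 < B) :
    Tb R W ℓ c B (0 : J → Fr p) = (Gs p R : ℂ) ^ Fintype.card J := by
  have hB' : (B : ℂ) ≠ 0 := by exact_mod_cast hB.ne'
  simp [Tb, freq, kF_zero, hB']

lemma norm_avg_le_one (x : Fr p) (B : ℕ) : ‖(∑ n ∈ range B, Psi ((n : Fr p) * x)) / (B : ℂ)‖ ≤ 1 := by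
  rw [norm_div, Complex.norm_natCast]
  refine div_le_one_of_le₀ ((norm_sum_le _ _).trans ?_) (by positivity)
  simp

lemma norm_Tb_le (R : ℕ) (W : ℕ) (ℓ : J → σ → ℤ) (c : J → ℤ) (B : ℕ) (b : J → Fr p) :
    ‖Tb R W ℓ c B b‖ ≤ ∏ j, |kF R (b j)| := by
  rw [Tb, norm_mul, norm_mul, norm_Psi, mul_one, norm_prod, norm_prod]
  simp only [Complex.norm_real]
  exact mul_le_of_le_one_right (prod_nonneg fun _ _ => abs_nonneg _)
    (prod_le_one (fun _ _ => norm_nonneg _) fun _ _ => norm_avg_le_one _ _)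

/-- Unless the frequencies satisfy the relation modulo every `p i`, the exponential sum in some
variable is incomplete, hence bounded by its period, and the term is negligible. -/
lemma norm_Tb_le' (hp : Injective p) {R : ℕ} {W : ℕ} (hW : ∀ i, (W : ZMod (p i)) ≠ 0)
    (ℓ : J → σ → ℤ) (c : J → ℤ) {B : ℕ} (hB : 0 < B) {b : J → Fr p}
    (hb : ¬ ∀ i, Rel (p i) ℓ (fun j => b j i)) :
    ‖Tb R W ℓ c B b‖ ≤ (∏ j, |kF R (b j)|) * ((R : ℝ) ^ (2 * Fintype.card J) / B) := by
  by_cases hk : ∃ j, kF R (b j) = 0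
  · obtain ⟨j, hj⟩ := hk
    have := norm_Tb_le R W ℓ c B b
    rw [prod_eq_zero (mem_univ j) (by rw [hj, abs_zero])] at this ⊢
    simpa using this
  push Not at hk
  have hs : ∃ s, freq W ℓ b s ≠ 0 := by
    by_contra h
    push Not at h
    refine hb fun i s => ?_
    have := congrFun (h s) i
    simp only [freq, Finset.sum_apply, Pi.mul_apply, Pi.natCast_apply, Pi.intCast_apply,
      Pi.zero_apply, mul_assoc, ← mul_sum] at this
    exact (mul_eq_zero.1 this).resolve_left (hW i)
  obtain ⟨s, hs⟩ := hs
  have hD : ∏ i ∈ supp p (freq W ℓ b s), p i ≤ R ^ (2 * Fintype.card J) := by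
    have h1 : ∀ i, 1 ≤ p i := fun i => (Fact.out : (p i).Prime).one_lt.le
    have hsub : ∀ i ∈ supp p (freq W ℓ b s), ∃ j, i ∈ supp p (b j) := by
      intro i hi
      by_contra h
      push Not at h
      simp only [mem_supp, not_not] at h
      apply mem_supp.1 hi
      simp [freq, Finset.sum_apply, h]
    calc ∏ i ∈ supp p (freq W ℓ b s), p i ≤ ∏ i ∈ univ.biUnion (fun j => supp p (b j)), p i :=
          prod_le_prod_of_subset_of_one_le' (fun i hi => by
            obtain ⟨j, hj⟩ := hsub i hi
            exact mem_biUnion.2 ⟨j, mem_univ _, hj⟩) fun i _ _ => h1 i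
      _ ≤ ∏ j, ∏ i ∈ supp p (b j), p i := by
          have : ∀ S : Finset J, ∏ i ∈ S.biUnion (fun j => supp p (b j)), p i ≤
              ∏ j ∈ S, ∏ i ∈ supp p (b j), p i := by
            intro S
            induction S using Finset.induction_on with
            | empty => simp
            | insert a S ha ih =>
              rw [biUnion_insert, prod_insert ha]
              refine le_trans ?_ (Nat.mul_le_mul_left _ ih)
              rw [← prod_union_inter]
              exact Nat.le_mul_of_pos_right _ (prod_pos fun i _ => h1 i)
          exact this univ
      _ ≤ ∏ _j : J, R ^ 2 := prod_le_prod' fun j _ => kF_supp (hk j)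
      _ = R ^ (2 * Fintype.card J) := by rw [prod_const, card_univ, ← pow_mul]
  rw [Tb, norm_mul, norm_mul, norm_Psi, mul_one, norm_prod, norm_prod]
  simp only [Complex.norm_real]
  refine mul_le_mul_of_nonneg_left ?_ (prod_nonneg fun _ _ => abs_nonneg _)
  rw [← mul_prod_erase univ _ (mem_univ s)]
  refine (mul_le_of_le_one_right (norm_nonneg _)
    (prod_le_one (fun _ _ => norm_nonneg _) fun _ _ => norm_avg_le_one _ _)).trans ?_
  rw [norm_div, Complex.norm_natCast]
  refine div_le_div_of_nonneg_right ((norm_sum_Psi_le hp hs B).trans ?_) (by positivity)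
  exact_mod_cast hD

/-- The sum over tuples of frequencies satisfying all relations factors over the primes. -/
lemma sum_rel (ℓ : J → σ → ℤ) :
    ∑ b : J → Fr p with ∀ i, Rel (p i) ℓ (fun j => b j i), ∏ j, ∏ i, hl (p i) (b j i) =
      ∏ i, Vl (p i) ℓ := by
  simp only [Vl]
  rw [prod_univ_sum]
  refine sum_nbij' (fun b i j => b j i) (fun b j i => b i j) ?_ ?_ (fun _ _ => rfl)
    (fun _ _ => rfl) ?_
  · intro b hb
    rw [Fintype.mem_piFinset]
    intro i
    rw [mem_filter]
    exact ⟨mem_univ _, (mem_filter.1 hb).2 i⟩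
  · intro b hb
    rw [Fintype.mem_piFinset] at hb
    exact mem_filter.2 ⟨mem_univ _, fun i => (mem_filter.1 (hb i)).2⟩
  · intro b _
    exact prod_comm

/-- Correlations of `|lam|²` along linear forms on a box of side `B`. -/
theorem lam_avg (hp : Injective p) {R : ℕ} (hR : 1 ≤ R) {W : ℕ}
    (hW : ∀ i, (W : ZMod (p i)) ≠ 0) (ℓ : J → σ → ℤ) (c : J → ℤ) {B : ℕ} (hB : 0 < B) :
    |(𝔼 z : σ → Fin B, ∏ j, ‖lam p R (c j + W * ∑ s, ℓ j s * ((z s : ℕ) : ℤ))‖ ^ 2) -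
      Gs p R ^ Fintype.card J| ≤ Gs p R ^ Fintype.card J * (∏ i, Vl (p i) ℓ - 1) +
        ((Fq p R).card : ℝ) ^ (2 * Fintype.card J) * ((R : ℝ) ^ (2 * Fintype.card J) / B) := by
  classical
  have hG : 0 ≤ Gs p R := zero_le_one.trans (one_le_Gs hR)
  rw [← Real.norm_eq_abs, ← Complex.norm_real, Complex.ofReal_sub, avg_expand, Complex.ofReal_pow,
    ← Tb_zero R W ℓ c hB, ← add_sum_erase _ _ (mem_univ (0 : J → Fr p)), add_sub_cancel_left]
  refine (norm_sum_le _ _).trans ?_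
  have hle : ∀ b : J → Fr p, ‖Tb R W ℓ c B b‖ ≤
      (if ∀ i, Rel (p i) ℓ (fun j => b j i) then
        Gs p R ^ Fintype.card J * ∏ j, ∏ i, hl (p i) (b j i) else 0) +
      (∏ j, |kF R (b j)|) * ((R : ℝ) ^ (2 * Fintype.card J) / B) := by
    intro b
    split_ifs with h
    · refine le_trans ?_ (le_add_of_nonneg_right (mul_nonneg
        (prod_nonneg fun _ _ => abs_nonneg _) (by positivity)))
      refine (norm_Tb_le R W ℓ c B b).trans ?_
      refine (prod_le_prod (fun _ _ => abs_nonneg _) fun j _ => abs_kF_le R (b j)).trans ?_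
      rw [prod_mul_distrib, prod_const, card_univ]
    · rw [zero_add]
      exact norm_Tb_le' hp hW ℓ c hB h
  refine (sum_le_sum fun b _ => hle b).trans ?_
  rw [sum_add_distrib]
  refine add_le_add (le_of_eq ?_) ?_
  · rw [mul_sub, mul_one, ← sum_rel, mul_sum, sum_filter]
    rw [← add_sum_erase _ _ (mem_univ (0 : J → Fr p))]
    rw [if_pos (fun i s => by simp)]
    simp [hl]
  · rw [← sum_mul]
    refine mul_le_mul_of_nonneg_right ?_ (by positivity)
    refine (sum_le_univ_sum_of_nonneg fun b => prod_nonneg fun _ _ => abs_nonneg _).trans ?_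
    have h := prod_univ_sum (fun _ : J => (univ : Finset (Fr p))) (fun _ β => |kF R β|)
    rw [Fintype.piFinset_univ] at h
    rw [← h, prod_const, card_univ, pow_mul]
    exact pow_le_pow_left₀ (sum_nonneg fun _ _ => abs_nonneg _) (sum_abs_kF_le R) _

end main
end GT

namespace GT
open Finset Function
open scoped BigOperators

set_option linter.unusedSectionVars false

/-! ### From boxes to cyclic groups -/

section torus
variable {J σ : Type} [Fintype J] [Fintype σ] [DecidableEq J] [DecidableEq σ]
variable {N : ℕ} [Fact N.Prime]

/-- A nonzero linear form takes all its values equally often. -/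
lemma expect_lin (c : σ → ZMod N) {s : σ} (hs : c s ≠ 0) (g : ZMod N → ℝ) :
    𝔼 Y : σ → ZMod N, g (∑ t, c t * Y t) = 𝔼 a, g a := by
  rw [← expect_update s]
  rw [expect_congr rfl (g := fun _ => 𝔼 a, g a) fun Y _ => ?_]
  · simp
  simp only [lin_update]
  refine Fintype.expect_equiv (((Equiv.subRight (Y s)).trans (Equiv.mulLeft₀ (c s) hs)).trans
    (Equiv.addLeft (∑ t, c t * Y t))) _ _ fun b => ?_
  simp

/-- Few residues are within distance `K` of the ends of `[0, N)`. -/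
lemma expect_edge (K : ℕ) :
    𝔼 a : ZMod N, (if K ≤ a.val ∧ a.val + K < N then (0 : ℝ) else 1) ≤ 2 * K / N := by
  have hN : (0 : ℝ) < N := by exact_mod_cast (Fact.out : N.Prime).pos
  rw [Fintype.expect_eq_sum_div_card, ZMod.card]
  refine div_le_div_of_nonneg_right ?_ hN.le
  have h1 : ∑ a : ZMod N, (if K ≤ a.val ∧ a.val + K < N then (0 : ℝ) else 1) =
      ((univ.filter fun a : ZMod N => ¬ (K ≤ a.val ∧ a.val + K < N)).card : ℝ) := by
    rw [← sum_boole]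
    refine sum_congr rfl fun a _ => ?_
    split_ifs <;> simp_all
  rw [h1]
  have h2 : (univ.filter fun a : ZMod N => ¬ (K ≤ a.val ∧ a.val + K < N)).card ≤
      (range K ∪ Ico (N - K) N).card := by
    refine card_le_card_of_injOn (fun a => a.val) ?_ fun a _ b _ h => ZMod.val_injective N h
    intro a ha
    have ha' := (mem_filter.1 (mem_coe.1 ha)).2
    have := ZMod.val_lt a
    rw [mem_coe, mem_union, mem_range, mem_Ico]
    simp only
    omega
  have h3 := h2.trans (card_union_le _ _)
  rw [card_range, Nat.card_Ico] at h3
  have h4 : (univ.filter fun a : ZMod N => ¬ (K ≤ a.val ∧ a.val + K < N)).card ≤ 2 * K := by omega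
  exact_mod_cast h4

/-- Averages along linear forms on `ZMod N` are compared with averages on boxes, translated by
integers: the forms rarely come close to `0` modulo `N`. -/
lemma torus_to_box (ℓ : J → σ → ℤ) {k B : ℕ} (hℓ : ∀ j s, |ℓ j s| ≤ k)
    (hne : ∀ j, ∃ s, (ℓ j s : ZMod N) ≠ 0) (hB : 0 < B) {g : ℤ → ℝ} {A E : ℝ} (hA : 1 ≤ A)
    (hE : 0 ≤ E) (hg0 : ∀ n, 0 ≤ g n) (hgA : ∀ n, g n ≤ A)
    (hbox : ∀ c : J → ℤ, |𝔼 z : σ → Fin B, ∏ j, g (c j + ∑ s, ℓ j s * ((z s : ℕ) : ℤ)) - 1| ≤ E) :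
    |𝔼 Y : σ → ZMod N, ∏ j, g ((∑ s, (ℓ j s : ZMod N) * Y s).val : ℕ) - 1| ≤
      E + Fintype.card J * (2 * (Fintype.card σ * k * B : ℕ) / N * (2 * A ^ Fintype.card J)) := by
  have : NeZero B := ⟨hB.ne'⟩
  set K := Fintype.card σ * k * B with hK
  set F : (σ → ZMod N) → ℝ := fun Y => ∏ j, g ((∑ s, (ℓ j s : ZMod N) * Y s).val : ℕ) with hF
  have hF0 : ∀ Y, 0 ≤ F Y := fun Y => prod_nonneg fun _ _ => hg0 _
  have hFA : ∀ Y, F Y ≤ A ^ Fintype.card J := by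
    intro Y
    rw [← card_univ, ← prod_const]
    exact prod_le_prod (fun _ _ => hg0 _) fun _ _ => hgA _
  set H : (σ → ZMod N) → ℝ := fun Y => 𝔼 z : σ → Fin B, F (Y + fun s => ((z s : ℕ) : ZMod N))
    with hH
  have h1 : 𝔼 Y, F Y = 𝔼 Y, H Y := by
    have h : ∀ z : σ → Fin B, 𝔼 Y, F (Y + fun s => ((z s : ℕ) : ZMod N)) = 𝔼 Y, F Y := fun z =>
      Fintype.expect_equiv (Equiv.addRight fun s => ((z s : ℕ) : ZMod N)) _ _ fun Y => rfl
    rw [hH, expect_comm]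
    simp only [h, Fintype.expect_const]
  have hA1 : 1 ≤ A ^ Fintype.card J := one_le_pow₀ hA
  have h2 : ∀ Y, |H Y - 1| ≤ E + ∑ j, (if K ≤ (∑ s, (ℓ j s : ZMod N) * Y s).val ∧
      (∑ s, (ℓ j s : ZMod N) * Y s).val + K < N then (0 : ℝ) else 1) *
        (2 * A ^ Fintype.card J) := by
    intro Y
    by_cases hgood : ∀ j, K ≤ (∑ s, (ℓ j s : ZMod N) * Y s).val ∧
      (∑ s, (ℓ j s : ZMod N) * Y s).val + K < N
    · rw [sum_eq_zero fun j _ => by rw [if_pos (hgood j), zero_mul], add_zero]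
      convert hbox (fun j => ((∑ s, (ℓ j s : ZMod N) * Y s).val : ℕ)) using 3
      refine expect_congr rfl fun z _ => prod_congr rfl fun j _ => ?_
      congr 1
      obtain ⟨h5, h6⟩ := hgood j
      set a := ∑ s, (ℓ j s : ZMod N) * Y s with ha
      set t := ∑ s, ℓ j s * ((z s : ℕ) : ℤ) with ht
      have htK : |t| ≤ K := by
        refine (abs_sum_le_sum_abs _ _).trans ?_
        rw [hK, mul_assoc, Nat.cast_mul, ← card_univ, ← nsmul_eq_mul]
        refine sum_le_card_nsmul _ _ _ fun s _ => ?_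
        rw [abs_mul, Nat.cast_mul]
        refine mul_le_mul (hℓ j s) ?_ (abs_nonneg _) (by positivity)
        rw [abs_of_nonneg (by positivity)]
        exact_mod_cast (z s).2.le
      rw [abs_le] at htK
      have e1 : ∑ s, (ℓ j s : ZMod N) * (Y + fun s => ((z s : ℕ) : ZMod N)) s =
          (((a.val : ℕ) + t : ℤ) : ZMod N) := by
        push_cast
        rw [ZMod.natCast_zmod_val, ha, ht]
        push_cast
        rw [← sum_add_distrib]
        exact sum_congr rfl fun s _ => by simp [mul_add]
      rw [e1, ZMod.val_intCast, Int.emod_eq_of_lt] <;> omega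
    · push Not at hgood
      obtain ⟨j, hj⟩ := hgood
      have h3 : 0 ≤ H Y := expect_nonneg' fun z => hF0 _
      have h4 : H Y ≤ A ^ Fintype.card J := by
        refine (expect_mono fun z => hFA _).trans ?_
        simp
      have h5 := single_le_sum (f := fun j => (if K ≤ (∑ s, (ℓ j s : ZMod N) * Y s).val ∧
        (∑ s, (ℓ j s : ZMod N) * Y s).val + K < N then (0 : ℝ) else 1) *
        (2 * A ^ Fintype.card J)) (fun j _ => mul_nonneg (by split_ifs <;> norm_num)
          (by positivity)) (mem_univ j)
      rw [if_neg (fun h => absurd h.2 (not_lt.2 (hj h.1))), one_mul] at h5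
      rw [abs_le]
      constructor <;> linarith
  rw [h1]
  have h3 : 𝔼 Y, H Y - 1 = 𝔼 Y, (H Y - 1) := by
    rw [expect_sub_distrib]; simp
  rw [h3]
  refine (abs_expect_le _).trans ((expect_mono h2).trans ?_)
  rw [expect_add_distrib]
  rw [Fintype.expect_const, expect_sum_comm]
  gcongr
  rw [← card_univ, ← nsmul_eq_mul]
  refine sum_le_card_nsmul _ _ _ fun j _ => ?_
  rw [← expect_mul]
  obtain ⟨s, hs⟩ := hne j
  rw [expect_lin (fun s => (ℓ j s : ZMod N)) hs
    (fun a => if K ≤ a.val ∧ a.val + K < N then (0 : ℝ) else 1)]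
  exact mul_le_mul_of_nonneg_right (expect_edge K) (by positivity)

end torus
end GT

namespace GT
open Finset Function
open scoped BigOperators

set_option linter.unusedSectionVars false

/-! ### The linear forms condition for the majorant -/

section LFlam
variable {κ : Type} [Fintype κ] [DecidableEq κ] {p : κ → ℕ} [∀ i, Fact (p i).Prime]

lemma one_le_card_Fq {R : ℕ} (hR : 1 ≤ R) : 1 ≤ (Fq p R).card := by
  refine card_pos.2 ⟨0, mem_Fq.2 ?_⟩
  have : supp p 0 = ∅ := by simp [supp]
  rw [this, prod_empty]; exact hR

variable (p) in
/-- The normalised majorant `n ↦ |lam (W n + b)|² / Gs`. -/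
noncomputable def gW (R W : ℕ) (b : ℤ) (n : ℤ) : ℝ := ‖lam p R (W * n + b)‖ ^ 2 / Gs p R

lemma gW_nonneg {R : ℕ} (hR : 1 ≤ R) (W : ℕ) (b n : ℤ) : 0 ≤ gW p R W b n :=
  div_nonneg (by positivity) (zero_le_one.trans (one_le_Gs hR))

lemma gW_le {R : ℕ} (hR : 1 ≤ R) (W : ℕ) (b n : ℤ) : gW p R W b n ≤ ((Fq p R).card : ℝ) ^ 2 :=
  div_le_of_le_mul₀ (zero_le_one.trans (one_le_Gs hR)) (by positivity)
    ((norm_lam_sq_le R _).trans (le_mul_of_one_le_right (by positivity) (one_le_Gs hR)))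

/-- The majorant averages to nearly `1` along pairwise independent forms on boxes. -/
lemma gW_box (hp : Injective p) {R : ℕ} (hR : 1 ≤ R) {W : ℕ} (hW : ∀ i, (W : ZMod (p i)) ≠ 0)
    (b : ℤ) {J σ : Type} [Fintype J] [Fintype σ] [DecidableEq J] [DecidableEq σ] {ℓ : J → σ → ℤ}
    (h1 : ∀ i j, ∃ s, (ℓ j s : ZMod (p i)) ≠ 0)
    (h2 : ∀ i j j', j ≠ j' → ∃ s, (ℓ j s : ZMod (p i)) ≠ 0 ∧ ℓ j' s = 0) {M : ℕ}
    (hM : Fintype.card J ≤ M) {B : ℕ} (hB : 0 < B) (c : J → ℤ) :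
    |𝔼 z : σ → Fin B, ∏ j, gW p R W b (c j + ∑ s, ℓ j s * ((z s : ℕ) : ℤ)) - 1| ≤
      (∏ i, (1 + 6 ^ M / ((p i : ℝ) - 1) ^ 2) - 1) +
        ((Fq p R).card : ℝ) ^ (2 * M) * ((R : ℝ) ^ (2 * M) / B) := by
  have hG := one_le_Gs (p := p) hR
  have hG0 : 0 < Gs p R := by linarith
  have hGM : 1 ≤ Gs p R ^ Fintype.card J := one_le_pow₀ hG
  have h := lam_avg hp hR hW ℓ (fun j => W * c j + b) hB
  have e : 𝔼 z : σ → Fin B, ∏ j, gW p R W b (c j + ∑ s, ℓ j s * ((z s : ℕ) : ℤ)) =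
      (𝔼 z : σ → Fin B, ∏ j, ‖lam p R ((W * c j + b) + W * ∑ s, ℓ j s * ((z s : ℕ) : ℤ))‖ ^ 2) /
        Gs p R ^ Fintype.card J := by
    rw [expect_div]
    refine expect_congr rfl fun z _ => ?_
    simp only [gW]
    rw [prod_div_distrib, prod_const, card_univ]
    congr 1
    refine prod_congr rfl fun j _ => ?_
    congr 3
    ring
  rw [e, div_sub_one (by positivity), abs_div, abs_of_pos (lt_of_lt_of_le one_pos hGM),
    div_le_iff₀ (by positivity)]
  refine h.trans ?_
  rw [add_mul, mul_comm (Gs p R ^ _)]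
  have hF : (1 : ℝ) ≤ (Fq p R).card := by exact_mod_cast one_le_card_Fq hR
  have hR' : (1 : ℝ) ≤ R := by exact_mod_cast hR
  have hV : ∏ i, Vl (p i) ℓ ≤ ∏ i, (1 + 6 ^ M / ((p i : ℝ) - 1) ^ 2) := by
    refine prod_le_prod (fun i _ => sum_nonneg fun v _ => prod_nonneg fun j _ => hl_nonneg i _)
      fun i _ => (Vl_le (h1 i) (h2 i)).trans ?_
    gcongr
    norm_num
  refine add_le_add (mul_le_mul_of_nonneg_right (by linarith) (by positivity)) ?_
  refine le_trans ?_ (le_mul_of_one_le_right (by positivity) hGM)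
  gcongr

section forms
variable {m : ℕ}

/-- The coefficients of `psi j (mix τ x x')` as a linear form in the coordinates of `x`
(`false`) and of `x'` (`true`). -/
def coef (t : (_ : Fin (m + 2)) × Finset (Fin (m + 2))) (s : Fin (m + 2) × Bool) : ℤ :=
  if s.2 = decide (s.1 ∈ t.2) then ((s.1 : ℕ) : ℤ) - ((t.1 : ℕ) : ℤ) else 0

lemma psi_mix {N : ℕ} (t : (_ : Fin (m + 2)) × Finset (Fin (m + 2)))
    (Y : Fin (m + 2) × Bool → ZMod N) :
    psi t.1 (mix t.2 (fun i => Y (i, false)) fun i => Y (i, true)) =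
      ∑ s, (coef t s : ZMod N) * Y s := by
  rw [psi, Fintype.sum_prod_type]
  refine sum_congr rfl fun i _ => ?_
  rw [Fintype.sum_bool, mix]
  by_cases h : i ∈ t.2 <;> simp [coef, h]

lemma coef_abs (t : (_ : Fin (m + 2)) × Finset (Fin (m + 2))) (s : Fin (m + 2) × Bool) :
    |coef t s| ≤ (m + 2 : ℕ) := by
  have h1 := s.1.2
  have h2 := t.1.2
  rw [coef]
  split_ifs
  · rw [abs_le]; constructor <;> omega
  · simp; omega

lemma coef_ne {q : ℕ} [Fact q.Prime] (hq : m + 2 ≤ q)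
    (t : (_ : Fin (m + 2)) × Finset (Fin (m + 2))) {i : Fin (m + 2)} (hi : i ≠ t.1) :
    (coef t (i, decide (i ∈ t.2)) : ZMod q) ≠ 0 := by
  have := cast_sub_ne_zero hq hi
  rw [coef, if_pos rfl]
  push_cast
  exact this

lemma coef_exists {q : ℕ} [Fact q.Prime] (hq : m + 2 ≤ q)
    (t : (_ : Fin (m + 2)) × Finset (Fin (m + 2))) : ∃ s, (coef t s : ZMod q) ≠ 0 := by
  obtain ⟨i, hi⟩ := exists_ne t.1
  exact ⟨_, coef_ne hq t hi⟩

/-- For distinct pairs `t`, `t'` some variable occurs in the form of `t` and not in the form of `t'`. -/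
lemma coef_sep {q : ℕ} [Fact q.Prime] (hq : m + 2 ≤ q)
    {t t' : (_ : Fin (m + 2)) × Finset (Fin (m + 2))} (ht : t.1 ∉ t.2) (ht' : t'.1 ∉ t'.2)
    (h : t ≠ t') : ∃ s, (coef t s : ZMod q) ≠ 0 ∧ coef t' s = 0 := by
  by_cases h1 : t.1 = t'.1
  · have h2 : t.2 ≠ t'.2 := by
      intro h2
      exact h (by cases t; cases t'; simp_all)
    have h3 : ∃ i, ¬ (i ∈ t.2 ↔ i ∈ t'.2) := by
      by_contra h3; push Not at h3; exact h2 (Finset.ext h3)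
    obtain ⟨i, hi⟩ := h3
    have hit : i ≠ t.1 := by
      rintro rfl
      rw [← h1] at ht'
      exact hi ⟨fun h => absurd h ht, fun h => absurd h ht'⟩
    refine ⟨_, coef_ne hq t hit, ?_⟩
    rw [coef, if_neg]
    simpa using hi
  · refine ⟨_, coef_ne hq t (i := t'.1) (Ne.symm h1), ?_⟩
    rw [coef]
    split_ifs <;> simp

lemma expect_pair {X ι : Type} [Fintype X] [Nonempty X] [Fintype ι] [DecidableEq ι]
    (G : (ι → X) → (ι → X) → ℝ) : 𝔼 x, 𝔼 x', G x x' =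
      𝔼 Y : ι × Bool → X, G (fun i => Y (i, false)) (fun i => Y (i, true)) := by
  rw [← expect_product', univ_product_univ]
  refine Fintype.expect_equiv ⟨fun q s => if s.2 then q.2 s.1 else q.1 s.1,
    fun Y => (fun i => Y (i, false), fun i => Y (i, true)), fun q => by simp, fun Y => ?_⟩ _ _
    fun q => by simp
  funext s
  rcases s with ⟨i, _ | _⟩ <;> simp

/-- The majorant satisfies the linear forms condition. -/
theorem LF_lam (m : ℕ) (hp : Injective p) (hpm : ∀ i, m + 2 ≤ p i) {R : ℕ} (hR : 1 ≤ R) {W : ℕ}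
    (hW : ∀ i, (W : ZMod (p i)) ≠ 0) (b : ℤ) {N : ℕ} [Fact N.Prime] (hN : m + 2 ≤ N) {B : ℕ}
    (hB : 0 < B) {M : ℕ} (hM : (m + 2) * 2 ^ (m + 2) ≤ M) :
    LF (fun (j : Fin (m + 2)) x => (fun a : ZMod N => gW p R W b (a.val : ℕ)) (psi j x))
      ((∏ i, (1 + 6 ^ M / ((p i : ℝ) - 1) ^ 2) - 1) +
        ((Fq p R).card : ℝ) ^ (2 * M) * ((R : ℝ) ^ (2 * M) / B) +
        M * (2 * ((2 * (m + 2)) * (m + 2) * B : ℕ) / N * (2 * ((Fq p R).card : ℝ) ^ (2 * M)))) := by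
  intro T hT
  let J := ↥((univ : Finset (Fin (m + 2))).sigma T)
  have hcard : Fintype.card J ≤ M := by
    rw [Fintype.card_coe, card_sigma]
    refine le_trans ?_ hM
    refine (sum_le_card_nsmul univ (fun j => (T j).card) (2 ^ (m + 2)) fun j _ => ?_).trans ?_
    · exact (card_le_univ _).trans (by simp)
    · simp
  have hmem : ∀ t : J, t.1.1 ∉ t.1.2 := fun t => hT _ _ (mem_sigma.1 t.2).2
  have hF : (1 : ℝ) ≤ (Fq p R).card := by exact_mod_cast one_le_card_Fq hR
  have hR' : (1 : ℝ) ≤ R := by exact_mod_cast hR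
  have hprod : ∀ x x' : Fin (m + 2) → ZMod N, ∏ j, ∏ τ ∈ T j,
      (fun a : ZMod N => gW p R W b (a.val : ℕ)) (psi j (mix τ x x')) =
      ∏ t : J, gW p R W b ((psi t.1.1 (mix t.1.2 x x')).val : ℕ) := by
    intro x x'
    rw [prod_sigma', ← prod_coe_sort]
  simp only [hprod]
  rw [expect_pair]
  simp only [psi_mix]
  refine (torus_to_box (fun (t : J) s => coef t.1 s) (k := m + 2) (fun t s => coef_abs _ _)
    (fun t => coef_exists hN _) hB (A := ((Fq p R).card : ℝ) ^ 2) (one_le_pow₀ hF) ?_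
    (fun n => gW_nonneg hR W b n) (fun n => gW_le hR W b n)
    (gW_box hp hR hW b (fun i t => coef_exists (hpm i) _) (fun i t t' h => coef_sep (hpm i)
      (hmem t) (hmem t') (fun h' => h (Subtype.ext h'))) hcard hB)).trans ?_
  · have : 1 ≤ ∏ i, (1 + 6 ^ M / ((p i : ℝ) - 1) ^ 2) := by
      calc (1 : ℝ) = ∏ _i : κ, 1 := prod_const_one.symm
        _ ≤ _ := prod_le_prod (fun _ _ => zero_le_one) fun i _ => by
          rw [le_add_iff_nonneg_right]; positivity
    have h2 : (0 : ℝ) ≤ ((Fq p R).card : ℝ) ^ (2 * M) * ((R : ℝ) ^ (2 * M) / B) := by positivity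
    linarith
  · rw [← pow_mul, Fintype.card_prod, Fintype.card_fin, Fintype.card_bool, mul_comm (m + 2) 2]
    gcongr

end forms
end LFlam
end GT

namespace GT
open Finset Function
open scoped BigOperators

set_option linter.unusedSectionVars false

/-! ### Choice of parameters -/

section Sizes
variable {κ : Type} [Fintype κ] [DecidableEq κ] {p : κ → ℕ} [∀ i, Fact (p i).Prime]

lemma dvd_prod_iff (hp : Injective p) (S : Finset κ) (i : κ) : p i ∣ ∏ j ∈ S, p j ↔ i ∈ S := by
  constructor
  · intro h
    obtain ⟨j, hj, hd⟩ := (Prime.dvd_finsetProd_iff (Fact.out : (p i).Prime).prime _).1 h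
    have := (Nat.prime_dvd_prime_iff_eq (Fact.out : (p i).Prime) (Fact.out : (p j).Prime)).1 hd
    rwa [hp this]
  · exact fun h => dvd_prod_of_mem _ h

lemma prod_dvd (hp : Injective p) (S : Finset κ) {n : ℕ} (h : ∀ i ∈ S, p i ∣ n) :
    ∏ i ∈ S, p i ∣ n := by
  rw [← prod_image (s := S) (g := p) (f := fun q => q) fun i _ j _ h => hp h]
  refine Finset.prod_primes_dvd n ?_ ?_
  · intro a ha
    obtain ⟨i, _, rfl⟩ := mem_image.1 ha
    exact (Fact.out : (p i).Prime).prime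
  · intro a ha
    obtain ⟨i, hi, rfl⟩ := mem_image.1 ha
    exact h i hi

/-- There are at most `R ^ 2` fractions in `[0, 1)` with squarefree denominator at most `R`. -/
lemma card_Fq_le (hp : Injective p) (R : ℕ) : ((Fq p R).card : ℝ) ≤ (R : ℝ) ^ 2 := by
  have h1 := sum_Fq (p := p) R (fun _ _ => (1 : ℝ)) (fun _ => rfl)
  simp only [prod_const_one, sum_const, nsmul_eq_mul, mul_one] at h1
  rw [h1]
  have h2 : ∀ S ∈ (univ : Finset (Finset κ)).filter (fun S => ∏ i ∈ S, p i ≤ R),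
      ∏ i ∈ S, (((univ : Finset (ZMod (p i))).erase 0).card : ℝ) ≤ R := by
    intro S hS
    have : ((∏ i ∈ S, p i : ℕ) : ℝ) ≤ R := by exact_mod_cast (mem_filter.1 hS).2
    refine le_trans ?_ this
    push_cast
    refine prod_le_prod (fun _ _ => by positivity) fun i _ => ?_
    rw [card_erase_zmod]; linarith
  have h3 : ((univ : Finset (Finset κ)).filter (fun S => ∏ i ∈ S, p i ≤ R)).card ≤ R := by
    have : ((univ : Finset (Finset κ)).filter (fun S => ∏ i ∈ S, p i ≤ R)).card ≤
        (Icc 1 R).card := by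
      refine card_le_card_of_injOn (fun S => ∏ i ∈ S, p i) ?_ ?_
      · intro S hS
        simp only [coe_filter, mem_univ, true_and, Set.mem_ofPred_eq] at hS
        simp only [coe_Icc, Set.mem_Icc]
        exact ⟨Nat.one_le_iff_ne_zero.2 (prod_ne_zero_iff.2 fun i _ =>
          (Fact.out : (p i).Prime).ne_zero), hS⟩
      · intro S _ S' _ h
        ext i
        have h' : ∏ i ∈ S, p i = ∏ i ∈ S', p i := h
        rw [← dvd_prod_iff hp, h', dvd_prod_iff hp]
    simpa using this
  refine (sum_le_card_nsmul _ _ _ h2).trans ?_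
  rw [nsmul_eq_mul, sq]
  exact mul_le_mul_of_nonneg_right (by exact_mod_cast h3) (by positivity)

/-- The sum of `(p - 1)⁻²` over distinct `p > w` is bounded by a telescoping sum. -/
lemma sum_inv_sq_le (hp : Injective p) {w : ℕ} (hw : 1 ≤ w) (hpw : ∀ i, w < p i) :
    ∑ i, (((p i : ℝ) - 1) ^ 2)⁻¹ ≤ 2 / (w : ℝ) := by
  have h := sum_Ioo_inv_sq_le (α := ℝ) (w - 1) (univ.sup p)
  have e : (((w - 1 : ℕ) : ℝ) + 1) = w := by
    rw [Nat.cast_sub hw]; simp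
  rw [e] at h
  refine le_trans ?_ h
  have hinj : Injective fun i => p i - 1 := by
    intro i j hij
    have hi := hpw i
    have hj := hpw j
    have hij' : p i - 1 = p j - 1 := hij
    exact hp (by omega)
  have h2 : ∑ i, (((p i : ℝ) - 1) ^ 2)⁻¹ =
      ∑ n ∈ univ.map ⟨fun i => p i - 1, hinj⟩, ((n : ℝ) ^ 2)⁻¹ := by
    rw [sum_map]
    refine sum_congr rfl fun i _ => ?_
    simp only [Embedding.coeFn_mk]
    rw [Nat.cast_sub (by have := hpw i; omega)]
    simp
  rw [h2]
  refine sum_le_sum_of_subset_of_nonneg ?_ fun _ _ _ => by positivity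
  intro n hn
  simp only [mem_map, mem_univ, true_and, Embedding.coeFn_mk] at hn
  obtain ⟨i, rfl⟩ := hn
  have h1 := hpw i
  have h3 : p i ≤ univ.sup p := le_sup (mem_univ i)
  simp only [mem_Ioo]
  omega

lemma prod_error_le (hp : Injective p) {w : ℕ} (hw : 1 ≤ w) (hpw : ∀ i, w < p i) {C : ℝ}
    (hC : 0 ≤ C) : ∏ i, (1 + C / ((p i : ℝ) - 1) ^ 2) ≤ Real.exp (C * (2 / w)) := by
  calc ∏ i, (1 + C / ((p i : ℝ) - 1) ^ 2) ≤ ∏ i, Real.exp (C / ((p i : ℝ) - 1) ^ 2) :=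
        prod_le_prod (fun i _ => by positivity) fun i _ => by
          rw [add_comm]; exact Real.add_one_le_exp _
    _ = Real.exp (C * ∑ i, (((p i : ℝ) - 1) ^ 2)⁻¹) := by
        rw [← Real.exp_sum, mul_sum]
        simp only [div_eq_mul_inv]
    _ ≤ _ := Real.exp_le_exp.2 (mul_le_mul_of_nonneg_left (sum_inv_sq_le hp hw hpw) hC)

/-- The part of the harmonic sum over those `n` whose prime factors above `w` are exactly the
`p i` with `i ∈ S`. Each such `n` is `∏ i ∈ S, p i` times a number composed of primes up to `w`
and primes `p i` with `i ∈ S`, so an Euler product bounds the sum. -/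
lemma sum_fiber_le (hp : Injective p) {w R : ℕ} (hpw : ∀ i, w < p i)
    (hall : ∀ q, q.Prime → w < q → q ≤ R → ∃ i, p i = q) (S : Finset κ) :
    ∑ n ∈ (Icc 1 R).filter (fun n => univ.filter (fun i => p i ∣ n) = S), ((n : ℝ))⁻¹ ≤
      (∏ i ∈ S, ((p i : ℝ) - 1)⁻¹) * ∏ q ∈ Nat.primesLE w, (1 - (q : ℝ)⁻¹)⁻¹ := by
  set P := ∏ i ∈ S, p i with hP
  have hP0 : P ≠ 0 := prod_ne_zero_iff.2 fun i _ => (Fact.out : (p i).Prime).ne_zero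
  let f : ℕ →* ℝ := (invMonoidHom : ℝ →* ℝ).comp (Nat.castRingHom ℝ : ℕ →* ℝ)
  have hf : ∀ n, f n = (n : ℝ)⁻¹ := fun n => rfl
  set s : Finset ℕ := Nat.primesLE w ∪ S.image p with hs
  have hnorm : ∀ {q : ℕ}, q.Prime → ‖f q‖ < 1 := by
    intro q hq
    rw [hf, norm_inv, Real.norm_natCast]
    exact inv_lt_one_of_one_lt₀ (by exact_mod_cast hq.one_lt)
  have hsum := (EulerProduct.summable_and_hasSum_factoredNumbers_prod_filter_prime_geometric
    hnorm s).2
  have hsum' : HasSum ((Nat.factoredNumbers s).indicator f)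
      (∏ q ∈ s with q.Prime, (1 - f q)⁻¹) := hasSum_subtype_iff_indicator.1 hsum
  have hpr : ∏ q ∈ s with q.Prime, (1 - f q)⁻¹ =
      (∏ q ∈ Nat.primesLE w, (1 - (q : ℝ)⁻¹)⁻¹) * ∏ i ∈ S, (1 - (p i : ℝ)⁻¹)⁻¹ := by
    have e1 : s.filter Nat.Prime = s := by
      refine filter_true_of_mem fun q hq => ?_
      rcases mem_union.1 hq with h | h
      · exact Nat.prime_of_mem_primesLE h
      · obtain ⟨i, _, rfl⟩ := mem_image.1 h
        exact Fact.out
    rw [e1, hs, prod_union, prod_image fun i _ j _ h => hp h]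
    · rfl
    · rw [disjoint_left]
      intro q hq hq'
      obtain ⟨i, _, rfl⟩ := mem_image.1 hq'
      have := Nat.le_of_mem_primesLE hq
      have := hpw i
      omega
  set E := (Icc 1 R).filter (fun n => univ.filter (fun i => p i ∣ n) = S) with hE
  have hdvd : ∀ n ∈ E, P ∣ n := by
    intro n hn
    have hn2 := (mem_filter.1 hn).2
    refine prod_dvd hp S fun i hi => ?_
    rw [← hn2] at hi
    exact (mem_filter.1 hi).2
  have hmul : ∀ n ∈ E, n / P * P = n := fun n hn => Nat.div_mul_cancel (hdvd n hn)
  have hfac : ∀ n ∈ E, n / P ∈ Nat.factoredNumbers s := by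
    intro n hn
    have hn1 := mem_Icc.1 (mem_filter.1 hn).1
    have hn2 := (mem_filter.1 hn).2
    refine Nat.mem_factoredNumbers'.2 fun q hq hqn => ?_
    have hqn' : q ∣ n := hqn.trans (Nat.div_dvd_of_dvd (hdvd n hn))
    rcases le_or_gt q w with h | h
    · exact mem_union_left _ (Nat.mem_primesLE.2 ⟨h, hq⟩)
    · obtain ⟨i, rfl⟩ := hall q hq h ((Nat.le_of_dvd (by omega) hqn').trans hn1.2)
      refine mem_union_right _ (mem_image_of_mem _ ?_)
      rw [← hn2]
      exact mem_filter.2 ⟨mem_univ _, hqn'⟩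
  have hE1 : ∑ n ∈ E, (n : ℝ)⁻¹ = (P : ℝ)⁻¹ * ∑ n ∈ E.image (· / P),
      (Nat.factoredNumbers s).indicator f n := by
    rw [sum_image, mul_sum]
    · refine sum_congr rfl fun n hn => ?_
      rw [Set.indicator_of_mem (hfac n hn), hf, ← mul_inv, ← Nat.cast_mul, mul_comm, hmul n hn]
    · intro a ha b hb hab
      rw [← hmul a ha, ← hmul b hb]
      exact congrArg (· * P) hab
  rw [hE1]
  have hle := sum_le_hasSum (E.image (· / P)) (fun n _ => Set.indicator_nonneg
    (fun n _ => by rw [hf]; positivity) n) hsum'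
  rw [hpr] at hle
  refine (mul_le_mul_of_nonneg_left hle (by positivity)).trans (le_of_eq ?_)
  rw [mul_left_comm, mul_comm]
  congr 1
  rw [hP]
  push_cast
  rw [← prod_inv_distrib, ← prod_mul_distrib]
  refine prod_congr rfl fun i _ => ?_
  have := two_le_p (p := p) i
  rw [← mul_inv, mul_sub, mul_one, mul_inv_cancel₀ (by linarith)]

/-- The singular-series normalisation: `G ≥ (φ(W) / W) log R` for `W` the primorial of `w`. -/
lemma log_le_Gs (hp : Injective p) {w R : ℕ} (hpw : ∀ i, w < p i)
    (hall : ∀ q, q.Prime → w < q → q ≤ R → ∃ i, p i = q) :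
    (primorial w).totient * Real.log (R + 1) ≤ primorial w * Gs p R := by
  have h1 : Real.log (R + 1) ≤ ∑ n ∈ Icc 1 R, (n : ℝ)⁻¹ := by
    have := log_add_one_le_harmonic R
    rw [harmonic_eq_sum_Icc] at this
    push_cast at this
    exact this
  have h2 : ∑ n ∈ Icc 1 R, (n : ℝ)⁻¹ ≤ Gs p R * ∏ q ∈ Nat.primesLE w, (1 - (q : ℝ)⁻¹)⁻¹ := by
    rw [← sum_fiberwise_of_maps_to (s := Icc 1 R)
      (t := (univ : Finset (Finset κ)).filter (fun S => ∏ i ∈ S, p i ≤ R))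
      (g := fun n => univ.filter (fun i => p i ∣ n)), Gs, sum_mul]
    · exact sum_le_sum fun S _ => sum_fiber_le hp hpw hall S
    · intro n hn
      have hn := mem_Icc.1 hn
      refine mem_filter.2 ⟨mem_univ _, le_trans (Nat.le_of_dvd (by omega) ?_) hn.2⟩
      exact prod_dvd hp _ fun i hi => (mem_filter.1 hi).2
  have h3 : ((primorial w).totient : ℝ) = primorial w * ∏ q ∈ Nat.primesLE w, (1 - (q : ℝ)⁻¹) := by
    have := Nat.totient_eq_mul_prod_factors (primorial w)
    rw [primeFactors_primorial] at this
    have h := congrArg (fun x : ℚ => (x : ℝ)) this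
    push_cast at h
    exact h
  have h4 : 0 < ∏ q ∈ Nat.primesLE w, (1 - (q : ℝ)⁻¹) := by
    refine prod_pos fun q hq => ?_
    have : (1 : ℝ) < q := by exact_mod_cast Nat.one_lt_of_mem_primesLE hq
    have := inv_lt_one_of_one_lt₀ this
    linarith
  rw [h3, mul_assoc]
  refine mul_le_mul_of_nonneg_left ?_ (by positivity)
  rw [prod_inv_distrib, ← div_eq_mul_inv, le_div_iff₀ h4] at h2
  calc _ ≤ (∏ q ∈ Nat.primesLE w, (1 - (q : ℝ)⁻¹)) * ∑ n ∈ Icc 1 R, (n : ℝ)⁻¹ :=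
        mul_le_mul_of_nonneg_left h1 h4.le
    _ ≤ _ := by rw [mul_comm]; exact h2

end Sizes

/-- The primes in `(w, R]`. -/
abbrev PK (w R : ℕ) : Type := {q : ℕ // q ∈ (Icc 1 R).filter fun q => q.Prime ∧ w < q}

/-- The inclusion of the primes in `(w, R]` into `ℕ`. -/
abbrev pk (w R : ℕ) : PK w R → ℕ := Subtype.val

instance (w R : ℕ) (i : PK w R) : Fact (pk w R i).Prime := ⟨(mem_filter.1 i.2).2.1⟩

lemma pk_inj (w R : ℕ) : Injective (pk w R) := Subtype.val_injective

lemma lt_pk (w R : ℕ) (i : PK w R) : w < pk w R i := (mem_filter.1 i.2).2.2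

lemma exists_pk (w R q : ℕ) (hq : q.Prime) (hw : w < q) (hR : q ≤ R) : ∃ i, pk w R i = q :=
  ⟨⟨q, mem_filter.2 ⟨mem_Icc.2 ⟨hq.one_le, hR⟩, hq, hw⟩⟩, rfl⟩

lemma primorial_ne_zero_pk (w R : ℕ) (i : PK w R) : ((primorial w : ℕ) : ZMod (pk w R i)) ≠ 0 := by
  intro h
  rw [ZMod.natCast_eq_zero_iff] at h
  have h2 : pk w R i ∈ (primorial w).primeFactors :=
    Nat.mem_primeFactors.2 ⟨Fact.out, h, primorial_ne_zero w⟩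
  rw [primeFactors_primorial] at h2
  exact absurd (Nat.le_of_mem_primesLE h2) (not_le.2 (lt_pk w R i))

lemma LF_weaken {ι X : Type} [Fintype ι] [DecidableEq ι] [Fintype X] {ν : ι → (ι → X) → ℝ}
    {ε ε' : ℝ} (h : LF ν ε) (hε : ε ≤ ε') : LF ν ε' := fun T hT => (h T hT).trans hε

/-- For `w` and then `R` large, the sieve weight modulo a prime `N` exceeding a fixed power of `R`
satisfies the linear forms condition to any prescribed accuracy. -/
theorem LF_exists (m : ℕ) {ε : ℝ} (hε : 0 < ε) : ∃ w : ℕ, ∃ R0 : ℕ, ∀ R ≥ R0, 1 ≤ R ∧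
    ∀ (b : ℤ) (N : ℕ) [Fact N.Prime], R ^ (12 * ((m + 2) * 2 ^ (m + 2))) ≤ N →
    LF (fun (j : Fin (m + 2)) x =>
      (fun a : ZMod N => gW (pk w R) R (primorial w) b (a.val : ℕ)) (psi j x)) ε := by
  set M := (m + 2) * 2 ^ (m + 2) with hM
  have hM1 : 1 ≤ M := Nat.one_le_iff_ne_zero.2 (by positivity)
  obtain ⟨w, hw2, hw⟩ : ∃ w : ℕ, m + 2 ≤ w ∧ Real.exp (6 ^ M * (2 / w)) ≤ 1 + ε / 2 := by
    have h1 : Filter.Tendsto (fun w : ℕ => Real.exp (6 ^ M * (2 / (w : ℝ)))) Filter.atTop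
        (nhds (Real.exp (6 ^ M * 0))) :=
      (Real.continuous_exp.tendsto _).comp
        ((tendsto_const_div_atTop_nhds_zero_nat 2).const_mul _)
    rw [mul_zero, Real.exp_zero] at h1
    have h2 := h1.eventually (eventually_le_nhds (show (1 : ℝ) < 1 + ε / 2 by linarith))
    obtain ⟨w, h3, h4⟩ := (h2.and (Filter.eventually_ge_atTop (m + 2))).exists
    exact ⟨w, h4, h3⟩
  obtain ⟨K, hK⟩ := exists_nat_gt ((1 + 8 * M * ((m : ℝ) + 2) ^ 2) / (ε / 2))
  refine ⟨w, max K (m + 2), fun R hR => ?_⟩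
  have hR2 : m + 2 ≤ R := (le_max_right _ _).trans hR
  have hR1 : 1 ≤ R := by omega
  refine ⟨hR1, fun b N _ hN => ?_⟩
  have hRpos : (0 : ℝ) < R := by exact_mod_cast hR1
  have hR1' : (1 : ℝ) ≤ R := by exact_mod_cast hR1
  have hRN : m + 2 ≤ N := hR2.trans (le_trans (Nat.le_self_pow (by omega) R) hN)
  have hB : 0 < R ^ (7 * M) := by positivity
  refine LF_weaken (LF_lam m (pk_inj w R) (fun i => hw2.trans (lt_pk w R i).le) hR1
    (primorial_ne_zero_pk w R) b hRN hB (M := M) le_rfl) ?_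
  have e1 : ∏ i : PK w R, (1 + 6 ^ M / ((pk w R i : ℝ) - 1) ^ 2) ≤ 1 + ε / 2 :=
    (prod_error_le (pk_inj w R) (by omega) (lt_pk w R) (by positivity)).trans hw
  have eF : ((Fq (pk w R) R).card : ℝ) ^ (2 * M) ≤ (R : ℝ) ^ (4 * M) := by
    calc _ ≤ ((R : ℝ) ^ 2) ^ (2 * M) :=
          pow_le_pow_left₀ (by positivity) (card_Fq_le (pk_inj w R) R) _
      _ = _ := by rw [← pow_mul]; congr 1; ring
  have hinv : (R : ℝ) ^ M ≥ R := by
    calc (R : ℝ) = R ^ 1 := (pow_one _).symm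
      _ ≤ R ^ M := pow_le_pow_right₀ hR1' hM1
  have e2 : ((Fq (pk w R) R).card : ℝ) ^ (2 * M) * ((R : ℝ) ^ (2 * M) / (R ^ (7 * M) : ℕ)) ≤
      1 / R := by
    calc _ ≤ (R : ℝ) ^ (4 * M) * ((R : ℝ) ^ (2 * M) / (R ^ (7 * M) : ℕ)) :=
          mul_le_mul_of_nonneg_right eF (by positivity)
      _ = 1 / (R : ℝ) ^ M := by
          push_cast
          rw [← mul_div_assoc, ← pow_add, div_eq_div_iff (by positivity) (by positivity),
            ← pow_add, one_mul]
          congr 1; ring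
      _ ≤ _ := one_div_le_one_div_of_le hRpos hinv
  have e3 : (M : ℝ) * (2 * ((2 * (m + 2)) * (m + 2) * R ^ (7 * M) : ℕ) / N *
      (2 * ((Fq (pk w R) R).card : ℝ) ^ (2 * M))) ≤ 8 * M * ((m : ℝ) + 2) ^ 2 / R := by
    have hN' : (R : ℝ) ^ (12 * M) ≤ N := by exact_mod_cast hN
    have hN0 : (0 : ℝ) < (R : ℝ) ^ (12 * M) := by positivity
    calc _ ≤ (M : ℝ) * (2 * ((2 * (m + 2)) * (m + 2) * R ^ (7 * M) : ℕ) / (R : ℝ) ^ (12 * M) *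
        (2 * (R : ℝ) ^ (4 * M))) := by gcongr
      _ = 8 * M * ((m : ℝ) + 2) ^ 2 / (R : ℝ) ^ M := by
          push_cast
          have : (R : ℝ) ^ (12 * M) = R ^ (7 * M) * R ^ (4 * M) * R ^ M := by
            rw [← pow_add, ← pow_add]; congr 1; ring
          rw [this]
          have := pow_pos hRpos M
          have := pow_pos hRpos (4 * M)
          have := pow_pos hRpos (7 * M)
          field_simp
          ring
      _ ≤ _ := by gcongr
  have e4 : 1 / (R : ℝ) + 8 * M * ((m : ℝ) + 2) ^ 2 / R ≤ ε / 2 := by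
    rw [← add_div, div_le_iff₀ hRpos]
    have hKR : (K : ℝ) ≤ R := by exact_mod_cast (le_max_left _ _).trans hR
    rw [div_lt_iff₀ (by positivity)] at hK
    nlinarith
  linarith

end GT

namespace GT
open Finset Function
open scoped BigOperators

set_option linter.unusedSectionVars false

/-! ### Counting primes and lifting progressions -/

/-- A form of Chebyshev's lower bound for the number of primes. -/
lemma chebyshev_lower {n : ℕ} (hn : 4 ≤ n) :
    (n : ℝ) / (4 * Real.log n) ≤ ((Nat.primesLE n).card : ℝ) := by
  have h := Chebyshev.pi_ge n
  rw [← Nat.primesLE_card_eq_primeCounting] at h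
  refine le_trans ?_ h
  have hn' : (4 : ℝ) ≤ n := by exact_mod_cast hn
  have hl : 0 < Real.log n := Real.log_pos (by linarith)
  rw [← div_div]
  refine div_le_div_of_nonneg_right ?_ hl.le
  have h4 : Real.log 4 = 2 * Real.log 2 := by
    rw [show (4 : ℝ) = 2 ^ 2 by norm_num, Real.log_pow]; norm_num
  have h1 : Real.log (n + 1) = Real.log (((n : ℝ) + 1) / 4) + Real.log 4 := by
    rw [Real.log_div (by positivity) (by norm_num)]; ring
  have h2 := Real.log_le_sub_one_of_pos (show 0 < ((n : ℝ) + 1) / 4 by positivity)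
  have h3 := Real.log_two_gt_d9
  have h5 := Real.log_two_lt_d9
  nlinarith

/-- The set of residues whose lift to `[0, N / 2)` gives a prime exceeding `R` in the residue
class `b` modulo `W`. -/
def primeSet (N W R b : ℕ) : Finset ℕ :=
  (range N).filter fun x => 2 * x < N ∧ (W * x + b).Prime ∧ R < W * x + b

/-- Every prime up to `n` is at most `R` or counted in `primeSet` for one reduced residue class. -/
lemma card_primesLE_le_sum {N W R : ℕ} (hW : 0 < W) (hWR : W ≤ R) {n : ℕ}
    (hn2 : ∀ x b, W * x + b ≤ n → 2 * x < N) :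
    (Nat.primesLE n).card ≤ R + ∑ b ∈ (range W).filter (W.Coprime ·), (primeSet N W R b).card := by
  have h1 : (Nat.primesLE n).card ≤ ((Icc 1 R) ∪ (((range W).filter (W.Coprime ·)).sigma
      fun b => primeSet N W R b).image fun t => W * t.2 + t.1).card := by
    refine card_le_card fun q hq => ?_
    obtain ⟨hqn, hq⟩ := Nat.mem_primesLE.1 hq
    rcases le_or_gt q R with h | h
    · exact mem_union_left _ (mem_Icc.2 ⟨hq.one_le, h⟩)
    · refine mem_union_right _ (mem_image.2 ⟨⟨q % W, q / W⟩, ?_, Nat.div_add_mod q W⟩)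
      have hdm := Nat.div_add_mod q W
      have hx : 2 * (q / W) < N := hn2 (q / W) (q % W) (by rw [hdm]; exact hqn)
      refine mem_sigma.2 ⟨mem_filter.2 ⟨mem_range.2 (Nat.mod_lt _ hW), ?_⟩, ?_⟩
      · have : W.Coprime q := by
          refine ((Nat.Prime.coprime_iff_not_dvd hq).2 fun hd => ?_).symm
          have := Nat.le_of_dvd hW hd
          omega
        rw [Nat.coprime_comm] at this ⊢
        rw [Nat.Coprime] at this ⊢
        rw [← this, Nat.gcd_comm q W, Nat.gcd_rec W q]
      · refine mem_filter.2 ⟨mem_range.2 (show q / W < N by omega), hx, ?_⟩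
        simp only [hdm]
        exact ⟨hq, h⟩
  refine h1.trans ((card_union_le _ _).trans ?_)
  refine add_le_add (by simp) (card_image_le.trans ?_)
  rw [card_sigma]

/-- Pigeonhole over the residue classes modulo `W`: some class contains many primes. -/
lemma exists_residue {N W R : ℕ} (hW : 0 < W) (hWR : W ≤ R) (hN : 9 ≤ N) :
    ∃ b : ℕ, ((W : ℝ) * N / (12 * Real.log (W * N)) - R) ≤ W.totient * (primeSet N W R b).card := by
  set n := W * ((N - 1) / 2) with hn
  have hn4 : 4 ≤ n := by
    have : 4 ≤ (N - 1) / 2 := by omega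
    exact this.trans (Nat.le_mul_of_pos_left _ hW)
  have hnN : W * N ≤ 3 * n := by
    have : N ≤ 3 * ((N - 1) / 2) := by omega
    calc W * N ≤ W * (3 * ((N - 1) / 2)) := Nat.mul_le_mul_left _ this
      _ = 3 * n := by rw [hn]; ring
  have hnN' : n ≤ W * N := Nat.mul_le_mul_left _ (by omega)
  have h1 := card_primesLE_le_sum (N := N) hW hWR (n := n) fun x b hxb => by
    have : x ≤ (N - 1) / 2 := by
      refine Nat.le_of_mul_le_mul_left ?_ hW
      exact (Nat.le_add_right _ _).trans hxb
    omega
  have h2 := chebyshev_lower hn4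
  have hn4' : (4 : ℝ) ≤ n := by exact_mod_cast hn4
  have hl : 0 < Real.log n := Real.log_pos (by linarith)
  have h3 : (W : ℝ) * N / (12 * Real.log (W * N)) ≤ (n : ℝ) / (4 * Real.log n) := by
    have a1 : (W : ℝ) * N ≤ 3 * n := by exact_mod_cast hnN
    have a2 : (n : ℝ) ≤ W * N := by exact_mod_cast hnN'
    have a3 : Real.log n ≤ Real.log (W * N) := Real.log_le_log (by linarith) a2
    calc (W : ℝ) * N / (12 * Real.log (W * N)) ≤ 3 * n / (12 * Real.log n) := by gcongr
      _ = _ := by field_simp; norm_num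
  have h4 : (((Nat.primesLE n).card : ℕ) : ℝ) ≤
      R + ∑ b ∈ (range W).filter (W.Coprime ·), ((primeSet N W R b).card : ℝ) := by
    exact_mod_cast h1
  have hcard : ((range W).filter (W.Coprime ·)).card = W.totient := rfl
  have hpos : 0 < W.totient := Nat.totient_pos.2 hW
  obtain ⟨b, -, hb⟩ := exists_le_of_sum_le (s := (range W).filter (W.Coprime ·))
    (f := fun _ => (W : ℝ) * N / (12 * Real.log (W * N)) - R)
    (g := fun b => (W.totient : ℝ) * (primeSet N W R b).card)
    (card_pos.1 (hcard ▸ hpos)) (by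
      rw [sum_const, hcard, nsmul_eq_mul, ← mul_sum]
      refine mul_le_mul_of_nonneg_left ?_ (by positivity)
      linarith)
  exact ⟨b, hb⟩

/-- A sequence of integers in arithmetic progression with nonzero difference can be reversed
if necessary so as to be increasing. -/
lemma ap_orient (P : ℕ → Prop) (K : ℕ) (x : ℕ → ℕ) (e : ℤ) (he : e ≠ 0)
    (hx : ∀ j ≤ K, (x j : ℤ) = x 0 + j * e) (hP : ∀ j ≤ K, P (x j)) :
    ∃ a d : ℕ, 0 < d ∧ ∀ i ≤ K, P (a + i * d) := by
  rcases lt_or_gt_of_ne he with h | h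
  · refine ⟨x K, e.natAbs, by omega, fun i hi => ?_⟩
    have h1 := hx K le_rfl
    have h2 := hx (K - i) (by omega)
    have : x K + i * e.natAbs = x (K - i) := by
      zify
      rw [h1, h2, abs_of_neg h]
      push_cast [Nat.cast_sub hi]
      ring
    rw [this]
    exact hP _ (by omega)
  · refine ⟨x 0, e.natAbs, by omega, fun i hi => ?_⟩
    have h2 := hx i hi
    have : x 0 + i * e.natAbs = x i := by
      zify
      rw [h2, abs_of_pos h]
    rw [this]
    exact hP _ hi

/-- A progression modulo `N` all of whose terms have representatives in `[0, N / 2)` lifts to a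
progression of integers. -/
lemma lift_ap {N : ℕ} [NeZero N] (K : ℕ) (a d : ZMod N) (hd : d ≠ 0)
    (h : ∀ j ≤ K + 1, 2 * (a + (j : ℕ) * d).val < N) :
    ∃ e : ℤ, e ≠ 0 ∧ ∀ j ≤ K + 1, ((a + (j : ℕ) * d).val : ℤ) = (a + (0 : ℕ) * d).val + j * e := by
  set y : ℕ → ℤ := fun j => ((a + (j : ℕ) * d).val : ℤ) with hy
  have hc : ∀ j, ((y j : ℤ) : ZMod N) = a + (j : ℕ) * d := fun j => by simp [hy]
  have hb : ∀ j ≤ K + 1, 0 ≤ y j ∧ 2 * y j < N := fun j hj => by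
    have := h j hj
    simp only [hy]
    omega
  have hstep : ∀ j ≤ K, y (j + 1) - y j = y 1 - y 0 := by
    intro j hj
    have h1 : (((y (j + 1) - y j - (y 1 - y 0) : ℤ)) : ZMod N) = 0 := by
      push_cast
      rw [hc, hc, hc, hc]
      push_cast
      ring
    rw [ZMod.intCast_zmod_eq_zero_iff_dvd] at h1
    have h2 := hb j (by omega)
    have h3 := hb (j + 1) (by omega)
    have h4 := hb 0 (by omega)
    have h5 := hb 1 (by omega)
    have := Int.eq_zero_of_abs_lt_dvd h1 (by rw [abs_lt]; constructor <;> linarith)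
    linarith
  refine ⟨y 1 - y 0, fun h0 => hd ?_, fun j hj => ?_⟩
  · have : (((y 1 - y 0 : ℤ)) : ZMod N) = d := by
      push_cast
      rw [hc, hc]
      simp
    rw [← this, h0]; simp
  · change y j = y 0 + j * (y 1 - y 0)
    induction j with
    | zero => simp
    | succ j ih =>
      have := ih (by omega)
      have := hstep j (by omega)
      push_cast
      linarith

end GT

namespace GT
open Finset Function
open scoped BigOperators

set_option linter.unusedSectionVars false

/-! ### Progressions of primes -/

/-- The primes, in the residue class `b` modulo `W`, as a function on `ZMod N` weighted by `G`. -/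
noncomputable def primeFun (N W R b : ℕ) (G : ℝ) (a : ZMod N) : ℝ :=
  if a.val ∈ primeSet N W R b then G else 0

/-- The mean of `primeFun` in terms of the number of primes counted. -/
lemma expect_primeFun (N W R b : ℕ) [NeZero N] {G : ℝ} (hG : 0 ≤ G) :
    (primeSet N W R b).card * G / N ≤ 𝔼 a : ZMod N, primeFun N W R b G a := by
  rw [Fintype.expect_eq_sum_div_card, ZMod.card]
  refine div_le_div_of_nonneg_right ?_ (by positivity)
  simp only [primeFun]
  rw [← sum_filter, sum_const, nsmul_eq_mul]
  refine mul_le_mul_of_nonneg_right ?_ hG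
  rw [Nat.cast_le]
  have hv : ∀ x ∈ primeSet N W R b, ((x : ℕ) : ZMod N).val = x := fun x hx =>
    ZMod.val_natCast_of_lt (mem_range.1 (mem_filter.1 hx).1)
  refine card_le_card_of_injOn (fun x => (x : ZMod N)) ?_ ?_
  · intro x hx
    simp only [coe_filter, mem_univ, true_and, Set.mem_ofPred_eq]
    rw [hv x hx]
    exact hx
  · intro x hx y hy hxy
    rw [← hv x hx, ← hv y hy]
    exact congrArg ZMod.val hxy

/-- At primes exceeding `R` the majorant takes its maximal value `Gs`. -/
lemma gW_of_prime {w R b n : ℕ} (hR : 1 ≤ R) (hq : (primorial w * n + b).Prime)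
    (hlt : R < primorial w * n + b) :
    gW (pk w R) R (primorial w) b n = Gs (pk w R) R := by
  have h := lam_coprime (p := pk w R) R (n := ((primorial w * n + b : ℕ) : ℤ)) (fun i h => by
    rw [Int.cast_natCast, ZMod.natCast_eq_zero_iff] at h
    have h1 := (Nat.prime_dvd_prime_iff_eq (Fact.out : (pk w R i).Prime) hq).1 h
    have h2 := (mem_Icc.1 (mem_filter.1 i.2).1).2
    have h3 : pk w R i ≤ R := h2
    omega)
  have hG := one_le_Gs (p := pk w R) hR
  push_cast at h
  rw [gW, h, Complex.norm_real, Real.norm_of_nonneg (by linarith), sq,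
    mul_div_assoc, div_self (by linarith), mul_one]

/-- The density of the weighted primes in a suitable residue class is bounded below
in terms of the exponent `D` only. -/
lemma density_lower {w R N D : ℕ} (hD : 3 ≤ D) (hWR : primorial w ≤ R) (h9 : 9 ≤ R)
    (hRD : 24 * (D + 2) ≤ R) (hN1 : R ^ D ≤ N) (hN2 : N ≤ 2 * R ^ D) :
    ∃ b : ℕ, 1 / (24 * ((D : ℝ) + 2)) ≤
      (primeSet N (primorial w) R b).card * Gs (pk w R) R / N := by
  have hW0 := primorial_pos w
  have hRN : R ≤ N := (Nat.le_self_pow (by omega) R).trans hN1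
  obtain ⟨b, hb⟩ := exists_residue (N := N) hW0 hWR (h9.trans hRN)
  refine ⟨b, ?_⟩
  have hG := log_le_Gs (pk_inj w R) (lt_pk w R) (R := R) (exists_pk w R)
  set W : ℝ := ((primorial w : ℕ) : ℝ) with hW
  set G := Gs (pk w R) R
  set s : ℝ := ((primeSet N (primorial w) R b).card : ℝ)
  set F : ℝ := (((primorial w).totient : ℕ) : ℝ)
  have hW1 : (1 : ℝ) ≤ W := by rw [hW]; exact_mod_cast hW0
  have hR9 : (9 : ℝ) ≤ R := by exact_mod_cast h9
  have hNR : (R : ℝ) ≤ N := by exact_mod_cast hRN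
  have hN0 : (0 : ℝ) < N := by linarith
  have hl0 : 0 < Real.log R := Real.log_pos (by linarith)
  have hlog : Real.log R ≤ Real.log (R + 1) := Real.log_le_log (by linarith) (by linarith)
  have hlogR : Real.log R ≤ R := (Real.log_le_sub_one_of_pos (by linarith)).trans (by linarith)
  have hWNl : 0 < Real.log (W * N) := Real.log_pos (by nlinarith)
  have hWN : Real.log (W * N) ≤ (D + 2) * Real.log R := by
    have h1 : W * N ≤ (R : ℝ) ^ (D + 2) := by
      have : (N : ℝ) ≤ 2 * R ^ D := by exact_mod_cast hN2
      have hWR' : W ≤ R := by rw [hW]; exact_mod_cast hWR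
      calc W * N ≤ R * (R * R ^ D) := by
            gcongr
            exact this.trans (by gcongr; linarith)
        _ = _ := by ring
    calc _ ≤ Real.log ((R : ℝ) ^ (D + 2)) := Real.log_le_log (by positivity) h1
      _ = _ := by rw [Real.log_pow]; push_cast; ring
  have hs0 : 0 ≤ s := Nat.cast_nonneg _
  -- The factor `φ(W) / W` lost in `Gs` is regained by passing to a reduced residue class.
  have e1 : (W * N / (12 * Real.log (W * N)) - R) * Real.log R ≤ W * (s * G) := by
    have h1 : F * Real.log R ≤ W * G :=
      (mul_le_mul_of_nonneg_left hlog (Nat.cast_nonneg _)).trans hG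
    calc _ ≤ F * s * Real.log R := mul_le_mul_of_nonneg_right hb hl0.le
      _ = s * (F * Real.log R) := by ring
      _ ≤ s * (W * G) := mul_le_mul_of_nonneg_left h1 hs0
      _ = _ := by ring
  -- As `N` is about `R ^ D`, the quotient `log R / log (W * N)` is at least `1 / (D + 2)`.
  have e2 : W * N / (12 * ((D : ℝ) + 2)) ≤ W * N / (12 * Real.log (W * N)) * Real.log R := by
    rw [div_mul_eq_mul_div, div_le_div_iff₀ (by positivity) (by positivity)]
    calc W * N * (12 * Real.log (W * N)) ≤ W * N * (12 * ((D + 2) * Real.log R)) := by gcongr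
      _ = _ := by ring
  -- The primes up to `R` are too few to matter.
  have e3 : (R : ℝ) * Real.log R ≤ W * N / (24 * ((D : ℝ) + 2)) := by
    rw [le_div_iff₀ (by positivity)]
    have h1 : 24 * ((D : ℝ) + 2) ≤ R := by exact_mod_cast hRD
    have h2 : (R : ℝ) ^ 3 ≤ N := by
      exact_mod_cast (Nat.pow_le_pow_right (by omega) hD).trans hN1
    calc (R : ℝ) * Real.log R * (24 * ((D : ℝ) + 2)) ≤ R * R * R := by gcongr
      _ = R ^ 3 := by ring
      _ ≤ 1 * N := by linarith
      _ ≤ W * N := by gcongr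
  have e4 : W * N / (12 * ((D : ℝ) + 2)) = W * N / (24 * ((D : ℝ) + 2)) +
      W * N / (24 * ((D : ℝ) + 2)) := by
    field_simp; norm_num
  have e5 : W * N / (24 * ((D : ℝ) + 2)) ≤ W * (s * G) := by
    rw [sub_mul] at e1; linarith
  rw [le_div_iff₀ hN0]
  have hWpos : 0 < W := by linarith
  refine le_of_mul_le_mul_left (le_trans (le_of_eq ?_) e5) hWpos
  ring

/-- Only `d = 0` contributes if there is no nontrivial progression, and that contribution is
negligible. -/
lemma exists_nontrivial {N : ℕ} [Fact N.Prime] (m : ℕ) {c K : ℝ} (f : ZMod N → ℝ)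
    (hf0 : ∀ a, 0 ≤ f a) (hfK : ∀ a, f a ≤ K) (hc : K ^ (m + 2) / N < c)
    (h : c ≤ 𝔼 a, 𝔼 d, ∏ j : Fin (m + 2), f (a + (j : ℕ) * d)) :
    ∃ a d : ZMod N, d ≠ 0 ∧ ∀ j ≤ m + 1, f (a + (j : ℕ) * d) ≠ 0 := by
  by_contra! hno
  refine absurd h (not_le.2 (lt_of_le_of_lt ?_ hc))
  refine expect_le univ_nonempty fun a _ => ?_
  rw [Fintype.expect_eq_sum_div_card, ZMod.card]
  refine div_le_div_of_nonneg_right ?_ (by positivity)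
  rw [sum_eq_single 0]
  · calc _ ≤ ∏ j : Fin (m + 2), K := prod_le_prod (fun _ _ => hf0 _) fun _ _ => hfK _
      _ = _ := by simp
  · intro d _ hd
    obtain ⟨j, hj, hz⟩ := hno a d hd
    exact prod_eq_zero (mem_univ (⟨j, by omega⟩ : Fin (m + 2))) hz
  · simp

/-- The relative Szemerédi theorem applied to the primes in a residue class, inside their majorant. -/
theorem main (m : ℕ) : ∃ a d : ℕ, 0 < d ∧ ∀ i ≤ m + 1, Nat.Prime (a + i * d) := by
  set M := (m + 2) * 2 ^ (m + 2) with hM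
  -- The exponent that `LF_exists` demands of `N`; it also lets `R ^ (4 * (m + 2) + 1) ≤ N`.
  set D := 12 * M with hD
  have hM1 : m + 2 ≤ M := Nat.le_mul_of_pos_right _ (by positivity)
  have hδ : (0 : ℝ) < 1 / (24 * ((D : ℝ) + 2)) := by positivity
  -- The density depends on `m` only, so `c` and `ε` are available before `w` and `R` are chosen.
  obtain ⟨c, hc, ε, hε, N0, HS⟩ := relative_szemeredi m hδ
  obtain ⟨w, R0, HR⟩ := LF_exists m hε
  obtain ⟨K, hK⟩ := exists_nat_gt (1 / c)
  obtain ⟨R, hRall⟩ : ∃ R : ℕ, R0 ≤ R ∧ primorial w ≤ R ∧ 9 ≤ R ∧ 24 * (D + 2) ≤ R ∧ N0 ≤ R ∧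
      K ≤ R :=
    ⟨R0 + primorial w + 9 + 24 * (D + 2) + N0 + K, by omega, by omega, by omega, by omega,
      by omega, by omega⟩
  obtain ⟨hR0, hWR, h9, hRD, hRN0, hRK⟩ := hRall
  obtain ⟨hR1, HLF⟩ := HR R hR0
  obtain ⟨N, hNp, hN1, hN2⟩ := Nat.exists_prime_lt_and_le_two_mul (R ^ D) (by positivity)
  have : Fact N.Prime := ⟨hNp⟩
  have : NeZero N := ⟨hNp.ne_zero⟩
  obtain ⟨b, hb⟩ := density_lower (D := D) (by omega) hWR h9 hRD hN1.le hN2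
  have hRN : R ≤ N := (Nat.le_self_pow (by omega) R).trans hN1.le
  set G := Gs (pk w R) R with hG
  have hG1 : 1 ≤ G := one_le_Gs hR1
  set W := primorial w with hW
  -- The primes are dominated by the majorant, with equality on `primeSet`.
  have hfν : ∀ a : ZMod N, primeFun N W R b G a ≤ gW (pk w R) R W b (a.val : ℕ) := by
    intro a
    rw [primeFun]
    split_ifs with h
    · have h1 := (mem_filter.1 h).2
      exact (gW_of_prime hR1 h1.2.1 h1.2.2).ge
    · exact gW_nonneg hR1 _ _ _
  have hf0 : ∀ a : ZMod N, 0 ≤ primeFun N W R b G a := by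
    intro a
    rw [primeFun]
    split_ifs <;> linarith
  have hRpos : (0 : ℝ) < R := by exact_mod_cast hR1
  have hfK : ∀ a : ZMod N, primeFun N W R b G a ≤ (R : ℝ) ^ 4 := by
    intro a
    refine (hfν a).trans ((gW_le hR1 _ _ _).trans ?_)
    calc _ ≤ ((R : ℝ) ^ 2) ^ 2 := pow_le_pow_left₀ (by positivity) (card_Fq_le (pk_inj w R) R) 2
      _ = _ := by ring
  -- The contribution of the trivial progressions is negligible.
  have hsmall : ((R : ℝ) ^ 4) ^ (m + 2) / N < c := by
    have hN0 : (0 : ℝ) < N := by exact_mod_cast hNp.pos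
    rw [div_lt_iff₀ hN0]
    have h1 : (R : ℝ) * (R ^ 4) ^ (m + 2) ≤ N := by
      have : R * (R ^ 4) ^ (m + 2) ≤ N := by
        refine le_trans ?_ hN1.le
        rw [← pow_mul, ← pow_succ']
        exact Nat.pow_le_pow_right hR1 (by omega)
      exact_mod_cast this
    have h2 : 1 < c * R := by
      rw [div_lt_iff₀ hc] at hK
      have : (K : ℝ) ≤ R := by exact_mod_cast hRK
      nlinarith
    have h3 : 0 < ((R : ℝ) ^ 4) ^ (m + 2) := by positivity
    calc ((R : ℝ) ^ 4) ^ (m + 2) < c * R * (R ^ 4) ^ (m + 2) := by nlinarith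
      _ = c * (R * (R ^ 4) ^ (m + 2)) := by ring
      _ ≤ c * N := by gcongr
  have hS := HS N (hRN0.trans hRN) (fun a => gW (pk w R) R W b (a.val : ℕ))
    (primeFun N W R b G) hf0 hfν (HLF b N hN1.le)
    (hb.trans (expect_primeFun N W R b (by linarith)))
  obtain ⟨a, d, hd, hne⟩ := exists_nontrivial m _ hf0 hfK hsmall hS
  -- The nonzero values of `primeFun` sit at residues whose lifts to `[0, N / 2)` give primes.
  have hmem : ∀ j ≤ m + 1, (a + (j : ℕ) * d).val ∈ primeSet N W R b := by
    intro j hj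
    have := hne j hj
    rw [primeFun] at this
    by_contra h
    exact this (if_neg h)
  obtain ⟨e, he, hx⟩ := lift_ap m a d hd fun j hj => (mem_filter.1 (hmem j hj)).2.1
  refine ap_orient Nat.Prime (m + 1) (fun j => W * (a + (j : ℕ) * d).val + b) (W * e)
    (mul_ne_zero (by exact_mod_cast (primorial_pos w).ne') he) (fun j hj => ?_)
    fun j hj => (mem_filter.1 (hmem j hj)).2.2.1
  push_cast [hx j hj]
  ring

end GT

/-- Green–Tao theorem: the primes contain arbitrarily long arithmetic progressions. -/
theorem green_tao :
    ∀ k : ℕ, ∃ a d : ℕ, 0 < d ∧ ∀ i < k, Nat.Prime (a + i * d) := by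
  intro k
  obtain ⟨a, d, hd, h⟩ := GT.main k
  exact ⟨a, d, hd, fun i hi => h i (by omega)⟩
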